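/- arXiv:2012.01492 — 2 statements merged into one kernel-verified Lean document; each statement's English description precedes it below -/
import Mathlib

section
/- For all constants c > 0 and L ≥ 1 there exist constants C > 0 and δ > 0 with the following property. Let n, d be positive integers with dn even and d ≤ δn, let H be a graph on [n] with d_i^H ≤ d for every i and with dn − 2|H| ≥ c·dn, and let F be a set of at most L edges of the complete graph K_n that is disjoint from the edge set of H; suppose the set of d-regular graphs on [n] containing H is nonempty. Let λ_F = P(F ⊆ 𝒢(n,d)). Then P(F ⊆ 𝒢(n,d) | H ⊆ 𝒢(n,d)) ≤ λ_F·(1 + C·(1/n + |H|/(dn) + d²/n²)). -/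
open Filter

noncomputable section

/-- The degree of the vertex `v` in the simple graph `G` on `[n]`. -/
def deg {n : ℕ} (G : SimpleGraph (Fin n)) (v : Fin n) : ℕ := (G.neighborSet v).ncard

/-- The number of edges of `G`. -/
def nedges {n : ℕ} (G : SimpleGraph (Fin n)) : ℕ := G.edgeSet.ncard

/-- The probability that a graph chosen uniformly at random among all simple graphs on `[n]`
satisfying `base` also satisfies `Q`. -/
def prob {n : ℕ} (base Q : SimpleGraph (Fin n) → Prop) : ℝ :=
  (Nat.card {G : SimpleGraph (Fin n) // base G ∧ Q G} : ℝ) /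
    (Nat.card {G : SimpleGraph (Fin n) // base G} : ℝ)

namespace RegularSwitching

open Finset

open scoped Classical

variable {n : ℕ}

/-- The adjacency indicator of `G`. -/
def ind (G : SimpleGraph (Fin n)) (x y : Fin n) : ℝ := if G.Adj x y then 1 else 0

/-- The indicator that `x` and `y` are distinct and not adjacent in `G`. -/
def nonadj (G : SimpleGraph (Fin n)) (x y : Fin n) : ℝ :=
  1 - ind G x y - if x = y then 1 else 0

/-- The adjacency indicator of the edges of `G` outside `K`, for `K ≤ G`. -/
def res (K G : SimpleGraph (Fin n)) (x y : Fin n) : ℝ := ind G x y - ind K x y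

/-- The `d`-regular graphs containing `K`. -/
def fam (d : ℕ) (K : SimpleGraph (Fin n)) : Finset (SimpleGraph (Fin n)) :=
  univ.filter fun G => (∀ i, deg G i = d) ∧ K ≤ G

/-- The number of common neighbours. -/
def codeg (G : SimpleGraph (Fin n)) (v w : Fin n) : ℝ := ∑ x, ind G v x * ind G w x

/-- In a `d`-regular graph, the number of neighbours of `w` that are neither `v`
nor adjacent to `v`. -/
def sep (d : ℕ) (G : SimpleGraph (Fin n)) (v w : Fin n) : ℝ := d - codeg G v w - ind G v w

/-- The number of `K`-neighbours of `w` that are neither `v` nor adjacent to `v` in `G`. -/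
def kap (K G : SimpleGraph (Fin n)) (w v : Fin n) : ℝ := ∑ x, ind K w x * nonadj G v x

lemma ind_comm (G : SimpleGraph (Fin n)) (x y : Fin n) : ind G x y = ind G y x := by
  simp [ind, G.adj_comm]

lemma ind_self (G : SimpleGraph (Fin n)) (x : Fin n) : ind G x x = 0 := by
  simp [ind]

lemma ind_nonneg (G : SimpleGraph (Fin n)) (x y : Fin n) : 0 ≤ ind G x y := by
  unfold ind; split_ifs <;> norm_num

lemma ind_le_one (G : SimpleGraph (Fin n)) (x y : Fin n) : ind G x y ≤ 1 := by
  unfold ind; split_ifs <;> norm_num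

lemma ind_mono {K G : SimpleGraph (Fin n)} (h : K ≤ G) (x y : Fin n) : ind K x y ≤ ind G x y := by
  unfold ind
  by_cases h1 : K.Adj x y
  · simp [h1, h h1]
  · simp only [h1, if_false]; split_ifs <;> norm_num

lemma nonadj_nonneg (G : SimpleGraph (Fin n)) (x y : Fin n) : 0 ≤ nonadj G x y := by
  unfold nonadj
  by_cases h : x = y
  · subst h; simp [ind_self]
  · simp [h, ind_le_one]

lemma nonadj_le_one (G : SimpleGraph (Fin n)) (x y : Fin n) : nonadj G x y ≤ 1 := by
  have := ind_nonneg G x y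
  unfold nonadj; split_ifs <;> linarith

lemma res_nonneg {K G : SimpleGraph (Fin n)} (h : K ≤ G) (x y : Fin n) : 0 ≤ res K G x y :=
  sub_nonneg.2 (ind_mono h x y)

lemma res_le_ind (K G : SimpleGraph (Fin n)) (x y : Fin n) : res K G x y ≤ ind G x y := by
  have := ind_nonneg K x y
  unfold res; linarith

lemma codeg_comm (G : SimpleGraph (Fin n)) (v w : Fin n) : codeg G v w = codeg G w v := by
  simp [codeg, mul_comm]

lemma codeg_nonneg (G : SimpleGraph (Fin n)) (v w : Fin n) : 0 ≤ codeg G v w :=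
  sum_nonneg fun _ _ => mul_nonneg (ind_nonneg _ _ _) (ind_nonneg _ _ _)

lemma sep_comm (d : ℕ) (G : SimpleGraph (Fin n)) (v w : Fin n) : sep d G v w = sep d G w v := by
  simp [sep, codeg_comm G v w, ind_comm G v w]

lemma mem_fam {d : ℕ} {K G : SimpleGraph (Fin n)} :
    G ∈ fam d K ↔ (∀ i, deg G i = d) ∧ K ≤ G := by
  simp [fam]

lemma deg_eq_sum (G : SimpleGraph (Fin n)) (v : Fin n) : (deg G v : ℝ) = ∑ y, ind G v y := by
  simp only [ind, sum_boole]
  rw [deg, Set.ncard_eq_toFinset_card']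
  congr 2
  ext; simp

lemma sum_ind_left {d : ℕ} {K G : SimpleGraph (Fin n)} (h : G ∈ fam d K) (v : Fin n) :
    ∑ y, ind G v y = d := by
  rw [← deg_eq_sum, (mem_fam.1 h).1]

lemma sum_ind_right {d : ℕ} {K G : SimpleGraph (Fin n)} (h : G ∈ fam d K) (v : Fin n) :
    ∑ y, ind G y v = d := by
  simp_rw [ind_comm G _ v, sum_ind_left h]

lemma sum_deg (G : SimpleGraph (Fin n)) : ∑ v, (deg G v : ℝ) = 2 * nedges G := by
  have h := G.sum_degrees_eq_twice_card_edges
  have h1 : ∀ v, deg G v = G.degree v := fun v => by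
    rw [deg, Set.ncard_eq_toFinset_card', SimpleGraph.degree]
    rfl
  have h2 : nedges G = #G.edgeFinset := by
    rw [nedges, Set.ncard_eq_toFinset_card', SimpleGraph.edgeFinset]
  simp_rw [h1, h2]
  exact_mod_cast h

lemma nedges_sup_edge_le (K : SimpleGraph (Fin n)) (a b : Fin n) :
    nedges (K ⊔ SimpleGraph.edge a b) ≤ nedges K + 1 := by
  unfold nedges
  rw [SimpleGraph.edgeSet_sup]
  refine (Set.ncard_union_le _ _).trans ?_
  gcongr
  refine (Set.ncard_le_ncard (t := {s(a, b)}) ?_ (Set.finite_singleton _)).trans (by simp)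
  simp only [SimpleGraph.edge, SimpleGraph.edgeSet_fromEdgeSet]
  exact Set.sdiff_subset

lemma deg_mono {K G : SimpleGraph (Fin n)} (h : K ≤ G) (v : Fin n) : (deg K v : ℝ) ≤ deg G v := by
  rw [deg_eq_sum, deg_eq_sum]
  exact sum_le_sum fun y _ => ind_mono h v y

lemma sum_res {d : ℕ} {K G : SimpleGraph (Fin n)} (h : G ∈ fam d K) (v : Fin n) :
    ∑ y, res K G v y = d - deg K v := by
  simp only [res, sum_sub_distrib, sum_ind_left h, deg_eq_sum]

lemma deg_le_of_mem {d : ℕ} {K G : SimpleGraph (Fin n)} (h : G ∈ fam d K) (v : Fin n) :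
    (deg K v : ℝ) ≤ d := by
  have := deg_mono (mem_fam.1 h).2 v
  rwa [(mem_fam.1 h).1] at this

lemma sum_fam_ind_mul {d : ℕ} (K : SimpleGraph (Fin n)) {a b : Fin n} (hab : a ≠ b)
    (f : SimpleGraph (Fin n) → ℝ) :
    ∑ G ∈ fam d K, ind G a b * f G = ∑ G ∈ fam d (K ⊔ SimpleGraph.edge a b), f G := by
  have : fam d (K ⊔ SimpleGraph.edge a b) = (fam d K).filter fun G => G.Adj a b := by
    ext G
    simp only [mem_filter, mem_fam, sup_le_iff, SimpleGraph.edge_le_iff, hab, false_or,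
      SimpleGraph.mem_edgeSet, and_assoc]
  rw [this, sum_filter]
  refine sum_congr rfl fun G _ => ?_
  unfold ind; split_ifs <;> simp

lemma sum_mul_nonadj {d : ℕ} {K G : SimpleGraph (Fin n)} (h : G ∈ fam d K) (v w : Fin n) :
    ∑ x, ind G w x * nonadj G v x = sep d G v w := by
  simp only [nonadj, mul_sub, sum_sub_distrib, mul_one, sum_ind_left h, mul_ite, mul_zero, sum_ite_eq,
    mem_univ, if_true]
  rw [sep, codeg_comm, codeg, ind_comm G v w]

lemma sum_res_mul_nonadj {d : ℕ} {K G : SimpleGraph (Fin n)} (h : G ∈ fam d K) (v w : Fin n) :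
    ∑ x, res K G w x * nonadj G v x = sep d G v w - kap K G w v := by
  simp only [res, sub_mul, sum_sub_distrib, sum_mul_nonadj h, kap]

lemma kap_nonneg (K G : SimpleGraph (Fin n)) (w v : Fin n) : 0 ≤ kap K G w v :=
  sum_nonneg fun _ _ => mul_nonneg (ind_nonneg _ _ _) (nonadj_nonneg _ _ _)

lemma kap_le_deg (K G : SimpleGraph (Fin n)) (w v : Fin n) : kap K G w v ≤ deg K w := by
  rw [deg_eq_sum]
  exact sum_le_sum fun x _ => mul_le_of_le_one_right (ind_nonneg _ _ _) (nonadj_le_one _ _ _)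

lemma kap_le_sep {d : ℕ} {K G : SimpleGraph (Fin n)} (h : G ∈ fam d K) (v w : Fin n) :
    kap K G w v ≤ sep d G v w := by
  rw [← sum_mul_nonadj h]
  exact sum_le_sum fun x _ =>
    mul_le_mul_of_nonneg_right (ind_mono (mem_fam.1 h).2 _ _) (nonadj_nonneg _ _ _)

/-- The four-cycle `u v x w`. -/
def fourCycle (u v w x : Fin n) : SimpleGraph (Fin n) :=
  SimpleGraph.edge u v ⊔ SimpleGraph.edge w x ⊔ SimpleGraph.edge u w ⊔ SimpleGraph.edge v x

lemma fourCycle_swap (u v w x : Fin n) : fourCycle u v w x = fourCycle u w v x := by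
  unfold fourCycle
  ac_rfl

/-- The condition under which the edges `uv`, `wx` of `G` can be replaced by `uw`, `vx`. -/
def Switchable (K G : SimpleGraph (Fin n)) (u v w x : Fin n) : Prop :=
  G.Adj u v ∧ ¬ G.Adj u w ∧ G.Adj w x ∧ ¬ K.Adj w x ∧ ¬ G.Adj v x ∧ v ≠ x

lemma symmDiff_adj (G C : SimpleGraph (Fin n)) (p q : Fin n) :
    (symmDiff G C).Adj p q ↔ (G.Adj p q ∧ ¬ C.Adj p q) ∨ (C.Adj p q ∧ ¬ G.Adj p q) := by
  simp [symmDiff, SimpleGraph.sup_adj, SimpleGraph.sdiff_adj]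

lemma fourCycle_adj {u v w x : Fin n} (huv : u ≠ v) (huw : u ≠ w) (hwx : w ≠ x) (hvx : v ≠ x)
    (p q : Fin n) :
    (fourCycle u v w x).Adj p q ↔
      (p = u ∧ q = v ∨ p = v ∧ q = u) ∨ (p = w ∧ q = x ∨ p = x ∧ q = w) ∨
      (p = u ∧ q = w ∨ p = w ∧ q = u) ∨ (p = v ∧ q = x ∨ p = x ∧ q = v) := by
  simp only [fourCycle, SimpleGraph.sup_adj, SimpleGraph.edge_adj]
  grind

lemma sum_pair_ind {a b : Fin n} (hab : a ≠ b) (p : Fin n) :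
    ∑ q, (if p = a ∧ q = b ∨ p = b ∧ q = a then (1 : ℝ) else 0) =
      (if p = a then 1 else 0) + if p = b then 1 else 0 := by
  by_cases ha : p = a
  · subst ha; simp [hab]
  · by_cases hb : p = b
    · subst hb; simp [ha]
    · simp [ha, hb]

lemma ind_switch {K G : SimpleGraph (Fin n)} {u v w x : Fin n} (hvw : v ≠ w) (huw : u ≠ w)
    (h : Switchable K G u v w x) (p q : Fin n) :
    ind (symmDiff G (fourCycle u v w x)) p q = ind G p q
      - (if p = u ∧ q = v ∨ p = v ∧ q = u then 1 else 0)
      - (if p = w ∧ q = x ∨ p = x ∧ q = w then 1 else 0)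
      + (if p = u ∧ q = w ∨ p = w ∧ q = u then 1 else 0)
      + (if p = v ∧ q = x ∨ p = x ∧ q = v then 1 else 0) := by
  obtain ⟨h1, h2, h3, h4, h5, h6⟩ := h
  have huv := h1.ne
  have hwx := h3.ne
  have hux : u ≠ x := by rintro rfl; exact h2 h3.symm
  simp only [ind, symmDiff_adj, fourCycle_adj huv huw hwx h6]
  have h1' := h1.symm
  have h2' : ¬ G.Adj w u := fun h => h2 h.symm
  have h3' := h3.symm
  have h5' : ¬ G.Adj x v := fun h => h5 h.symm
  by_cases e1 : p = u ∧ q = v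
  · obtain ⟨rfl, rfl⟩ := e1; simp [*, Ne.symm]
  by_cases e2 : p = v ∧ q = u
  · obtain ⟨rfl, rfl⟩ := e2; simp [*, Ne.symm]
  by_cases e3 : p = w ∧ q = x
  · obtain ⟨rfl, rfl⟩ := e3; simp [*, Ne.symm]
  by_cases e4 : p = x ∧ q = w
  · obtain ⟨rfl, rfl⟩ := e4; simp [*, Ne.symm]
  by_cases e5 : p = u ∧ q = w
  · obtain ⟨rfl, rfl⟩ := e5; simp [*, Ne.symm]
  by_cases e6 : p = w ∧ q = u
  · obtain ⟨rfl, rfl⟩ := e6; simp [*, Ne.symm]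
  by_cases e7 : p = v ∧ q = x
  · obtain ⟨rfl, rfl⟩ := e7; simp [*, Ne.symm]
  by_cases e8 : p = x ∧ q = v
  · obtain ⟨rfl, rfl⟩ := e8; simp [*, Ne.symm]
  simp [e1, e2, e3, e4, e5, e6, e7, e8]

lemma deg_switch {K G : SimpleGraph (Fin n)} {u v w x : Fin n} (hvw : v ≠ w) (huw : u ≠ w)
    (h : Switchable K G u v w x) (p : Fin n) :
    deg (symmDiff G (fourCycle u v w x)) p = deg G p := by
  have key : (deg (symmDiff G (fourCycle u v w x)) p : ℝ) = deg G p := by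
    rw [deg_eq_sum, deg_eq_sum]
    simp_rw [ind_switch hvw huw h, sum_add_distrib, sum_sub_distrib]
    rw [sum_pair_ind h.1.ne, sum_pair_ind huw, sum_pair_ind h.2.2.1.ne,
      sum_pair_ind h.2.2.2.2.2]
    ring
  exact_mod_cast key

lemma switchable_switch {K G : SimpleGraph (Fin n)} {u v w x : Fin n} (huw : u ≠ w)
    (hK : K ≤ G) (h : Switchable K G u v w x) :
    Switchable K (symmDiff G (fourCycle u v w x)) u w v x := by
  obtain ⟨h1, h2, h3, h4, h5, h6⟩ := h
  refine ⟨?_, ?_, ?_, fun h => h5 (hK h), ?_, h3.ne⟩ <;>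
  simp [symmDiff_adj, fourCycle_adj h1.ne huw h3.ne h6, h1, h2, h3, h5, h6]

lemma le_switch {K G : SimpleGraph (Fin n)} {u v w x : Fin n} (huw : u ≠ w)
    (hK : K ≤ G) (huv : ¬ K.Adj u v) (h : Switchable K G u v w x) :
    K ≤ symmDiff G (fourCycle u v w x) := by
  obtain ⟨h1, h2, h3, h4, h5, h6⟩ := h
  intro p q hpq
  have hG := hK hpq
  have hpq' := hpq.symm
  have hG' := hG.symm
  rw [symmDiff_adj, fourCycle_adj h1.ne huw h3.ne h6]
  refine Or.inl ⟨hG, ?_⟩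
  rintro ((⟨rfl, rfl⟩ | ⟨rfl, rfl⟩) | (⟨rfl, rfl⟩ | ⟨rfl, rfl⟩) | (⟨rfl, rfl⟩ | ⟨rfl, rfl⟩) |
    (⟨rfl, rfl⟩ | ⟨rfl, rfl⟩)) <;> contradiction

/-- Switching `uv, wx` to `uw, vx` preserves the number of common neighbours of `v` and `w`. -/
lemma sep_switch {d : ℕ} {K G : SimpleGraph (Fin n)} {u v w x : Fin n} (hvw : v ≠ w)
    (huw : u ≠ w) (h : Switchable K G u v w x) :
    sep d (symmDiff G (fourCycle u v w x)) v w = sep d G v w := by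
  have h' := h
  obtain ⟨h1, h2, h3, h4, h5, h6⟩ := h
  have hux : u ≠ x := by rintro rfl; exact h2 h3.symm
  have i1 : ind G w u = 0 := by simp [ind, G.adj_comm w u, h2]
  have i2 : ind G v x = 0 := by simp [ind, h5]
  have i3 : ind G v u = 1 := by simp [ind, h1.symm]
  have i4 : ind G w x = 1 := by simp [ind, h3]
  have e1 : ind (symmDiff G (fourCycle u v w x)) v w = ind G v w := by
    rw [ind_switch hvw huw h']
    simp [hvw, hvw.symm, h1.ne, h1.ne.symm, h3.ne, h3.ne.symm, h6, huw, huw.symm]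
  have e2 : codeg (symmDiff G (fourCycle u v w x)) v w = codeg G v w := by
    refine sum_congr rfl fun q _ => ?_
    rw [ind_switch hvw huw h', ind_switch hvw huw h']
    by_cases hqu : q = u
    · subst hqu
      simp [hvw, hvw.symm, h1.ne, h1.ne.symm, h3.ne, h3.ne.symm, h6, huw, huw.symm, hux, hux.symm,
        i1, i3]
    by_cases hqx : q = x
    · subst hqx
      simp [hvw, hvw.symm, h1.ne, h1.ne.symm, h3.ne, h3.ne.symm, h6, huw, huw.symm, hux, hux.symm,
        i2, i4]
    simp [hvw, hvw.symm, h1.ne, h1.ne.symm, h3.ne, h3.ne.symm, h6, huw, huw.symm, hqu, hqx]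
  rw [sep, sep, e1, e2]

lemma sum_switchable (d : ℕ) {K : SimpleGraph (Fin n)} {u v w : Fin n} (x : Fin n)
    (hvw : v ≠ w) (hu : u ≠ v) (huw : u ≠ w) (kuv : ¬ K.Adj u v) (kuw : ¬ K.Adj u w)
    (φ : ℝ → ℝ) :
    ∑ G ∈ fam d K with Switchable K G u v w x, φ (sep d G v w) =
      ∑ G ∈ fam d K with Switchable K G u w v x, φ (sep d G w v) := by
  have aux : ∀ v w : Fin n, v ≠ w → u ≠ w → ¬ K.Adj u v →
      ∀ G ∈ (fam d K).filter fun G => Switchable K G u v w x,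
      symmDiff G (fourCycle u v w x) ∈ (fam d K).filter fun G => Switchable K G u w v x := by
    intro v w hvw huw kuv G hG
    rw [mem_filter, mem_fam] at hG ⊢
    exact ⟨⟨fun i => by rw [deg_switch hvw huw hG.2, hG.1.1], le_switch huw hG.1.2 kuv hG.2⟩,
      switchable_switch huw hG.1.2 hG.2⟩
  refine sum_bij' (fun G _ => symmDiff G (fourCycle u v w x))
    (fun G _ => symmDiff G (fourCycle u w v x)) (aux v w hvw huw kuv) (aux w v hvw.symm hu kuw)
    ?_ ?_ ?_
  · intro G _
    rw [fourCycle_swap u w v x, symmDiff_symmDiff_cancel_right]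
  · intro G _
    rw [fourCycle_swap u w v x, symmDiff_symmDiff_cancel_right]
  · intro G hG
    rw [sep_comm d _ w v, sep_switch hvw huw (mem_filter.1 hG).2]

lemma switchable_indicator {K G : SimpleGraph (Fin n)} (h : K ≤ G) (u v w x : Fin n) :
    (if Switchable K G u v w x then (1 : ℝ) else 0) =
      ind G u v * (1 - ind G u w) * (res K G w x * nonadj G v x) := by
  have := @h w x
  by_cases h1 : G.Adj u v
  · by_cases h2 : G.Adj u w
    · simp [Switchable, ind, h1, h2]
    by_cases h3 : G.Adj w x
    · by_cases h4 : K.Adj w x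
      · simp [Switchable, ind, res, h1, h2, h3, h4]
      by_cases h6 : v = x
      · subst h6; simp [Switchable, ind, res, nonadj]
      by_cases h5 : G.Adj v x <;> simp [Switchable, ind, res, nonadj, h1, h2, h3, h4, h5, h6]
    · have h4 : ¬ K.Adj w x := fun h => h3 (this h)
      simp [Switchable, ind, res, h1, h2, h3, h4]
  · simp [Switchable, ind, h1]

/-- Double counting of switchings, weighted by a function of the number of common neighbours. -/
lemma sum_switch (d : ℕ) {K : SimpleGraph (Fin n)} {u v w : Fin n}
    (hu : u ≠ v) (huw : u ≠ w) (kuv : ¬ K.Adj u v) (kuw : ¬ K.Adj u w) (φ : ℝ → ℝ) :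
    ∑ G ∈ fam d K, ind G u v * (1 - ind G u w) * ((sep d G v w - kap K G w v) * φ (sep d G v w)) =
    ∑ G ∈ fam d K,
      ind G u w * (1 - ind G u v) * ((sep d G v w - kap K G v w) * φ (sep d G v w)) := by
  by_cases hvw : v = w
  · subst hvw; rfl
  have aux : ∀ v w : Fin n,
      ∑ G ∈ fam d K,
        ind G u v * (1 - ind G u w) * ((sep d G v w - kap K G w v) * φ (sep d G v w)) =
      ∑ x, ∑ G ∈ fam d K with Switchable K G u v w x, φ (sep d G v w) := by
    intro v w
    simp_rw [sum_filter]
    rw [sum_comm]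
    refine sum_congr rfl fun G hG => ?_
    rw [← sum_res_mul_nonadj hG, sum_mul, mul_sum]
    refine sum_congr rfl fun x _ => ?_
    rw [← mul_assoc, ← switchable_indicator (mem_fam.1 hG).2]
    split_ifs <;> simp
  rw [aux]
  simp_rw [sum_switchable d _ hvw hu huw kuv kuw]
  rw [← aux]
  simp_rw [sep_comm d _ w v]

/-- The number of `d`-regular graphs containing `K`. -/
def cnt (d : ℕ) (K : SimpleGraph (Fin n)) : ℝ := #(fam d K)

lemma cnt_nonneg (d : ℕ) (K : SimpleGraph (Fin n)) : 0 ≤ cnt d K := Nat.cast_nonneg _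

lemma nonadj_mul_ind {K G : SimpleGraph (Fin n)} (h : K ≤ G) (u w : Fin n) :
    nonadj K u w * ind G u w = res K G u w := by
  by_cases h1 : u = w
  · subst h1; simp [res, ind_self]
  by_cases h2 : K.Adj u w
  · simp [nonadj, res, ind, h1, h2, h h2]
  · simp [nonadj, res, ind, h1, h2]

lemma nonadj_mul_one_sub_ind {K G : SimpleGraph (Fin n)} (h : K ≤ G) (u w : Fin n) :
    nonadj K u w * (1 - ind G u w) = nonadj G u w := by
  by_cases h1 : u = w
  · subst h1; simp [nonadj, ind_self]
  by_cases h2 : K.Adj u w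
  · simp [nonadj, ind, h1, h2, h h2]
  · simp [nonadj, ind, h1, h2]

lemma nonadj_mul_sum_switch (d : ℕ) {K : SimpleGraph (Fin n)} {u v : Fin n}
    (hu : u ≠ v) (kuv : ¬ K.Adj u v) (φ : ℝ → ℝ) (w : Fin n) :
    nonadj K u w * ∑ G ∈ fam d K,
      ind G u v * (1 - ind G u w) * ((sep d G v w - kap K G w v) * φ (sep d G v w)) =
    nonadj K u w * ∑ G ∈ fam d K,
      ind G u w * (1 - ind G u v) * ((sep d G v w - kap K G v w) * φ (sep d G v w)) := by
  by_cases h1 : u = w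
  · simp [nonadj, h1, ind_self]
  by_cases h2 : K.Adj u w
  · simp [nonadj, ind, h1, h2]
  rw [sum_switch d hu h1 kuv h2]

lemma sep_le {d : ℕ} (G : SimpleGraph (Fin n)) (v w : Fin n) : sep d G v w ≤ d := by
  have := codeg_nonneg G v w
  have := ind_nonneg G v w
  unfold sep; linarith

lemma sum_sum_res {d : ℕ} {K G : SimpleGraph (Fin n)} (h : G ∈ fam d K) :
    ∑ w, ∑ x, res K G w x = d * n - 2 * nedges K := by
  simp only [sum_res h, sum_sub_distrib, sum_deg]
  simp [mul_comm]

lemma sum_ind_mul_ind {d : ℕ} {K G : SimpleGraph (Fin n)} (h : G ∈ fam d K) (u : Fin n) :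
    ∑ w, ∑ x, ind G u w * ind G w x = d * d := by
  simp_rw [← mul_sum, sum_ind_left h, ← sum_mul, sum_ind_left h]

/-- Lower bound for the number of edges available for switching `uv`. -/
lemma le_sum_nonadj_res {d : ℕ} {K G : SimpleGraph (Fin n)} (h : G ∈ fam d K) (u v : Fin n) :
    (d : ℝ) * n - 2 * nedges K - 2 * d * (d + 1) ≤
      ∑ w, ∑ x, nonadj G u w * (res K G w x * nonadj G v x) := by
  have hK := (mem_fam.1 h).2
  have key : ∀ w x, res K G w x - (ind G u w + if u = w then 1 else 0) * ind G w x -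
      (ind G v x + if v = x then 1 else 0) * ind G w x ≤
      nonadj G u w * (res K G w x * nonadj G v x) := by
    intro w x
    have h1 := nonadj_nonneg G u w
    have h2 := nonadj_le_one G u w
    have h3 := nonadj_nonneg G v x
    have h4 := nonadj_le_one G v x
    have h5 := res_nonneg hK w x
    have h6 := res_le_ind K G w x
    have e1 : (ind G u w + if u = w then 1 else 0) = 1 - nonadj G u w := by unfold nonadj; ring
    have e2 : (ind G v x + if v = x then 1 else 0) = 1 - nonadj G v x := by unfold nonadj; ring
    rw [e1, e2]
    have h7 : (1 - nonadj G u w) * res K G w x ≤ (1 - nonadj G u w) * ind G w x :=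
      mul_le_mul_of_nonneg_left h6 (by linarith)
    have h8 : (1 - nonadj G v x) * res K G w x ≤ (1 - nonadj G v x) * ind G w x :=
      mul_le_mul_of_nonneg_left h6 (by linarith)
    have h9 : 0 ≤ (1 - nonadj G u w) * (1 - nonadj G v x) * res K G w x :=
      mul_nonneg (mul_nonneg (by linarith) (by linarith)) h5
    nlinarith
  refine le_trans (le_of_eq ?_) (sum_le_sum fun w _ => sum_le_sum fun x _ => key w x)
  simp only [sum_sub_distrib, add_mul, sum_add_distrib, sum_sum_res h, sum_ind_mul_ind h]
  have e1 : ∑ w, ∑ x, (if u = w then (1 : ℝ) else 0) * ind G w x = d := by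
    simp_rw [← mul_sum, sum_ind_left h]
    simp
  have e2 : ∑ w, ∑ x, (if v = x then (1 : ℝ) else 0) * ind G w x = d := by
    rw [sum_comm]
    simp_rw [← mul_sum, sum_ind_right h]
    simp
  have e3 : ∑ w, ∑ x, ind G v x * ind G w x = d * d := by
    rw [sum_comm, ← sum_ind_mul_ind h v]
    simp_rw [ind_comm G _ _]
  rw [e1, e2, e3]
  ring

/-- Basic switching bound for the probability of an edge. -/
lemma mul_sum_res_le (d : ℕ) (K : SimpleGraph (Fin n)) (u v : Fin n) :
    ((d : ℝ) * n - 2 * nedges K - 2 * d * (d + 1)) * ∑ G ∈ fam d K, res K G u v ≤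
      (d - deg K u) * d * cnt d K := by
  have hR : 0 ≤ ((d : ℝ) - deg K u) * d * cnt d K := by
    rcases (fam d K).eq_empty_or_nonempty with h | ⟨G, hG⟩
    · simp [cnt, h]
    · exact mul_nonneg (mul_nonneg (sub_nonneg.2 (deg_le_of_mem hG u)) (Nat.cast_nonneg _))
        (cnt_nonneg _ _)
  by_cases huv : u = v
  · subst huv; simpa [res, ind_self] using hR
  by_cases kuv : K.Adj u v
  · rw [sum_eq_zero, mul_zero]
    · exact hR
    · intro G hG
      simp [res, ind, kuv, (mem_fam.1 hG).2 kuv]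
  have hres : ∀ G, res K G u v = ind G u v := fun G => by simp [res, ind, kuv]
  simp_rw [hres]
  have key := sum_congr (rfl : (univ : Finset (Fin n)) = univ) fun w _ =>
    nonadj_mul_sum_switch d huv kuv (fun _ => 1) w
  simp_rw [mul_sum] at key
  rw [sum_comm, sum_comm (s := univ) (t := fam d K)] at key
  calc _ ≤ ∑ G ∈ fam d K, ∑ w, nonadj K u w *
        (ind G u v * (1 - ind G u w) * ((sep d G v w - kap K G w v) * 1)) := ?_
    _ = _ := key
    _ ≤ ∑ G ∈ fam d K, ((d : ℝ) - deg K u) * d := ?_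
    _ = _ := by rw [sum_const, nsmul_eq_mul, cnt]; ring
  · rw [mul_sum]
    refine sum_le_sum fun G hG => ?_
    refine le_trans (mul_le_mul_of_nonneg_right (le_sum_nonadj_res hG u v) (ind_nonneg _ _ _))
      (le_of_eq ?_)
    rw [sum_mul]
    refine sum_congr rfl fun w _ => ?_
    rw [← mul_sum, sum_res_mul_nonadj hG, ← nonadj_mul_one_sub_ind (mem_fam.1 hG).2]
    ring
  · refine sum_le_sum fun G hG => ?_
    have hK := (mem_fam.1 hG).2
    rw [← sum_res hG u, sum_mul]
    refine sum_le_sum fun w _ => ?_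
    rw [← nonadj_mul_ind hK]
    have h1 := mul_nonneg (nonadj_nonneg K u w) (ind_nonneg G u w)
    have h2 : sep d G v w - kap K G v w ≤ d := by
      linarith [sep_le (d := d) G v w, kap_nonneg K G v w]
    have h3 : 0 ≤ sep d G v w - kap K G v w := by
      rw [sep_comm]; linarith [kap_le_sep hG w v]
    have h4 : (1 - ind G u v) * (sep d G v w - kap K G v w) ≤ d := by
      refine le_trans (mul_le_of_le_one_left h3 ?_) h2
      linarith [ind_nonneg G u v]
    calc _ = nonadj K u w * ind G u w * ((1 - ind G u v) * (sep d G v w - kap K G v w)) := by ring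
      _ ≤ _ := mul_le_mul_of_nonneg_left h4 h1

/-- Few edges of the complete graph are unavailable for switching, even after `j` edges have been
added to `K`. -/
def Loose (B : ℝ) (d : ℕ) (K : SimpleGraph (Fin n)) (j : ℕ) : Prop :=
  (d : ℝ) * n ≤ B * (d * n - 2 * (nedges K + j) - 2 * d * (d + 1))

lemma Loose.mono {B : ℝ} (hB : 0 ≤ B) {d : ℕ} {K : SimpleGraph (Fin n)} {i j : ℕ} (hij : i ≤ j)
    (h : Loose B d K j) : Loose B d K i := by
  refine le_trans h (mul_le_mul_of_nonneg_left ?_ hB)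
  have : (i : ℝ) ≤ j := by exact_mod_cast hij
  linarith

lemma Loose.sup_edge {B : ℝ} (hB : 0 ≤ B) {d : ℕ} {K : SimpleGraph (Fin n)} {j : ℕ}
    (a b : Fin n) (h : Loose B d K (j + 1)) : Loose B d (K ⊔ SimpleGraph.edge a b) j := by
  refine le_trans h (mul_le_mul_of_nonneg_left ?_ hB)
  have : (nedges (K ⊔ SimpleGraph.edge a b) : ℝ) ≤ nedges K + 1 := by
    exact_mod_cast nedges_sup_edge_le K a b
  push_cast
  linarith

lemma Loose.mul_sum_res_le {B : ℝ} (hB : 0 ≤ B) {d : ℕ} (hd : 0 < d) {K : SimpleGraph (Fin n)}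
    (h : Loose B d K 0) (u v : Fin n) :
    n * ∑ G ∈ fam d K, res K G u v ≤ B * (d - deg K u) * cnt d K := by
  have h1 := RegularSwitching.mul_sum_res_le d K u v
  have h2 : 0 ≤ ∑ G ∈ fam d K, res K G u v :=
    sum_nonneg fun G hG => res_nonneg (mem_fam.1 hG).2 _ _
  have h3 := mul_le_mul_of_nonneg_right h h2
  have hd' : (0 : ℝ) < d := by exact_mod_cast hd
  have h4 := mul_le_mul_of_nonneg_left h1 hB
  refine le_of_mul_le_mul_left ?_ hd'
  simp only [Nat.cast_zero, add_zero] at h3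
  linarith

/-- The indicator that all pairs in `l` are edges of `G`. -/
def indProd (G : SimpleGraph (Fin n)) (l : List (Fin n × Fin n)) : ℝ :=
  (l.map fun p => ind G p.1 p.2).prod

lemma indProd_nonneg (G : SimpleGraph (Fin n)) (l : List (Fin n × Fin n)) : 0 ≤ indProd G l :=
  List.prod_nonneg (by simp only [List.mem_map]; rintro _ ⟨p, _, rfl⟩; exact ind_nonneg _ _ _)

/-- Conditionally on the presence of the edges in `l`, any further edge at `z` is unlikely. -/
lemma Loose.sum_indProd_mul_res_le {B : ℝ} (hB : 0 ≤ B) {d : ℕ} (hd : 0 < d) (z t : Fin n)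
    (l : List (Fin n × Fin n)) :
    ∀ K : SimpleGraph (Fin n), Loose B d K l.length → (∀ p ∈ l, p ≠ (z, t) ∧ p ≠ (t, z)) →
    n * ∑ G ∈ fam d K, indProd G l * res K G z t ≤
      B * (d - deg K z) * ∑ G ∈ fam d K, indProd G l := by
  induction l with
  | nil =>
    intro K hK _
    simpa [indProd, cnt] using Loose.mul_sum_res_le hB hd hK z t
  | cons p l ih =>
    obtain ⟨a, b⟩ := p
    intro K hK hl
    by_cases hab : a = b
    · subst hab; simp [indProd, ind_self]
    have hne := hl (a, b) (by simp)
    have e : ∀ G, indProd G ((a, b) :: l) = ind G a b * indProd G l := fun G => by simp [indProd]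
    simp_rw [e, mul_assoc]
    rw [sum_fam_ind_mul K hab, sum_fam_ind_mul K hab]
    have hr : ∀ G, res K G z t = res (K ⊔ SimpleGraph.edge a b) G z t := by
      intro G
      have : (K ⊔ SimpleGraph.edge a b).Adj z t ↔ K.Adj z t := by
        simp only [SimpleGraph.sup_adj, SimpleGraph.edge_adj]
        simp only [ne_eq, Prod.mk.injEq] at hne
        grind
      simp only [res, ind, this]
    simp_rw [hr]
    have hd := deg_mono (le_sup_left : K ≤ K ⊔ SimpleGraph.edge a b) z
    refine (ih _ (Loose.sup_edge hB a b hK) fun p hp => hl p (by simp [hp])).trans ?_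
    rw [mul_assoc]
    refine mul_le_mul_of_nonneg_left ?_ hB
    exact mul_le_mul_of_nonneg_right (by linarith) (sum_nonneg fun G _ => indProd_nonneg G l)

/-- Pairs of distinct common neighbours of `v` and `w`, the edge from `w` to the first of them being
outside `K`. -/
def pairs (K G : SimpleGraph (Fin n)) (v w : Fin n) : ℝ :=
  ∑ x, ∑ y, if x = y then 0 else ind G v x * ind G v y * ind G w y * res K G w x

lemma pairs_nonneg {K G : SimpleGraph (Fin n)} (h : K ≤ G) (v w : Fin n) : 0 ≤ pairs K G v w := by
  refine sum_nonneg fun x _ => sum_nonneg fun y _ => ?_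
  have := ind_nonneg G v x
  have := ind_nonneg G v y
  have := ind_nonneg G w y
  have := res_nonneg h w x
  split_ifs <;> positivity

/-- An upper bound for the indicator of `v` and `w` having many common neighbours. -/
def penalty (d : ℕ) (K G : SimpleGraph (Fin n)) (v w : Fin n) : ℝ :=
  if w = v then 0 else
    6 / d * deg K w + 36 / (d : ℝ) ^ 2 * (codeg G v w + pairs K G v w + ind G v w)

lemma penalty_nonneg (d : ℕ) {K G : SimpleGraph (Fin n)} (h : K ≤ G) (v w : Fin n) :
    0 ≤ penalty d K G v w := by
  have := pairs_nonneg h v w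
  have := codeg_nonneg G v w
  have := ind_nonneg G v w
  unfold penalty
  split_ifs <;> positivity

lemma sq_sum_ind_mul_res_le {K G : SimpleGraph (Fin n)} (h : K ≤ G) (v w : Fin n) :
    (∑ x, ind G v x * res K G w x) ^ 2 ≤ codeg G v w + pairs K G v w := by
  have e : codeg G v w = ∑ x, ∑ y, if x = y then ind G v x * ind G w x else 0 := by
    simp [codeg]
  rw [sq, sum_mul_sum, e, pairs, ← sum_add_distrib]
  refine sum_le_sum fun x _ => ?_
  rw [← sum_add_distrib]
  refine sum_le_sum fun y _ => ?_
  have a1 := ind_nonneg G v x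
  have a2 := ind_nonneg G v y
  have a3 := ind_nonneg G w x
  have a4 := ind_le_one G v x
  have r1 := res_nonneg h w x
  have r2 := res_nonneg h w y
  have r3 := res_le_ind K G w x
  have r4 := res_le_ind K G w y
  have r5 := ind_le_one G w x
  split_ifs with hxy
  · subst hxy
    rw [add_zero]
    calc _ ≤ ind G v x * ind G w x * (1 * 1) := by gcongr; exact r3.trans r5
      _ = _ := by ring
  · rw [zero_add]
    calc _ = ind G v x * ind G v y * res K G w y * res K G w x := by ring
      _ ≤ _ := by gcongr

lemma one_le_penalty {d : ℕ} (hd : 0 < d) {K G : SimpleGraph (Fin n)} (h : K ≤ G)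
    {v w : Fin n} (hvw : v ≠ w) (hs : sep d G v w < d / 2) : 1 ≤ penalty d K G v w := by
  have hd' : (0 : ℝ) < d := by exact_mod_cast hd
  have h1 := sq_sum_ind_mul_res_le h v w
  set c := ∑ x, ind G v x * res K G w x with hc
  have hc0 : 0 ≤ c := sum_nonneg fun x _ => mul_nonneg (ind_nonneg _ _ _) (res_nonneg h _ _)
  have h2 : codeg G v w ≤ c + deg K w := by
    rw [codeg, hc, deg_eq_sum, ← sum_add_distrib]
    refine sum_le_sum fun x _ => ?_
    have a1 := ind_nonneg G v x
    have a2 := ind_le_one G v x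
    have a3 := ind_nonneg K w x
    unfold res
    nlinarith
  have hi := ind_nonneg G v w
  have hi1 := ind_le_one G v w
  have hk : (0 : ℝ) ≤ deg K w := Nat.cast_nonneg _
  have h3 := pairs_nonneg h v w
  have h4 := codeg_nonneg G v w
  rw [penalty, if_neg hvw.symm]
  have h5 : (d : ℝ) / 2 < c + deg K w + ind G v w := by unfold sep at hs; linarith
  have h6 : ind G v w ^ 2 ≤ ind G v w := by nlinarith
  have key : ∀ t : ℝ, d / 6 ≤ t → 1 ≤ 36 / (d : ℝ) ^ 2 * t ^ 2 := by
    intro t ht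
    rw [div_mul_eq_mul_div, le_div_iff₀ (by positivity)]
    nlinarith
  have p1 : 0 ≤ 6 / (d : ℝ) * deg K w := by positivity
  have p2 : 0 ≤ 36 / (d : ℝ) ^ 2 := by positivity
  rcases le_or_gt ((d : ℝ) / 6) (deg K w) with hA | hA
  · have : 1 ≤ 6 / (d : ℝ) * deg K w := by
      rw [div_mul_eq_mul_div, le_div_iff₀ hd']; linarith
    have : 0 ≤ 36 / (d : ℝ) ^ 2 * (codeg G v w + pairs K G v w + ind G v w) := by positivity
    linarith
  rcases le_or_gt ((d : ℝ) / 6) c with hB | hB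
  · have e1 := key c hB
    have e2 : 36 / (d : ℝ) ^ 2 * c ^ 2 ≤
        36 / (d : ℝ) ^ 2 * (codeg G v w + pairs K G v w + ind G v w) :=
      mul_le_mul_of_nonneg_left (by linarith) p2
    linarith
  · have e1 := key (ind G v w) (by linarith)
    have e2 : 36 / (d : ℝ) ^ 2 * ind G v w ^ 2 ≤
        36 / (d : ℝ) ^ 2 * (codeg G v w + pairs K G v w + ind G v w) :=
      mul_le_mul_of_nonneg_left (by linarith) p2
    linarith

lemma kap_div_sep_le_add_penalty {d : ℕ} (hd : 0 < d) {K G : SimpleGraph (Fin n)}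
    (hG : G ∈ fam d K) {v w : Fin n} (hvw : v ≠ w) (hs : 0 < sep d G v w) {b κ : ℝ}
    (hκ : κ ≤ sep d G v w)
    (hb : 0 ≤ b) (h : (d : ℝ) / 2 ≤ sep d G v w → κ / sep d G v w ≤ b) :
    κ / sep d G v w ≤ b + penalty d K G v w := by
  have hK := (mem_fam.1 hG).2
  rcases le_or_gt ((d : ℝ) / 2) (sep d G v w) with h1 | h1
  · linarith [h h1, penalty_nonneg d hK v w]
  · have := one_le_penalty hd hK hvw h1
    have := div_le_one_of_le₀ hκ hs.le
    linarith

/-- The bound used for the edges of `K` at the vertex `w` that is being switched in. -/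
lemma kap_div_sep_le_penalty {d : ℕ} (hd : 0 < d) {K G : SimpleGraph (Fin n)}
    (hG : G ∈ fam d K) {v w : Fin n} (hvw : v ≠ w) (hs : 0 < sep d G v w) :
    kap K G w v / sep d G v w ≤ 2 * penalty d K G v w := by
  have hK := (mem_fam.1 hG).2
  have hp := penalty_nonneg d hK v w
  have hd' : (0 : ℝ) < d := by exact_mod_cast hd
  have := kap_div_sep_le_add_penalty hd hG hvw hs (kap_le_sep hG v w) hp (fun h => by
    have h1 : kap K G w v / sep d G v w ≤ deg K w / (d / 2) :=
      div_le_div₀ (Nat.cast_nonneg _) (kap_le_deg K G w v) (by positivity) h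
    refine h1.trans ?_
    rw [penalty, if_neg hvw.symm]
    have := pairs_nonneg hK v w
    have := codeg_nonneg G v w
    have := ind_nonneg G v w
    have h2 : 0 ≤ 36 / (d : ℝ) ^ 2 * (codeg G v w + pairs K G v w + ind G v w) := by positivity
    have h3 : (0 : ℝ) ≤ deg K w / d := by positivity
    have h4 : (deg K w : ℝ) / (d / 2) = 2 * (deg K w / d) := by field_simp
    have h5 : 6 / (d : ℝ) * deg K w = 6 * (deg K w / d) := by ring
    linarith)
  linarith

/-- The bound used for the edges of `K` at the vertex `v` that is being switched out. -/
lemma kap_div_sep_le {d : ℕ} (hd : 0 < d) {K G : SimpleGraph (Fin n)}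
    (hG : G ∈ fam d K) {v w : Fin n} (hvw : v ≠ w) (hs : 0 < sep d G v w) :
    kap K G v w / sep d G v w ≤
      deg K v / d + 2 * deg K v / (d : ℝ) ^ 2 * (codeg G v w + ind G v w) + penalty d K G v w := by
  have hd' : (0 : ℝ) < d := by exact_mod_cast hd
  have h1 := codeg_nonneg G v w
  have h2 := ind_nonneg G v w
  refine kap_div_sep_le_add_penalty hd hG hvw hs ?_ (by positivity) fun h => ?_
  · rw [sep_comm]; exact kap_le_sep hG w v
  have hk : (0 : ℝ) ≤ deg K v := Nat.cast_nonneg _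
  have e : codeg G v w + ind G v w = d - sep d G v w := by unfold sep; ring
  have hsd := sep_le (d := d) G v w
  calc kap K G v w / sep d G v w ≤ deg K v / sep d G v w := by
        gcongr; exact kap_le_deg K G v w
    _ = deg K v / d + deg K v / (d * sep d G v w) * (d - sep d G v w) := by field_simp; ring
    _ ≤ deg K v / d + deg K v / (d * (d / 2)) * (d - sep d G v w) := by
        have : 0 ≤ d - sep d G v w := by linarith
        gcongr
    _ = _ := by rw [e]; field_simp

lemma sep_pos {d : ℕ} {K G : SimpleGraph (Fin n)} (hG : G ∈ fam d K) {u v w : Fin n}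
    (huw : u ≠ w) (h1 : G.Adj u v) (h2 : ¬ G.Adj u w) : 0 < sep d G v w := by
  rw [sep_comm, ← sum_mul_nonadj hG]
  refine sum_pos' (fun x _ => mul_nonneg (ind_nonneg _ _ _) (nonadj_nonneg _ _ _))
    ⟨u, mem_univ _, ?_⟩
  simp [ind, nonadj, h1.symm, huw.symm, G.adj_comm w u, h2]

lemma indProd_cons (G : SimpleGraph (Fin n)) (a b : Fin n) (l : List (Fin n × Fin n)) :
    indProd G ((a, b) :: l) = ind G a b * indProd G l := by
  simp [indProd]

lemma indProd_nil (G : SimpleGraph (Fin n)) : indProd G [] = 1 := by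
  simp [indProd]

/-- Expected number of pairs of common neighbours. -/
lemma Loose.sum_pairs_le {B : ℝ} (hB : 0 ≤ B) {d : ℕ} (hd : 0 < d) {K : SimpleGraph (Fin n)}
    (v : Fin n) (l : List (Fin n × Fin n)) (hl : ∀ p ∈ l, p.2 = v)
    (h : Loose B d K (l.length + 3)) :
    n * ∑ G ∈ fam d K, indProd G l * ∑ w, (if w = v then 0 else pairs K G v w) ≤
      B * d ^ 4 * ∑ G ∈ fam d K, indProd G l := by
  have hterm : ∀ w x y : Fin n,
      n * ∑ G ∈ fam d K, indProd G l * (if w = v then 0 else if x = y then 0 else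
        ind G v x * ind G v y * ind G w y * res K G w x) ≤
      B * d * ∑ G ∈ fam d K, indProd G ((v, x) :: (v, y) :: (w, y) :: l) := by
    intro w x y
    have hR : 0 ≤ B * d * ∑ G ∈ fam d K, indProd G ((v, x) :: (v, y) :: (w, y) :: l) :=
      mul_nonneg (by positivity) (sum_nonneg fun G _ => indProd_nonneg G _)
    by_cases hw : w = v
    · simpa [hw] using hR
    by_cases hxy : x = y
    · simpa [hxy] using hR
    by_cases hx : x = v
    · simpa [hx, ind_self] using hR
    by_cases hwx : w = x
    · simpa [hwx, res, ind_self] using hR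
    have := Loose.sum_indProd_mul_res_le hB hd w x ((v, x) :: (v, y) :: (w, y) :: l) K (by simpa using h)
      (by
        simp only [List.mem_cons, ne_eq, forall_eq_or_imp, Prod.mk.injEq]
        refine ⟨by grind, by grind, by grind, fun p hp => ?_⟩
        have := hl p hp
        constructor <;> rintro rfl <;> simp_all)
    refine le_trans (le_of_eq ?_) (this.trans ?_)
    · congr 1
      refine sum_congr rfl fun G _ => ?_
      simp only [hw, hxy, if_false, indProd_cons]
      ring
    · refine mul_le_mul_of_nonneg_right (mul_le_mul_of_nonneg_left ?_ hB)
        (sum_nonneg fun G _ => indProd_nonneg G _)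
      linarith [(Nat.cast_nonneg (deg K w) : (0 : ℝ) ≤ _)]
  calc _ = ∑ w, ∑ x, ∑ y, n * ∑ G ∈ fam d K, indProd G l *
        (if w = v then 0 else if x = y then 0 else
        ind G v x * ind G v y * ind G w y * res K G w x) := by
        simp_rw [← mul_sum]
        congr 1
        simp_rw [sum_comm (s := univ) (t := fam d K), ← mul_sum]
        refine sum_congr rfl fun G _ => ?_
        congr 1
        refine sum_congr rfl fun w _ => ?_
        split_ifs with hw
        · simp
        · rfl
    _ ≤ ∑ w, ∑ x, ∑ y, B * d * ∑ G ∈ fam d K, indProd G ((v, x) :: (v, y) :: (w, y) :: l) :=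
        sum_le_sum fun w _ => sum_le_sum fun x _ => sum_le_sum fun y _ => hterm w x y
    _ = B * d * ∑ G ∈ fam d K, d ^ 3 * indProd G l := by
        simp_rw [← mul_sum]
        congr 1
        simp_rw [sum_comm (s := univ) (t := fam d K)]
        rw [mul_sum]
        refine sum_congr rfl fun G hG => ?_
        rw [sum_comm]
        simp only [indProd_cons]
        have : ∀ x, ∑ w, ∑ y, ind G v x * (ind G v y * (ind G w y * indProd G l)) =
            ind G v x * (d ^ 2 * indProd G l) := by
          intro x
          rw [sum_comm]
          simp_rw [← mul_sum, ← sum_mul, sum_ind_right hG, ← sum_mul, sum_ind_left hG]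
          ring
        simp_rw [this, ← sum_mul, sum_ind_left hG]
        ring
    _ = _ := by rw [← mul_sum]; ring

/-- Upper bound for the total penalty at a vertex. -/
def bound (B : ℝ) (d : ℕ) (K : SimpleGraph (Fin n)) : ℝ :=
  12 * nedges K / d + 72 + 36 * B * d ^ 2 / n

lemma sum_codeg {d : ℕ} {K G : SimpleGraph (Fin n)} (hG : G ∈ fam d K) (v : Fin n) :
    ∑ w, codeg G v w = d ^ 2 := by
  simp only [codeg]
  rw [sum_comm]
  simp_rw [← mul_sum, sum_ind_right hG, ← sum_mul, sum_ind_left hG]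
  ring

lemma Loose.sum_penalty_le {B : ℝ} (hB : 0 ≤ B) {d : ℕ} (hd : 0 < d) (hn : 0 < n)
    {K : SimpleGraph (Fin n)}
    (v : Fin n) (l : List (Fin n × Fin n)) (hl : ∀ p ∈ l, p.2 = v)
    (h : Loose B d K (l.length + 3)) :
    ∑ G ∈ fam d K, indProd G l * ∑ w, penalty d K G v w ≤
      bound B d K * ∑ G ∈ fam d K, indProd G l := by
  have hd' : (1 : ℝ) ≤ d := by exact_mod_cast hd
  have hn' : (0 : ℝ) < n := by exact_mod_cast hn
  have h1 := Loose.sum_pairs_le hB hd v l hl h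
  have h2 : ∀ G ∈ fam d K, ∑ w, penalty d K G v w ≤ 12 * nedges K / d + 72 +
      36 / (d : ℝ) ^ 2 * ∑ w, (if w = v then 0 else pairs K G v w) := by
    intro G hG
    have hp : ∀ w, penalty d K G v w ≤ 6 / d * deg K w + 36 / (d : ℝ) ^ 2 * codeg G v w +
        36 / (d : ℝ) ^ 2 * ind G v w +
        36 / (d : ℝ) ^ 2 * (if w = v then 0 else pairs K G v w) := by
      intro w
      have a1 := codeg_nonneg G v w
      have a2 := ind_nonneg G v w
      unfold penalty
      split_ifs
      · positivity
      · apply le_of_eq; ring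
    refine (sum_le_sum fun w _ => hp w).trans ?_
    simp only [sum_add_distrib, ← mul_sum]
    rw [sum_codeg hG, sum_ind_left hG, sum_deg]
    have e1 : 36 / (d : ℝ) ^ 2 * d ^ 2 = 36 := by field_simp
    have e2 : 36 / (d : ℝ) ^ 2 * d ≤ 36 := by
      rw [div_mul_eq_mul_div, div_le_iff₀ (by positivity)]; nlinarith
    have e3 : 6 / (d : ℝ) * (2 * nedges K) = 12 * nedges K / d := by ring
    linarith
  have h3 : ∑ G ∈ fam d K, indProd G l * ∑ w, penalty d K G v w ≤
      (12 * nedges K / d + 72) * ∑ G ∈ fam d K, indProd G l +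
      36 / (d : ℝ) ^ 2 *
        ∑ G ∈ fam d K, indProd G l * ∑ w, (if w = v then 0 else pairs K G v w) := by
    rw [mul_sum, mul_sum, ← sum_add_distrib]
    refine sum_le_sum fun G hG => ?_
    refine (mul_le_mul_of_nonneg_left (h2 G hG) (indProd_nonneg G l)).trans (le_of_eq ?_)
    ring
  refine h3.trans ?_
  have h4 : ∑ G ∈ fam d K, indProd G l * ∑ w, (if w = v then 0 else pairs K G v w) ≤
      B * d ^ 4 * (∑ G ∈ fam d K, indProd G l) / n := by
    rw [le_div_iff₀ hn']; linarith
  have h5 := mul_le_mul_of_nonneg_left h4 (by positivity : (0 : ℝ) ≤ 36 / (d : ℝ) ^ 2)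
  have e : 36 / (d : ℝ) ^ 2 * (B * d ^ 4 * (∑ G ∈ fam d K, indProd G l) / n) =
      36 * B * d ^ 2 / n * ∑ G ∈ fam d K, indProd G l := by field_simp
  rw [e] at h5
  unfold bound
  linarith

lemma Loose.sum_res_mul_ind_le {B : ℝ} (hB : 0 ≤ B) {d : ℕ} (hd : 0 < d)
    {K : SimpleGraph (Fin n)} {u v : Fin n} (huv : u ≠ v) (h : Loose B d K 1) :
    n * ∑ G ∈ fam d K, ∑ w, res K G u w * ind G v w ≤ B * (d - deg K u) * (d * cnt d K) := by
  calc _ = ∑ w, n * ∑ G ∈ fam d K, res K G u w * ind G v w := by rw [sum_comm, mul_sum]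
    _ ≤ ∑ w, B * (d - deg K u) * ∑ G ∈ fam d K, ind G v w := by
      refine sum_le_sum fun w _ => ?_
      by_cases hw : v = w
      · simp [hw, ind_self]
      have := Loose.sum_indProd_mul_res_le hB hd u w [(v, w)] K h (by
        simp only [List.mem_singleton, forall_eq, ne_eq, Prod.mk.injEq]
        grind)
      simpa [indProd_cons, indProd_nil, mul_comm] using this
    _ = _ := by
      rw [← mul_sum, sum_comm]
      congr 1
      rw [sum_congr rfl fun G hG => sum_ind_left hG v]
      simp [cnt, mul_comm]

lemma Loose.sum_res_mul_codeg_le {B : ℝ} (hB : 0 ≤ B) {d : ℕ} (hd : 0 < d)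
    {K : SimpleGraph (Fin n)} {u v : Fin n} (huv : u ≠ v) (h : Loose B d K 2) :
    n * ∑ G ∈ fam d K, ∑ w, res K G u w * (1 - ind G u v) * codeg G v w ≤
      B * (d - deg K u) * (d ^ 2 * cnt d K) := by
  calc _ = ∑ w, ∑ x, n * ∑ G ∈ fam d K,
        res K G u w * (1 - ind G u v) * (ind G v x * ind G w x) := by
        simp_rw [← mul_sum]
        rw [sum_comm]
        congr 1
        refine sum_congr rfl fun w _ => ?_
        rw [sum_comm]
        refine sum_congr rfl fun G _ => ?_
        rw [← mul_sum, codeg]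
    _ ≤ ∑ w, ∑ x, B * (d - deg K u) * ∑ G ∈ fam d K, ind G v x * ind G w x := by
      refine sum_le_sum fun w _ => sum_le_sum fun x _ => ?_
      by_cases hx : x = u
      · subst hx
        have : ∀ G, res K G x w * (1 - ind G x v) * (ind G v x * ind G w x) = 0 := fun G => by
          rw [ind_comm G v x]
          by_cases hh : G.Adj x v <;> simp [ind, hh]
        simp_rw [this]
        rw [sum_const_zero, mul_zero]
        rcases (fam d K).eq_empty_or_nonempty with h0 | ⟨G, hG⟩
        · simp [h0]
        · exact mul_nonneg (mul_nonneg hB (sub_nonneg.2 (deg_le_of_mem hG x)))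
            (sum_nonneg fun G _ => mul_nonneg (ind_nonneg _ _ _) (ind_nonneg _ _ _))
      have := Loose.sum_indProd_mul_res_le hB hd u w [(v, x), (w, x)] K h (by
        simp only [List.mem_cons, List.not_mem_nil, or_false, ne_eq, forall_eq_or_imp, forall_eq,
          Prod.mk.injEq]
        grind)
      simp only [indProd_cons, indProd_nil, mul_one] at this
      refine le_trans (mul_le_mul_of_nonneg_left (sum_le_sum fun G hG => ?_)
        (Nat.cast_nonneg _)) this
      have r := res_nonneg (mem_fam.1 hG).2 u w
      have i1 := ind_nonneg G u v
      have i2 := mul_nonneg (ind_nonneg G v x) (ind_nonneg G w x)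
      have := mul_nonneg (mul_nonneg i2 r) i1
      linarith
    _ = _ := by
      simp_rw [← mul_sum]
      congr 1
      simp_rw [sum_comm (s := univ) (t := fam d K)]
      refine (sum_congr rfl fun G hG => sum_codeg hG v).trans ?_
      simp [cnt, mul_comm]

lemma Loose.sum_res_mul_pairs_le {B : ℝ} (hB : 0 ≤ B) {d : ℕ} (hd : 0 < d)
    {K : SimpleGraph (Fin n)} {u v : Fin n} (huv : u ≠ v) (h : Loose B d K 4) :
    n * ∑ G ∈ fam d K, ∑ w,
        res K G u w * (1 - ind G u v) * (if w = v then 0 else pairs K G v w) ≤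
      B * (d - deg K u) *
        ∑ G ∈ fam d K, ∑ w, (if w = v then 0 else pairs K G v w) := by
  set P : SimpleGraph (Fin n) → Fin n → Fin n → Fin n → ℝ := fun G w x y =>
    if w = v then 0 else if x = y then 0 else
        ind G v x * ind G v y * ind G w y * res K G w x with hP
  have eP : ∀ G w, (if w = v then 0 else pairs K G v w) = ∑ x, ∑ y, P G w x y := by
    intro G w
    simp only [hP, pairs]
    split_ifs <;> simp
  have P0 : ∀ G ∈ fam d K, ∀ w x y, 0 ≤ P G w x y := by
    intro G hG w x y
    have := ind_nonneg G v x
    have := ind_nonneg G v y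
    have := ind_nonneg G w y
    have := res_nonneg (mem_fam.1 hG).2 w x
    simp only [hP]
    split_ifs <;> positivity
  have hterm : ∀ w x y, n * ∑ G ∈ fam d K, res K G u w * (1 - ind G u v) * P G w x y ≤
      B * (d - deg K u) * ∑ G ∈ fam d K, P G w x y := by
    intro w x y
    have hR : 0 ≤ B * (d - deg K u) * ∑ G ∈ fam d K, P G w x y := by
      rcases (fam d K).eq_empty_or_nonempty with h0 | ⟨G, hG⟩
      · simp [h0]
      · exact mul_nonneg (mul_nonneg hB (sub_nonneg.2 (deg_le_of_mem hG u)))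
          (sum_nonneg fun G hG => P0 G hG _ _ _)
    have hzero : (∀ G ∈ fam d K, res K G u w * (1 - ind G u v) * P G w x y = 0) →
        n * ∑ G ∈ fam d K, res K G u w * (1 - ind G u v) * P G w x y ≤
      B * (d - deg K u) * ∑ G ∈ fam d K, P G w x y := fun h0 => by
        rw [sum_eq_zero h0, mul_zero]; exact hR
    by_cases hw : w = v
    · exact hzero fun G _ => by simp [hP, hw]
    by_cases hxy : x = y
    · exact hzero fun G _ => by simp [hP, hxy]
    by_cases hx : x = u
    · refine hzero fun G _ => ?_
      simp only [hP, hx, ind_comm G v u]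
      by_cases hh : G.Adj u v <;> simp [ind, hh]
    by_cases hy : y = u
    · refine hzero fun G _ => ?_
      simp only [hP, hy, ind_comm G v u]
      by_cases hh : G.Adj u v <;> simp [ind, hh]
    by_cases hwx : K.Adj w x
    · refine hzero fun G hG => ?_
      have := (mem_fam.1 hG).2 hwx
      simp [hP, res, ind, hwx, this]
    have := Loose.sum_indProd_mul_res_le hB hd u w [(v, x), (v, y), (w, y), (w, x)] K h (by
        simp only [List.mem_cons, List.not_mem_nil, or_false, ne_eq, forall_eq_or_imp, forall_eq,
          Prod.mk.injEq]
        grind)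
    have e : ∀ G, indProd G [(v, x), (v, y), (w, y), (w, x)] = P G w x y := by
      intro G
      have : res K G w x = ind G w x := by simp [res, ind, hwx]
      simp only [hP, hw, hxy, if_false, this, indProd_cons, indProd_nil]
      ring
    simp only [e] at this
    refine le_trans (mul_le_mul_of_nonneg_left (sum_le_sum fun G hG => ?_)
        (Nat.cast_nonneg _)) this
    have r := res_nonneg (mem_fam.1 hG).2 u w
    have := mul_nonneg (mul_nonneg (P0 G hG w x y) r) (ind_nonneg G u v)
    linarith
  simp_rw [eP]
  calc _ = ∑ w, ∑ x, ∑ y, n * ∑ G ∈ fam d K, res K G u w * (1 - ind G u v) * P G w x y := by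
        simp_rw [← mul_sum]
        congr 1
        simp_rw [sum_comm (s := univ) (t := fam d K), ← mul_sum]
    _ ≤ ∑ w, ∑ x, ∑ y, B * (d - deg K u) * ∑ G ∈ fam d K, P G w x y :=
        sum_le_sum fun w _ => sum_le_sum fun x _ => sum_le_sum fun y _ => hterm w x y
    _ = _ := by
        simp_rw [← mul_sum]
        congr 1
        simp_rw [sum_comm (s := univ) (t := fam d K)]

lemma Loose.sum_res_mul_penalty_le {B : ℝ} (hB : 0 ≤ B) {d : ℕ} (hd : 0 < d) (hn : 0 < n)
    {K : SimpleGraph (Fin n)} {u v : Fin n} (huv : u ≠ v) (h : Loose B d K 4) :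
    n * ∑ G ∈ fam d K, ∑ w, res K G u w * (1 - ind G u v) * penalty d K G v w ≤
      B * (d - deg K u) * (bound B d K * cnt d K) := by
  have hd' : (1 : ℝ) ≤ d := by exact_mod_cast hd
  have hn' : (0 : ℝ) < n := by exact_mod_cast hn
  rcases (fam d K).eq_empty_or_nonempty with h0 | ⟨G₀, hG₀⟩
  · simp [h0, cnt]
  have hg : 0 ≤ B * ((d : ℝ) - deg K u) := mul_nonneg hB (sub_nonneg.2 (deg_le_of_mem hG₀ u))
  have h1 := Loose.sum_res_mul_ind_le hB hd huv (h.mono hB (by norm_num))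
  have h2 := Loose.sum_res_mul_codeg_le hB hd huv (h.mono hB (by norm_num))
  have h3 := Loose.sum_res_mul_pairs_le hB hd huv h
  have h4 := Loose.sum_pairs_le hB hd v [] (by simp) (h.mono hB (by norm_num))
  simp only [indProd_nil, one_mul, sum_const, nsmul_eq_mul, mul_one] at h4
  have h5 : n * ∑ G ∈ fam d K, ∑ w, res K G u w * deg K w ≤
      B * (d - deg K u) * (2 * nedges K * cnt d K) := by
    calc _ = ∑ w, (deg K w : ℝ) * (n * ∑ G ∈ fam d K, res K G u w) := by
          rw [sum_comm, mul_sum]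
          refine sum_congr rfl fun w _ => ?_
          rw [← sum_mul]; ring
      _ ≤ ∑ w, (deg K w : ℝ) * (B * (d - deg K u) * cnt d K) :=
          sum_le_sum fun w _ => mul_le_mul_of_nonneg_left
            (Loose.mul_sum_res_le hB hd (h.mono hB (by norm_num)) u w) (Nat.cast_nonneg _)
      _ = _ := by rw [← sum_mul, sum_deg]; ring
  have hp : ∀ G ∈ fam d K, ∀ w, res K G u w * (1 - ind G u v) * penalty d K G v w ≤
      6 / d * (res K G u w * deg K w) +
      36 / (d : ℝ) ^ 2 * (res K G u w * (1 - ind G u v) * codeg G v w) +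
      36 / (d : ℝ) ^ 2 * (res K G u w * ind G v w) +
      36 / (d : ℝ) ^ 2 *
        (res K G u w * (1 - ind G u v) * (if w = v then 0 else pairs K G v w)) := by
    intro G hG w
    have a1 := codeg_nonneg G v w
    have a2 := ind_nonneg G v w
    have r := res_nonneg (mem_fam.1 hG).2 u w
    have i0 := ind_nonneg G u v
    have i1 : 0 ≤ 1 - ind G u v := by linarith [ind_le_one G u v]
    unfold penalty
    split_ifs
    · simp only [mul_zero]; positivity
    · have m1 : res K G u w * (1 - ind G u v) * deg K w ≤ res K G u w * deg K w := by
        have : 0 ≤ res K G u w * ind G u v * deg K w := by positivity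
        linarith
      have m2 : res K G u w * (1 - ind G u v) * ind G v w ≤ res K G u w * ind G v w := by
        have : 0 ≤ res K G u w * ind G u v * ind G v w := by positivity
        linarith
      have m3 := mul_le_mul_of_nonneg_left m1 (by positivity : 0 ≤ 6 / (d : ℝ))
      have m4 := mul_le_mul_of_nonneg_left m2 (by positivity : 0 ≤ 36 / (d : ℝ) ^ 2)
      linarith
  have h6 := sum_le_sum fun G hG => sum_le_sum fun w (_ : w ∈ univ) => hp G hG w
  simp only [sum_add_distrib, ← mul_sum] at h6
  have e1 : 36 / (d : ℝ) ^ 2 * d ^ 2 = 36 := by field_simp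
  have e2 : 36 / (d : ℝ) ^ 2 * d ≤ 36 := by
    rw [div_mul_eq_mul_div, div_le_iff₀ (by positivity)]; nlinarith
  set S := ∑ G ∈ fam d K, ∑ w, (if w = v then 0 else pairs K G v w)
  set N := cnt d K with hN
  set g := B * ((d : ℝ) - deg K u)
  have hN0 : 0 ≤ N := cnt_nonneg _ _
  have hS : S ≤ B * d ^ 4 * N / n := by rw [le_div_iff₀ hn', hN, cnt]; linarith
  have h7 := mul_le_mul_of_nonneg_left hS hg
  have q : (0 : ℝ) ≤ 36 / (d : ℝ) ^ 2 := by positivity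
  have k1 := mul_le_mul_of_nonneg_left h5 (by positivity : 0 ≤ 6 / (d : ℝ))
  have k2 := mul_le_mul_of_nonneg_left h2 q
  have k3 := mul_le_mul_of_nonneg_left h1 q
  have k4 := mul_le_mul_of_nonneg_left (h3.trans h7) q
  have k5 := mul_le_mul_of_nonneg_left h6 hn'.le
  have f1 : 6 / (d : ℝ) * (g * (2 * nedges K * N)) = g * (12 * nedges K / d * N) := by ring
  have f2 : 36 / (d : ℝ) ^ 2 * (g * (d ^ 2 * N)) = g * (36 * N) := by
    calc _ = 36 / (d : ℝ) ^ 2 * d ^ 2 * (g * N) := by ring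
      _ = _ := by rw [e1]; ring
  have f3 : 36 / (d : ℝ) ^ 2 * (g * (d * N)) ≤ g * (36 * N) := by
    calc _ = (36 / (d : ℝ) ^ 2 * d) * (g * N) := by ring
      _ ≤ 36 * (g * N) := mul_le_mul_of_nonneg_right e2 (mul_nonneg hg hN0)
      _ = _ := by ring
  have f4 : 36 / (d : ℝ) ^ 2 * (g * (B * d ^ 4 * N / n)) = g * (36 * B * d ^ 2 / n * N) := by
    field_simp
  unfold bound
  linarith

/-- The total loss in switching edges `uv` of `G` to `uw`, due to edges of `K` at `w`. -/
def lossIn (d : ℕ) (K : SimpleGraph (Fin n)) (u v : Fin n) : ℝ :=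
  ∑ G ∈ fam d K, ∑ w, ind G u v * nonadj G u w * (kap K G w v / sep d G v w)

/-- The total loss in switching edges `uw` of `G` to `uv`, due to edges of `K` at `v`. -/
def lossOut (d : ℕ) (K : SimpleGraph (Fin n)) (u v : Fin n) : ℝ :=
  ∑ G ∈ fam d K, ∑ w, res K G u w * (1 - ind G u v) * (kap K G v w / sep d G v w)

lemma sep_nonneg {d : ℕ} {K G : SimpleGraph (Fin n)} (h : G ∈ fam d K) (v w : Fin n) :
    0 ≤ sep d G v w :=
  (kap_nonneg K G w v).trans (kap_le_sep h v w)

lemma sum_nonadj {d : ℕ} {K G : SimpleGraph (Fin n)} (h : G ∈ fam d K) (u : Fin n) :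
    ∑ w, nonadj G u w = n - 1 - d := by
  simp only [nonadj, sum_sub_distrib, sum_ind_left h, sum_ite_eq, mem_univ, if_true, sum_const,
    card_univ, Fintype.card_fin, nsmul_eq_mul, mul_one]
  ring

/-- The double count of the switchings moving the edge `uv`. -/
lemma edge_balance (d : ℕ) {K : SimpleGraph (Fin n)} {u v : Fin n} (hu : u ≠ v)
    (kuv : ¬ K.Adj u v) :
    (n - 1 - deg K u) * ∑ G ∈ fam d K, ind G u v =
      (d - deg K u) * cnt d K + lossIn d K u v - lossOut d K u v := by
  have key : ∀ w, ∑ G ∈ fam d K, (ind G u v * nonadj G u w -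
        ind G u v * nonadj G u w * (kap K G w v / sep d G v w)) =
      ∑ G ∈ fam d K, (res K G u w * (1 - ind G u v) -
        res K G u w * (1 - ind G u v) * (kap K G v w / sep d G v w)) := by
    intro w
    have h := nonadj_mul_sum_switch d hu kuv (fun s => s⁻¹) w
    rw [mul_sum, mul_sum] at h
    refine Eq.trans ?_ (h.trans ?_)
    · refine sum_congr rfl fun G hG => ?_
      have e := nonadj_mul_one_sub_ind (mem_fam.1 hG).2 u w
      by_cases h0 : ind G u v * nonadj G u w = 0
      · calc _ = 0 := by rw [h0]; ring
          _ = ind G u v * nonadj G u w * ((sep d G v w - kap K G w v) * (sep d G v w)⁻¹) := by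
            rw [h0, zero_mul]
          _ = _ := by rw [← e]; ring
      · have h1 : G.Adj u v := by by_contra h; simp [ind, h] at h0
        have h2 : u ≠ w := by rintro rfl; simp [nonadj, ind_self] at h0
        have h3 : ¬ G.Adj u w := fun h => by simp [nonadj, ind, h, h2] at h0
        have hs := (sep_pos hG h2 h1 h3).ne'
        rw [← e]
        field_simp
    · refine sum_congr rfl fun G hG => ?_
      have e := nonadj_mul_ind (mem_fam.1 hG).2 u w
      by_cases h0 : res K G u w * (1 - ind G u v) = 0
      · calc _ = res K G u w * (1 - ind G u v) *
              ((sep d G v w - kap K G v w) * (sep d G v w)⁻¹) := by rw [← e]; ring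
          _ = _ := by rw [h0]; ring
      · have h1 : ¬ G.Adj u v := fun h => by simp [ind, h] at h0
        have h3 : G.Adj u w := by
          by_contra h
          have : ¬ K.Adj u w := fun hh => h ((mem_fam.1 hG).2 hh)
          simp [res, ind, h, this] at h0
        have hs : sep d G v w ≠ 0 := by
          rw [sep_comm]; exact (sep_pos hG hu h3 h1).ne'
        rw [← e]
        field_simp
  have h := sum_congr rfl fun w (_ : w ∈ univ) => key w
  rw [sum_comm, sum_comm (s := univ)] at h
  simp only [sum_sub_distrib] at h
  have e1 : ∑ G ∈ fam d K, ∑ w, ind G u v * nonadj G u w =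
      (n - 1 - d) * ∑ G ∈ fam d K, ind G u v := by
    rw [mul_sum]
    refine sum_congr rfl fun G hG => ?_
    rw [← mul_sum, sum_nonadj hG]; ring
  have e2 : ∑ G ∈ fam d K, ∑ w, res K G u w * (1 - ind G u v) =
      (d - deg K u) * (cnt d K - ∑ G ∈ fam d K, ind G u v) := by
    have hc : cnt d K = ∑ G ∈ fam d K, (1 : ℝ) := by simp [cnt]
    rw [hc, ← sum_sub_distrib, mul_sum]
    refine sum_congr rfl fun G hG => ?_
    rw [← sum_mul, sum_res hG]
  rw [e1, e2] at h
  unfold lossIn lossOut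
  linarith

lemma lossIn_nonneg (d : ℕ) (K : SimpleGraph (Fin n)) (u v : Fin n) : 0 ≤ lossIn d K u v :=
  sum_nonneg fun _ hG => sum_nonneg fun _ _ => mul_nonneg
    (mul_nonneg (ind_nonneg _ _ _) (nonadj_nonneg _ _ _))
    (div_nonneg (kap_nonneg _ _ _ _) (sep_nonneg hG _ _))

lemma Loose.mul_sum_ind_le {B : ℝ} (hB : 0 ≤ B) {d : ℕ} (hd : 0 < d) {K : SimpleGraph (Fin n)}
    (h : Loose B d K 0) {u v : Fin n} (kuv : ¬ K.Adj u v) :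
    n * ∑ G ∈ fam d K, ind G u v ≤ B * (d - deg K u) * cnt d K := by
  simpa [res, ind, kuv] using h.mul_sum_res_le hB hd u v

lemma Loose.lossIn_le {B : ℝ} (hB : 0 ≤ B) {d : ℕ} (hd : 0 < d) (hn : 0 < n)
    {K : SimpleGraph (Fin n)} {u v : Fin n} (h : Loose B d K 4) :
    lossIn d K u v ≤ 2 * bound B d K * ∑ G ∈ fam d K, ind G u v := by
  have h1 := Loose.sum_penalty_le hB hd hn v [(u, v)] (by simp) h
  simp only [indProd_cons, indProd_nil, mul_one] at h1
  calc _ ≤ 2 * ∑ G ∈ fam d K, ind G u v * ∑ w, penalty d K G v w := by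
        rw [mul_sum]
        refine sum_le_sum fun G hG => ?_
        rw [mul_sum, mul_sum]
        refine sum_le_sum fun w _ => ?_
        have hp := penalty_nonneg d (mem_fam.1 hG).2 v w
        have hi := ind_nonneg G u v
        by_cases h0 : ind G u v * nonadj G u w = 0
        · rw [h0, zero_mul]; positivity
        · have h1 : G.Adj u v := by by_contra h; simp [ind, h] at h0
          have h2 : u ≠ w := by rintro rfl; simp [nonadj, ind_self] at h0
          have h3 : ¬ G.Adj u w := fun h => by simp [nonadj, ind, h, h2] at h0
          have h4 : v ≠ w := by rintro rfl; exact h3 h1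
          calc _ ≤ ind G u v * 1 * (2 * penalty d K G v w) := by
                have := nonadj_nonneg G u w
                have := div_nonneg (kap_nonneg K G w v) (sep_nonneg hG v w)
                exact mul_le_mul (mul_le_mul_of_nonneg_left (nonadj_le_one _ _ _) hi)
                  (kap_div_sep_le_penalty hd hG h4 (sep_pos hG h2 h1 h3)) this (by positivity)
            _ = _ := by ring
    _ ≤ _ := by linarith

lemma Loose.lossOut_le {B : ℝ} (hB : 0 ≤ B) {d : ℕ} (hd : 0 < d) (hn : 0 < n)
    {K : SimpleGraph (Fin n)} {u v : Fin n} (hu : u ≠ v) (h : Loose B d K 4) :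
    n * lossOut d K u v ≤ (d - deg K u) * cnt d K *
      (deg K v * n / d + 4 * B * deg K v + B * bound B d K) := by
  have hd' : (1 : ℝ) ≤ d := by exact_mod_cast hd
  rcases (fam d K).eq_empty_or_nonempty with h0 | ⟨G₀, hG₀⟩
  · simp [lossOut, h0, cnt]
  have hg : 0 ≤ (d : ℝ) - deg K u := sub_nonneg.2 (deg_le_of_mem hG₀ u)
  have h1 := Loose.sum_res_mul_ind_le hB hd hu (h.mono hB (by norm_num))
  have h2 := Loose.sum_res_mul_codeg_le hB hd hu (h.mono hB (by norm_num))
  have h3 := Loose.sum_res_mul_penalty_le hB hd hn hu h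
  have ht : ∀ G ∈ fam d K, ∀ w,
      res K G u w * (1 - ind G u v) * (kap K G v w / sep d G v w) ≤
      deg K v / d * res K G u w +
      2 * deg K v / (d : ℝ) ^ 2 * (res K G u w * (1 - ind G u v) * codeg G v w) +
      2 * deg K v / (d : ℝ) ^ 2 * (res K G u w * ind G v w) +
      res K G u w * (1 - ind G u v) * penalty d K G v w := by
    intro G hG w
    have a1 := codeg_nonneg G v w
    have a2 := ind_nonneg G v w
    have r := res_nonneg (mem_fam.1 hG).2 u w
    have i0 := ind_nonneg G u v
    have i1 : 0 ≤ 1 - ind G u v := by linarith [ind_le_one G u v]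
    have hp := penalty_nonneg d (mem_fam.1 hG).2 v w
    by_cases h0 : res K G u w * (1 - ind G u v) = 0
    · rw [h0]; simp only [zero_mul]; positivity
    have n1 : ¬ G.Adj u v := fun h => by simp [ind, h] at h0
    have n3 : G.Adj u w := by
      by_contra h
      have : ¬ K.Adj u w := fun hh => h ((mem_fam.1 hG).2 hh)
      simp [res, ind, h, this] at h0
    have hvw : v ≠ w := by rintro rfl; exact n1 n3
    have hs : 0 < sep d G v w := by rw [sep_comm]; exact sep_pos hG hu n3 n1
    have e : ind G u v = 0 := by simp [ind, n1]
    have := mul_le_mul_of_nonneg_left (kap_div_sep_le hd hG hvw hs) r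
    rw [e]
    linarith
  have h6 := sum_le_sum fun G hG => sum_le_sum fun w (_ : w ∈ univ) => ht G hG w
  simp only [sum_add_distrib, ← mul_sum] at h6
  have h7 : ∑ G ∈ fam d K, ∑ w, res K G u w = (d - deg K u) * cnt d K := by
    rw [sum_congr rfl fun G hG => sum_res hG u, sum_const, nsmul_eq_mul, cnt, mul_comm]
  rw [h7] at h6
  have q : (0 : ℝ) ≤ 2 * deg K v / (d : ℝ) ^ 2 := by positivity
  have k1 := mul_le_mul_of_nonneg_left h1 q
  have k2 := mul_le_mul_of_nonneg_left h2 q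
  have k5 := mul_le_mul_of_nonneg_left h6 (Nat.cast_nonneg n : (0 : ℝ) ≤ n)
  set N := cnt d K with hN
  have hN0 : 0 ≤ N := cnt_nonneg _ _
  set g := (d : ℝ) - deg K u
  have f1 : 2 * deg K v / (d : ℝ) ^ 2 * (B * g * (d ^ 2 * N)) = 2 * deg K v * B * (g * N) := by
    field_simp
  have f2 : 2 * deg K v / (d : ℝ) ^ 2 * (B * g * (d * N)) ≤ 2 * deg K v * B * (g * N) := by
    rw [← f1]
    gcongr
    nlinarith
  have f3 : n * (deg K v / d * (g * N)) = g * N * (deg K v * n / d) := by ring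
  unfold lossOut
  linarith

lemma Loose.le_lossOut {B : ℝ} (hB : 0 ≤ B) {d : ℕ} (hd : 0 < d)
    {K : SimpleGraph (Fin n)} {u v : Fin n} (kuv : ¬ K.Adj u v) (h : Loose B d K 1) :
    (d - deg K u) * cnt d K * (deg K v * n / d - 3 * B * deg K v) ≤ n * lossOut d K u v := by
  have hd' : (1 : ℝ) ≤ d := by exact_mod_cast hd
  rcases (fam d K).eq_empty_or_nonempty with h0 | ⟨G₀, hG₀⟩
  · simp [lossOut, h0, cnt]
  have hg : 0 ≤ (d : ℝ) - deg K u := sub_nonneg.2 (deg_le_of_mem hG₀ u)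
  have hT : n * ∑ G ∈ fam d K, ∑ x, ind K v x * (∑ w, res K G u w * ind G x w + res K G u x) ≤
      deg K v * (B * (d - deg K u) * ((d + 1) * cnt d K)) := by
    calc _ = ∑ x, ind K v x * (n * ∑ G ∈ fam d K, ∑ w, res K G u w * ind G x w +
          n * ∑ G ∈ fam d K, res K G u x) := by
          rw [sum_comm, mul_sum]
          refine sum_congr rfl fun x _ => ?_
          rw [← mul_sum, sum_add_distrib]; ring
      _ ≤ ∑ x, ind K v x * (B * (d - deg K u) * ((d + 1) * cnt d K)) := by
          refine sum_le_sum fun x _ => ?_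
          by_cases hx : u = x
          · subst hx
            have : ¬ K.Adj v u := fun h => kuv h.symm
            simp [ind, this]
          · have h1 := Loose.sum_res_mul_ind_le hB hd hx h
            have h2 := Loose.mul_sum_res_le hB hd (h.mono hB (by norm_num)) u x
            refine mul_le_mul_of_nonneg_left ?_ (ind_nonneg _ _ _)
            linarith
      _ = _ := by rw [← sum_mul, ← deg_eq_sum]
  have hx : ∀ G ∈ fam d K, deg K v * (d - deg K u) * (1 - ind G u v) -
      ∑ x, ind K v x * (∑ w, res K G u w * ind G x w + res K G u x) ≤
      d * ∑ w, res K G u w * (1 - ind G u v) * (kap K G v w / sep d G v w) := by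
    intro G hG
    have i0 := ind_nonneg G u v
    have i1 : 0 ≤ 1 - ind G u v := by linarith [ind_le_one G u v]
    have e : ∑ w, res K G u w * kap K G v w = deg K v * (d - deg K u) -
        ∑ x, ind K v x * (∑ w, res K G u w * ind G x w + res K G u x) := by
      rw [deg_eq_sum, sum_mul, ← sum_sub_distrib]
      simp only [kap, mul_sum]
      rw [sum_comm]
      refine sum_congr rfl fun x _ => ?_
      rw [← sum_res hG u, ← mul_sub, ← sub_sub, ← sum_sub_distrib]
      have : res K G u x = ∑ w, if w = x then res K G u w else 0 := by simp
      rw [this, ← sum_sub_distrib, mul_sum]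
      refine sum_congr rfl fun w _ => ?_
      rw [nonadj, ind_comm G w x]
      split_ifs <;> ring
    have hS : 0 ≤ ∑ x, ind K v x * (∑ w, res K G u w * ind G x w + res K G u x) :=
      sum_nonneg fun x _ => mul_nonneg (ind_nonneg _ _ _) (add_nonneg (sum_nonneg fun w _ =>
        mul_nonneg (res_nonneg (mem_fam.1 hG).2 _ _) (ind_nonneg _ _ _))
        (res_nonneg (mem_fam.1 hG).2 _ _))
    calc _ ≤ (1 - ind G u v) * ∑ w, res K G u w * kap K G v w := by
          rw [e]
          nlinarith
      _ ≤ _ := by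
          rw [mul_sum, mul_sum]
          refine sum_le_sum fun w _ => ?_
          have r := res_nonneg (mem_fam.1 hG).2 u w
          have hk := kap_nonneg K G v w
          have hs := sep_nonneg hG v w
          have : kap K G v w ≤ d * (kap K G v w / sep d G v w) := by
            rcases hs.eq_or_lt with h0 | h0
            · have := kap_le_sep hG w v
              rw [sep_comm] at this
              rw [← h0] at this ⊢
              simpa using this
            · rw [mul_div_assoc', le_div_iff₀ h0, mul_comm]
              exact mul_le_mul_of_nonneg_right (sep_le G v w) hk
          have := mul_le_mul_of_nonneg_left this (mul_nonneg r i1)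
          linarith
  have h4 := sum_le_sum hx
  rw [sum_sub_distrib, ← mul_sum, sum_sub_distrib, ← mul_sum, sum_const, nsmul_one] at h4
  have h5 := Loose.mul_sum_ind_le hB hd (h.mono hB (by norm_num)) kuv
  change _ ≤ d * lossOut d K u v at h4
  change (deg K v : ℝ) * _ * (cnt d K - _) - _ ≤ _ at h4
  set N := cnt d K with hN
  have hN0 : 0 ≤ N := cnt_nonneg _ _
  have hgd : (d : ℝ) - deg K u ≤ d := by linarith [(Nat.cast_nonneg (deg K u) : (0 : ℝ) ≤ _)]
  set g := (d : ℝ) - deg K u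
  set k : ℝ := (deg K v : ℝ)
  have hk : 0 ≤ k := Nat.cast_nonneg _
  have h6 := mul_le_mul_of_nonneg_left h4 (Nat.cast_nonneg n : (0 : ℝ) ≤ n)
  have h7 := mul_le_mul_of_nonneg_left h5 (mul_nonneg hk hg)
  have h8 : k * g * (B * g * N) + k * (B * g * ((d + 1) * N)) ≤ 3 * d * (B * k * g * N) := by
    have : 0 ≤ B * k * g * N := by positivity
    nlinarith
  refine le_of_mul_le_mul_left ?_ (by linarith : (0 : ℝ) < d)
  have e : d * (g * N * (k * n / d - 3 * B * k)) = k * g * N * n - 3 * d * (B * k * g * N) := by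
    field_simp
  rw [e]
  linarith

lemma Loose.mul_sum_ind_le_main {B : ℝ} (hB : 0 ≤ B) {d : ℕ} (hd : 0 < d) (hn : 0 < n)
    {K : SimpleGraph (Fin n)} {u v : Fin n} (hu : u ≠ v) (kuv : ¬ K.Adj u v)
    (h : Loose B d K 4) :
    (n - 1 - deg K u) * ∑ G ∈ fam d K, ind G u v ≤ (d - deg K u) * cnt d K *
      (1 - deg K v / d + 3 * B * deg K v / n + 2 * B * bound B d K / n) := by
  have hn' : (0 : ℝ) < n := by exact_mod_cast hn
  have h1 := Loose.lossIn_le (u := u) (v := v) hB hd hn h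
  have h2 := Loose.le_lossOut hB hd kuv (h.mono hB (by norm_num))
  have h3 := Loose.mul_sum_ind_le hB hd (h.mono hB (by norm_num)) kuv
  rw [edge_balance d hu kuv]
  have hb : 0 ≤ bound B d K := by unfold bound; positivity
  have h4 := mul_le_mul_of_nonneg_left h3 (mul_nonneg zero_le_two hb)
  have h5 := mul_le_mul_of_nonneg_left h1 hn'.le
  refine le_of_mul_le_mul_left ?_ hn'
  have e : n * ((d - deg K u) * cnt d K *
      (1 - deg K v / d + 3 * B * deg K v / n + 2 * B * bound B d K / n)) =
      (d - deg K u) * cnt d K * (n - deg K v * n / d + 3 * B * deg K v + 2 * B * bound B d K) := by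
    field_simp
  rw [e]
  linarith

lemma Loose.le_mul_sum_ind_main {B : ℝ} (hB : 0 ≤ B) {d : ℕ} (hd : 0 < d) (hn : 0 < n)
    {K : SimpleGraph (Fin n)} {u v : Fin n} (hu : u ≠ v) (kuv : ¬ K.Adj u v)
    (h : Loose B d K 4) :
    (d - deg K u) * cnt d K * (1 - deg K v / d - 4 * B * deg K v / n - B * bound B d K / n) ≤
      (n - 1 - deg K u) * ∑ G ∈ fam d K, ind G u v := by
  have hn' : (0 : ℝ) < n := by exact_mod_cast hn
  have h1 := lossIn_nonneg d K u v
  have h2 := Loose.lossOut_le hB hd hn hu h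
  rw [edge_balance d hu kuv]
  have h5 := mul_nonneg hn'.le h1
  refine le_of_mul_le_mul_left ?_ hn'
  have e : n * ((d - deg K u) * cnt d K *
      (1 - deg K v / d - 4 * B * deg K v / n - B * bound B d K / n)) =
      (d - deg K u) * cnt d K * (n - deg K v * n / d - 4 * B * deg K v - B * bound B d K) := by
    field_simp
  rw [e]
  linarith

lemma fam_anti (d : ℕ) {K K' : SimpleGraph (Fin n)} (h : K ≤ K') : fam d K' ⊆ fam d K :=
  fun _ hG => mem_fam.2 ⟨(mem_fam.1 hG).1, h.trans (mem_fam.1 hG).2⟩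

lemma cnt_anti (d : ℕ) {K K' : SimpleGraph (Fin n)} (h : K ≤ K') : cnt d K' ≤ cnt d K :=
  Nat.cast_le.2 (card_le_card (fam_anti d h))

lemma nedges_mono {K K' : SimpleGraph (Fin n)} (h : K ≤ K') : (nedges K : ℝ) ≤ nedges K' :=
  Nat.cast_le.2 (Set.ncard_le_ncard (SimpleGraph.edgeSet_mono h) (Set.toFinite _))

lemma nedges_sup_le (K K' : SimpleGraph (Fin n)) : (nedges (K ⊔ K') : ℝ) ≤ nedges K + nedges K' := by
  unfold nedges
  rw [SimpleGraph.edgeSet_sup]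
  exact_mod_cast Set.ncard_union_le _ _

lemma deg_le_two_mul_nedges (K : SimpleGraph (Fin n)) (v : Fin n) :
    (deg K v : ℝ) ≤ 2 * nedges K := by
  rw [← sum_deg]
  exact single_le_sum (f := fun v => (deg K v : ℝ)) (fun _ _ => Nat.cast_nonneg _) (mem_univ v)

lemma cnt_sup_edge (d : ℕ) (K : SimpleGraph (Fin n)) {u v : Fin n} (huv : u ≠ v) :
    cnt d (K ⊔ SimpleGraph.edge u v) = ∑ G ∈ fam d K, ind G u v := by
  have := sum_fam_ind_mul (d := d) K huv fun _ => 1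
  simpa [cnt, eq_comm] using this

lemma Loose.anti {B : ℝ} (hB : 0 ≤ B) {d : ℕ} {K K' : SimpleGraph (Fin n)} {j : ℕ} (hK : K ≤ K')
    (h : Loose B d K' j) : Loose B d K j := by
  refine le_trans h (mul_le_mul_of_nonneg_left ?_ hB)
  have := nedges_mono hK
  linarith

/-- The order of magnitude of the relative error. -/
def err (d : ℕ) (H : SimpleGraph (Fin n)) : ℝ :=
  1 / (n : ℝ) + (nedges H : ℝ) / ((d : ℝ) * n) + (d : ℝ) ^ 2 / (n : ℝ) ^ 2

lemma err_nonneg (d : ℕ) (H : SimpleGraph (Fin n)) : 0 ≤ err d H := by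
  unfold err; positivity

/-- The constant in the error bounds for a single edge. -/
def edgeConst (B L : ℝ) : ℝ := 8 * B * L + 2 * B * (12 * L + 84 + 36 * B)

lemma bound_div_le {B L : ℝ} (hB : 0 ≤ B) {d : ℕ} (hd : 0 < d) (hn : 0 < n)
    (H : SimpleGraph (Fin n)) {K : SimpleGraph (Fin n)} (hL : 0 ≤ L)
    (hK : (nedges K : ℝ) ≤ nedges H + L) :
    bound B d K / n ≤ (12 * L + 84 + 36 * B) * err d H := by
  have hd' : (1 : ℝ) ≤ d := by exact_mod_cast hd
  have hn' : (0 : ℝ) < n := by exact_mod_cast hn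
  have h1 : (nedges K : ℝ) / (d * n) ≤ nedges H / (d * n) + L * (1 / n) := by
    calc (nedges K : ℝ) / (d * n) ≤ (nedges H + L) / (d * n) := by gcongr
      _ = nedges H / (d * n) + L / (d * n) := add_div _ _ _
      _ ≤ nedges H / (d * n) + L / (1 * n) := by gcongr
      _ = _ := by ring
  have e : bound B d K / n = 12 * ((nedges K : ℝ) / (d * n)) + 72 * (1 / n) +
      36 * B * (d ^ 2 / n ^ 2) := by
    unfold bound; field_simp
  have x1 : (0 : ℝ) ≤ 1 / n := by positivity
  have x2 : (0 : ℝ) ≤ nedges H / (d * n) := by positivity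
  have x3 : (0 : ℝ) ≤ (d : ℝ) ^ 2 / n ^ 2 := by positivity
  rw [e, err]
  have := mul_nonneg hL x2
  have := mul_nonneg hL x3
  have := mul_nonneg hB x1
  have := mul_nonneg hB x2
  linarith

/-- Containing `H` hardly makes a further edge more likely. -/
lemma cnt_sup_edge_mul_le {B L : ℝ} (hB : 0 < B) (hL : 1 ≤ L) {d : ℕ} (hd : 0 < d) (hn : 0 < n)
    {H F : SimpleGraph (Fin n)} {u v : Fin n} (hu : u ≠ v) (kuv : ¬ (H ⊔ F).Adj u v)
    (hF : (nedges F : ℝ) ≤ L) (h : Loose B d (H ⊔ F) 4) (h3 : 3 * B * d ≤ n)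
    (hdn : (d : ℝ) + 1 ≤ n)
    (hE : edgeConst B L * err d (⊥ : SimpleGraph (Fin n)) * (2 * (2 * L + 1)) ≤ 1) :
    cnt d (H ⊔ F ⊔ SimpleGraph.edge u v) * cnt d F ≤
      (1 + 4 * edgeConst B L * (2 * L + 1) * err d H) *
        (cnt d (F ⊔ SimpleGraph.edge u v) * cnt d (H ⊔ F)) := by
  have hd' : (1 : ℝ) ≤ d := by exact_mod_cast hd
  have hn' : (0 : ℝ) < n := by exact_mod_cast hn
  have hR : 0 ≤ edgeConst B L := by unfold edgeConst; positivity
  have herr := err_nonneg d H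
  rcases (fam d (H ⊔ F ⊔ SimpleGraph.edge u v)).eq_empty_or_nonempty with h0 | ⟨G, hG⟩
  · have : cnt d (H ⊔ F ⊔ SimpleGraph.edge u v) = 0 := by simp [cnt, h0]
    rw [this, zero_mul]
    have := cnt_nonneg d (H ⊔ F)
    have := cnt_nonneg d (F ⊔ SimpleGraph.edge u v)
    positivity
  have hk : ∀ w, ¬ (H ⊔ F).Adj w (if w = u then v else u) → (w = u ∨ w = v) →
      (deg (H ⊔ F) w : ℝ) + 1 ≤ d := by
    intro w hw hwuv
    have hKG : (H ⊔ F) ≤ G := le_sup_left.trans (mem_fam.1 hG).2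
    have hGa : G.Adj w (if w = u then v else u) := by
      have : G.Adj u v := (mem_fam.1 hG).2 (Or.inr (by simp [SimpleGraph.edge_adj, hu]))
      rcases hwuv with rfl | rfl
      · simpa using this
      · simpa [hu.symm] using this.symm
    have hl : deg (H ⊔ F) w < deg G w := by
      refine Set.ncard_lt_ncard ?_ (Set.toFinite _)
      refine ⟨fun x hx => hKG hx, fun hh => hw (hh hGa)⟩
    rw [(mem_fam.1 hG).1] at hl
    exact_mod_cast hl
  have hku := hk u (by simpa using kuv) (Or.inl rfl)
  have hkv := hk v (by simpa [hu.symm] using fun hh => kuv (SimpleGraph.Adj.symm hh)) (Or.inr rfl)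
  have hfu := deg_mono (le_sup_right : F ≤ H ⊔ F) u
  have hfv := deg_mono (le_sup_right : F ≤ H ⊔ F) v
  have hfL := (deg_le_two_mul_nedges F v).trans (by linarith : 2 * (nedges F : ℝ) ≤ 2 * L)
  have up := Loose.mul_sum_ind_le_main hB.le hd hn hu kuv h
  have lo := Loose.le_mul_sum_ind_main hB.le hd hn hu (fun hh => kuv (Or.inr hh))
    (h.anti hB.le le_sup_right)
  rw [← cnt_sup_edge d _ hu] at up lo
  have b1 := bound_div_le hB.le hd hn H (by linarith : 0 ≤ L)
    ((nedges_sup_le H F).trans (by linarith))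
  have b2 := bound_div_le hB.le hd hn (⊥ : SimpleGraph (Fin n)) (by linarith : 0 ≤ L)
    (hF.trans (by simp [nedges]))
  have he : err d (⊥ : SimpleGraph (Fin n)) ≤ err d H := by
    have : (0 : ℝ) ≤ nedges H / (d * n) := by positivity
    simp only [err, nedges, SimpleGraph.edgeSet_bot, Set.ncard_empty, Nat.cast_zero, zero_div,
      add_zero]
    simp only [nedges] at this
    linarith
  have hen : 1 / (n : ℝ) ≤ err d (⊥ : SimpleGraph (Fin n)) := by
    have : (0 : ℝ) ≤ (d : ℝ) ^ 2 / n ^ 2 := by positivity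
    simp only [err, nedges, SimpleGraph.edgeSet_bot, Set.ncard_empty, Nat.cast_zero, zero_div,
      add_zero]
    linarith
  set E := err d H
  set E₀ := err d (⊥ : SimpleGraph (Fin n))
  set R := edgeConst B L with hRdef
  have hE0 : 0 ≤ E₀ := err_nonneg _ _
  set fu : ℝ := (deg F u : ℝ)
  set fv : ℝ := (deg F v : ℝ)
  set ku : ℝ := (deg (H ⊔ F) u : ℝ)
  set kv : ℝ := (deg (H ⊔ F) v : ℝ)
  set bK := bound B d (H ⊔ F)
  set bF := bound B d F
  have hfv0 : 0 ≤ fv := Nat.cast_nonneg _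
  set x := 1 - fv / d with hx
  have hxl : 1 / (2 * L + 1) ≤ x := by
    calc 1 / (2 * L + 1) ≤ 1 / (fv + 1) := by
          apply one_div_le_one_div_of_le <;> linarith
      _ = 1 - fv / (fv + 1) := by field_simp; ring
      _ ≤ x := by
        rw [hx]
        have : fv / d ≤ fv / (fv + 1) := by
          apply div_le_div_of_nonneg_left hfv0 <;> linarith
        linarith
  have hU : 1 - kv / d + 3 * B * kv / n + 2 * B * bK / n ≤ x + R * E := by
    have t1 : 3 * B / n ≤ 1 / d := by
      rw [div_le_div_iff₀ hn' (by linarith)]; linarith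
    have t2 := mul_le_mul_of_nonneg_left t1 (sub_nonneg.2 hfv)
    have t3 : 3 * B * fv / n ≤ 3 * B * (2 * L) * E := by
      calc 3 * B * fv / n = 3 * B * fv * (1 / n) := by ring
        _ ≤ 3 * B * (2 * L) * E := by
          have := hen.trans he
          gcongr
    have t4 := mul_le_mul_of_nonneg_left b1 (by positivity : 0 ≤ 2 * B)
    have e1 : 2 * B * bK / n = 2 * B * (bK / n) := by ring
    have e2 : (kv - fv) * (3 * B / n) = 3 * B * kv / n - 3 * B * fv / n := by ring
    have e3 : (kv - fv) * (1 / d) = kv / d - fv / d := by ring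
    have : 0 ≤ B * L * E := by positivity
    rw [e1, hRdef, edgeConst]
    linarith
  have hL' : x - R * E₀ ≤ 1 - fv / d - 4 * B * fv / n - B * bF / n := by
    have t3 : 4 * B * fv / n ≤ 4 * B * (2 * L) * E₀ := by
      calc 4 * B * fv / n = 4 * B * fv * (1 / n) := by ring
        _ ≤ 4 * B * (2 * L) * E₀ := by gcongr
    have t4 := mul_le_mul_of_nonneg_left b2 hB.le
    have e1 : B * bF / n = B * (bF / n) := by ring
    have : 0 ≤ B * ((12 * L + 84 + 36 * B) * E₀) := by positivity
    rw [e1, hRdef, edgeConst]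
    linarith
  set y := x - R * E₀ with hy
  have hyl : 1 / (2 * (2 * L + 1)) ≤ y := by
    have : R * E₀ ≤ 1 / (2 * (2 * L + 1)) := by rw [le_div_iff₀ (by positivity)]; exact hE
    have e : 1 / (2 * L + 1) = 2 * (1 / (2 * (2 * L + 1))) := by field_simp
    linarith
  have hy0 : 0 < y := lt_of_lt_of_le (by positivity) hyl
  have hUy : x + R * E ≤ y * (1 + 4 * R * (2 * L + 1) * E) := by
    have t1 : 0 ≤ 4 * R * (2 * L + 1) * E := by positivity
    have t2 := mul_le_mul_of_nonneg_right hyl t1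
    have e : 1 / (2 * (2 * L + 1)) * (4 * R * (2 * L + 1) * E) = 2 * (R * E) := by field_simp; ring
    have t3 := mul_le_mul_of_nonneg_left he hR
    rw [mul_add, mul_one, hy] at *
    linarith
  set A := cnt d (H ⊔ F ⊔ SimpleGraph.edge u v)
  set A' := cnt d (F ⊔ SimpleGraph.edge u v)
  set cK := cnt d (H ⊔ F)
  set cF := cnt d F
  have hA : 0 ≤ A := cnt_nonneg _ _
  have hA' : 0 ≤ A' := cnt_nonneg _ _
  have hcK : 0 ≤ cK := cnt_nonneg _ _
  have hcF : 0 ≤ cF := cnt_nonneg _ _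
  set r := 1 + 4 * R * (2 * L + 1) * E
  have hq' : 0 < n - 1 - ku := by linarith
  have hp : 0 < d - fu := by linarith
  have hp' : 0 < d - ku := by linarith
  have hr : 0 ≤ r := by positivity
  have hpq : (d - ku) * (n - 1 - fu) ≤ (d - fu) * (n - 1 - ku) := by
    have : 0 ≤ (ku - fu) * (n - 1 - d) := mul_nonneg (by linarith) (by linarith)
    linarith
  have up' : (n - 1 - ku) * A ≤ (d - ku) * cK * (y * r) :=
    up.trans (mul_le_mul_of_nonneg_left (hU.trans hUy) (by positivity))
  have lo' : (d - fu) * cF * y ≤ (n - 1 - fu) * A' :=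
    le_trans (mul_le_mul_of_nonneg_left hL' (by positivity)) lo
  refine le_of_mul_le_mul_left ?_ (by positivity : 0 < (d - fu) * (n - 1 - ku) * y)
  calc (d - fu) * (n - 1 - ku) * y * (A * cF) = ((n - 1 - ku) * A) * ((d - fu) * cF * y) := by ring
    _ ≤ ((d - ku) * cK * (y * r)) * ((n - 1 - fu) * A') :=
        mul_le_mul up' lo' (by positivity) (by positivity)
    _ = ((d - ku) * (n - 1 - fu)) * (cK * y * r * A') := by ring
    _ ≤ ((d - fu) * (n - 1 - ku)) * (cK * y * r * A') :=
        mul_le_mul_of_nonneg_right hpq (by positivity)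
    _ = _ := by ring

lemma cnt_sup_mul_le {B L : ℝ} (hB : 0 < B) (hL : 1 ≤ L) {d : ℕ} (hd : 0 < d) (hn : 0 < n)
    {H : SimpleGraph (Fin n)} (h : ∀ K : SimpleGraph (Fin n), (nedges K : ℝ) ≤ nedges H + L → Loose B d K 4)
    (h3 : 3 * B * d ≤ n) (hdn : (d : ℝ) + 1 ≤ n)
    (hE : edgeConst B L * err d (⊥ : SimpleGraph (Fin n)) * (2 * (2 * L + 1)) ≤ 1) (m : ℕ) :
    ∀ F : SimpleGraph (Fin n), nedges F = m → (m : ℝ) ≤ L → Disjoint F.edgeSet H.edgeSet →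
      cnt d (H ⊔ F) * cnt d (⊥ : SimpleGraph (Fin n)) ≤
        (1 + 4 * edgeConst B L * (2 * L + 1) * err d H) ^ m * (cnt d F * cnt d H) := by
  induction m with
  | zero =>
    intro F hF _ _
    have : F = ⊥ := by
      rw [← SimpleGraph.edgeSet_eq_empty]
      exact (Set.ncard_eq_zero (Set.toFinite _)).1 hF
    subst this
    simp [mul_comm]
  | succ m ih =>
    intro F hF hmL hdisj
    obtain ⟨e, he⟩ : F.edgeSet.Nonempty := by
      rw [← Set.ncard_pos (Set.toFinite _)]
      exact (Nat.succ_pos m).trans_eq hF.symm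
    induction e using Sym2.ind with
    | _ u v =>
    have huv : F.Adj u v := he
    set F' := F.deleteEdges {s(u, v)} with hF'
    have hFF' : F = F' ⊔ SimpleGraph.edge u v := by
      ext a b
      simp only [hF', SimpleGraph.sup_adj, SimpleGraph.deleteEdges_adj, SimpleGraph.edge_adj,
        Set.mem_singleton_iff, Sym2.eq_iff]
      constructor
      · intro hab
        have := hab.ne
        tauto
      · rintro (hab | ⟨⟨rfl, rfl⟩ | ⟨rfl, rfl⟩, -⟩)
        · exact hab.1
        · exact huv
        · exact huv.symm
    have hm : nedges F' = m := by
      have : nedges F' = nedges F - 1 := by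
        unfold nedges
        rw [hF', SimpleGraph.edgeSet_deleteEdges, Set.ncard_sdiff_singleton_of_mem he]
      rw [this, hF]; rfl
    have hle : F' ≤ F := SimpleGraph.deleteEdges_le _
    have hmL' : (m : ℝ) ≤ L := by push_cast at hmL; linarith
    have ih' := ih F' hm hmL' (hdisj.mono_left (SimpleGraph.edgeSet_mono hle))
    have kuv : ¬ (H ⊔ F').Adj u v := by
      rintro (hh | hh)
      · exact Set.disjoint_left.1 hdisj he hh
      · simp [hF'] at hh
    have hFL : (nedges F' : ℝ) ≤ L := by rw [hm]; exact hmL'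
    have step := cnt_sup_edge_mul_le hB hL hd hn huv.ne kuv hFL
      (h _ ((nedges_sup_le H F').trans (by linarith))) h3 hdn hE
    rw [sup_assoc, ← hFF'] at step
    set r := 1 + 4 * edgeConst B L * (2 * L + 1) * err d H
    have hr : 0 ≤ r := by
      have := err_nonneg d H
      have : 0 ≤ edgeConst B L := by unfold edgeConst; positivity
      positivity
    have c0 := cnt_nonneg d (⊥ : SimpleGraph (Fin n))
    have c1 := cnt_nonneg d F
    have c2 := cnt_nonneg d H
    rcases (cnt_nonneg d F').eq_or_lt with h0 | h0
    · have : cnt d (H ⊔ F) = 0 :=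
        le_antisymm ((cnt_anti d (hle.trans le_sup_right)).trans h0.ge) (cnt_nonneg _ _)
      rw [this, zero_mul]; positivity
    · refine le_of_mul_le_mul_left ?_ h0
      calc cnt d F' * (cnt d (H ⊔ F) * cnt d ⊥) = cnt d (H ⊔ F) * cnt d F' * cnt d ⊥ := by ring
        _ ≤ r * (cnt d F * cnt d (H ⊔ F')) * cnt d ⊥ := mul_le_mul_of_nonneg_right step c0
        _ = r * cnt d F * (cnt d (H ⊔ F') * cnt d ⊥) := by ring
        _ ≤ r * cnt d F * (r ^ m * (cnt d F' * cnt d H)) :=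
            mul_le_mul_of_nonneg_left ih' (by positivity)
        _ = _ := by ring

lemma exists_one_add_pow_le (X : ℝ) (hX : 0 ≤ X) (m : ℕ) :
    ∃ C : ℝ, 0 < C ∧ ∀ x, 0 ≤ x → x ≤ X → (1 + x) ^ m ≤ 1 + C * x := by
  induction m with
  | zero => exact ⟨1, one_pos, fun x hx _ => by simpa using hx⟩
  | succ m ih =>
    obtain ⟨C, hC, h⟩ := ih
    refine ⟨C * (1 + X) + 1, by positivity, fun x hx hxX => ?_⟩
    have h1 := mul_le_mul_of_nonneg_right (h x hx hxX) (by linarith : 0 ≤ 1 + x)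
    have h2 := mul_le_mul_of_nonneg_left hxX (mul_nonneg hC.le hx)
    rw [pow_succ]
    linarith

lemma natCard_eq_cnt {d : ℕ} {K : SimpleGraph (Fin n)} {p : SimpleGraph (Fin n) → Prop}
    (h : ∀ G, p G ↔ (∀ i, deg G i = d) ∧ K ≤ G) :
    (Nat.card {G : SimpleGraph (Fin n) // p G} : ℝ) = cnt d K := by
  rw [cnt, Nat.subtype_card (fam d K) fun G => (mem_fam.trans (h G).symm)]

end RegularSwitching

/-- Upper bound for the conditional probability of a bounded set of edges `F`,
given the subgraph `H`, in the random `d`-regular graph. -/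
theorem stmt3 (c L : ℝ) (hc : 0 < c) (hL : 1 ≤ L) :
    ∃ C δ : ℝ, 0 < C ∧ 0 < δ ∧
      ∀ n d : ℕ, 0 < n → 0 < d → Even (d * n) → (d : ℝ) ≤ δ * n →
      ∀ H F : SimpleGraph (Fin n),
      (∀ i, deg H i ≤ d) →
      c * ((d : ℝ) * n) ≤ (d : ℝ) * n - 2 * nedges H →
      (nedges F : ℝ) ≤ L →
      Disjoint F.edgeSet H.edgeSet →
      (∃ G : SimpleGraph (Fin n), (∀ i, deg G i = d) ∧ H ≤ G) →
      prob (fun G => (∀ i, deg G i = d) ∧ H ≤ G) (fun G => F ≤ G)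
        ≤ prob (fun G => ∀ i, deg G i = d) (fun G => F ≤ G)
          * (1 + C * (1 / (n : ℝ) + (nedges H : ℝ) / ((d : ℝ) * n)
              + (d : ℝ) ^ 2 / (n : ℝ) ^ 2)) := by
  set B : ℝ := 2 / c with hBdef
  have hB : 0 < B := by positivity
  set R := RegularSwitching.edgeConst B L with hRdef
  have hR : 0 ≤ R := by rw [hRdef, RegularSwitching.edgeConst]; positivity
  set D : ℝ := 16 / c + (8 * L + 32) / c + 3 * B + 2 + 4 * R * (2 * L + 1) with hDdef
  have d1 : 0 ≤ 16 / c := by positivity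
  have d2 : 0 ≤ (8 * L + 32) / c := by positivity
  have d3 : 0 ≤ 4 * R * (2 * L + 1) := by positivity
  have hD : 0 < D := by linarith
  obtain ⟨C, hC, hpow⟩ :=
    RegularSwitching.exists_one_add_pow_le (4 * R * (2 * L + 1) * 3) (by positivity) ⌊L⌋₊
  refine ⟨C * (4 * R * (2 * L + 1)) + 1, 1 / D, by positivity, by positivity, ?_⟩
  intro n d hn hd _ hdn H F _ hcH hFL hdisj hne
  have hd' : (1 : ℝ) ≤ d := by exact_mod_cast hd
  have hn' : (1 : ℝ) ≤ n := by exact_mod_cast hn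
  have hDn : D * d ≤ n := by
    rw [div_mul_eq_mul_div, one_mul, le_div_iff₀ hD] at hdn
    linarith
  have hxn : ∀ x, 0 ≤ x → x ≤ D → x * d ≤ n := fun x _ hxD =>
    (mul_le_mul_of_nonneg_right hxD (by linarith)).trans hDn
  have n1 := hxn (16 / c) d1 (by linarith)
  have n2 := hxn ((8 * L + 32) / c) d2 (by linarith)
  have n3 := hxn (3 * B) (by positivity) (by linarith)
  have n4 := hxn 2 (by norm_num) (by linarith)
  have n5 := hxn (4 * R * (2 * L + 1)) d3 (by linarith)
  have hdn0 : (0 : ℝ) < d * n := by positivity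
  have hdle : (d : ℝ) ≤ n := by linarith
  have hh0 : (0 : ℝ) ≤ nedges H := Nat.cast_nonneg _
  have loose : ∀ K : SimpleGraph (Fin n), (nedges K : ℝ) ≤ nedges H + L →
      RegularSwitching.Loose B d K 4 := by
    intro K hK
    have m1 : 16 * d ≤ c * n := by
      rw [div_mul_eq_mul_div, div_le_iff₀ hc] at n1; linarith
    have m2 : (8 * L + 32) ≤ c * n := by
      rw [div_mul_eq_mul_div, div_le_iff₀ hc] at n2; nlinarith
    have m3 := mul_le_mul_of_nonneg_left m1 (by linarith : (0 : ℝ) ≤ d)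
    have m4 : c * n ≤ c * n * d := le_mul_of_one_le_right (by positivity) hd'
    have m5 : (d : ℝ) ≤ d * d := le_mul_of_one_le_left (by linarith) hd'
    have : c / 2 * (d * n) ≤ d * n - 2 * (nedges K + (4 : ℕ)) - 2 * d * (d + 1) := by
      push_cast; linarith
    have := mul_le_mul_of_nonneg_left this hB.le
    refine le_trans (le_of_eq ?_) this
    rw [hBdef]; field_simp
  have herr := RegularSwitching.err_nonneg d H
  have e1 : 1 / (n : ℝ) ≤ 1 := by rw [div_le_one (by linarith)]; exact hn'
  have e2 : (nedges H : ℝ) / (d * n) ≤ 1 := by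
    rw [div_le_one hdn0]
    have : 0 ≤ c * (d * n) := by positivity
    linarith
  have e3 : (d : ℝ) ^ 2 / n ^ 2 ≤ d / n := by
    rw [← div_pow]
    exact pow_le_of_le_one (by positivity) ((div_le_one (by linarith)).2 hdle) two_ne_zero
  have e4 : (d : ℝ) / n ≤ 1 := (div_le_one (by linarith)).2 hdle
  have e5 : 1 / (n : ℝ) ≤ d / n := by gcongr
  have hE : R * RegularSwitching.err d (⊥ : SimpleGraph (Fin n)) * (2 * (2 * L + 1)) ≤ 1 := by
    have hle : RegularSwitching.err d (⊥ : SimpleGraph (Fin n)) ≤ 2 * (d / n) := by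
      simp only [RegularSwitching.err, nedges, SimpleGraph.edgeSet_bot, Set.ncard_empty,
        Nat.cast_zero, zero_div, add_zero]
      linarith
    calc _ ≤ R * (2 * (d / n)) * (2 * (2 * L + 1)) := by gcongr
      _ = 4 * R * (2 * L + 1) * d / n := by ring
      _ ≤ 1 := (div_le_one (by linarith)).2 n5
  have main := RegularSwitching.cnt_sup_mul_le hB hL hd hn loose n3 (by linarith) hE (nedges F) F rfl
    hFL hdisj
  have hx0 : 0 ≤ 4 * R * (2 * L + 1) * RegularSwitching.err d H := mul_nonneg d3 herr
  have hx1 := hpow _ hx0 (mul_le_mul_of_nonneg_left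
    (by rw [RegularSwitching.err]; linarith : RegularSwitching.err d H ≤ 3) d3)
  have hx2 := pow_le_pow_right₀ (by linarith : 1 ≤ 1 + 4 * R * (2 * L + 1) *
    RegularSwitching.err d H) (Nat.le_floor hFL)
  have hH : 0 < RegularSwitching.cnt d H := by
    obtain ⟨G, hG⟩ := hne
    exact Nat.cast_pos.2 (Finset.card_pos.2 ⟨G, RegularSwitching.mem_fam.2 hG⟩)
  have h0 : 0 < RegularSwitching.cnt d (⊥ : SimpleGraph (Fin n)) :=
    hH.trans_le (RegularSwitching.cnt_anti d bot_le)
  have hF0 := RegularSwitching.cnt_nonneg d F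
  rw [prob, prob, RegularSwitching.natCard_eq_cnt (d := d) (K := H ⊔ F) fun G => by
      rw [and_assoc, sup_le_iff],
    RegularSwitching.natCard_eq_cnt (d := d) (K := H) fun G => Iff.rfl,
    RegularSwitching.natCard_eq_cnt (d := d) (K := F) fun G => Iff.rfl,
    RegularSwitching.natCard_eq_cnt (d := d) (K := ⊥) fun G => by simp,
    div_mul_eq_mul_div, div_le_div_iff₀ hH h0]
  refine main.trans ((mul_le_mul_of_nonneg_right (hx2.trans hx1) (by positivity)).trans ?_)
  change _ ≤ RegularSwitching.cnt d F * (1 + (C * (4 * R * (2 * L + 1)) + 1) *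
    RegularSwitching.err d H) * RegularSwitching.cnt d H
  have : 0 ≤ RegularSwitching.err d H *
    (RegularSwitching.cnt d F * RegularSwitching.cnt d H) := by positivity
  linarith
end
end

section
/- Let H be a fixed graph with t vertices, h ≥ 1 edges, and maximum degree Δ_H. There exist real constants A_H and B_H and constants C > 0, δ > 0, depending only on H, such that for all positive integers n, d with dn even, Δ_H ≤ d ≤ δn: the expected number μ_H of subgraphs of 𝒢(n,d) isomorphic to H satisfies μ_H = ((n)_t/aut(H))·(Π_{v∈V(H)} (d)_{d_v^H})/(dn)^h·(1 − (A_H·d + B_H)/(dn) + θ) for some real θ with |θ| ≤ C·d²/n². -/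
open Filter

noncomputable section

/-- The maximum degree of `G`. -/
def maxDeg {n : ℕ} (G : SimpleGraph (Fin n)) : ℕ := Finset.univ.sup (deg G)

/-- The expectation of `X` for a graph chosen uniformly at random among all simple graphs
on `[n]` satisfying `base`. -/
def expect {n : ℕ} (base : SimpleGraph (Fin n) → Prop) (X : SimpleGraph (Fin n) → ℝ) : ℝ :=
  (∑ᶠ G ∈ {G : SimpleGraph (Fin n) | base G}, X G) /
    (Nat.card {G : SimpleGraph (Fin n) // base G} : ℝ)

/-- The number of embeddings of `H` into `G` as a (not necessarily induced) subgraph. -/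
def embCount {t n : ℕ} (H : SimpleGraph (Fin t)) (G : SimpleGraph (Fin n)) : ℕ :=
  Nat.card {f : Fin t ↪ Fin n // ∀ i j, H.Adj i j → G.Adj (f i) (f j)}

/-- The number of subgraphs of `G` isomorphic to `H`, i.e. the number of embeddings
divided by the number of automorphisms of `H`. -/
def copyCount {t n : ℕ} (H : SimpleGraph (Fin t)) (G : SimpleGraph (Fin n)) : ℝ :=
  (embCount H G : ℝ) / (Nat.card (H ≃g H) : ℝ)

open scoped Topology

section RegularGraphs

open Finset Classical

/-- The `d`-regular graphs on `[n]`, viewed as graphs on `ℕ` all of whose other vertices are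
isolated. -/
def regGraphs (n d : ℕ) : Finset (SimpleGraph ℕ) :=
  (univ.filter fun G : SimpleGraph (Fin n) => ∀ i, deg G i = d).map
    ⟨SimpleGraph.map Fin.val, SimpleGraph.map_injective Fin.valEmbedding⟩

/-- The indicator that `e` is an edge of `G`. -/
def edgeInd (G : SimpleGraph ℕ) (e : Sym2 ℕ) : ℝ := if e ∈ G.edgeSet then 1 else 0

/-- The number of `d`-regular graphs on `[n]` that contain all the edges in `X`. -/
def extCount (n d : ℕ) (X : Finset (Sym2 ℕ)) : ℝ :=
  ∑ G ∈ regGraphs n d, ∏ e ∈ X, edgeInd G e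

theorem mem_regGraphs {n d : ℕ} {G : SimpleGraph ℕ} :
    G ∈ regGraphs n d ↔
      (∀ i j, G.Adj i j → i < n) ∧ ∀ i < n, (G.neighborSet i).ncard = d := by
  simp only [regGraphs, Finset.mem_map, mem_filter, mem_univ, true_and]
  constructor
  · rintro ⟨G, hG, rfl⟩
    refine ⟨?_, fun i hi => ?_⟩
    · rintro i j h
      obtain ⟨-, a, b, -, rfl, rfl⟩ := h
      exact a.2
    · rw [← hG ⟨i, hi⟩, deg, ← Set.ncard_image_of_injective _ Fin.val_injective]
      congr 1
      ext z
      simp only [SimpleGraph.mem_neighborSet, Set.mem_image]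
      constructor
      · rintro ⟨-, a, b, h, ha, rfl⟩
        obtain rfl : a = ⟨i, hi⟩ := Fin.ext ha
        exact ⟨b, h, rfl⟩
      · rintro ⟨b, h, rfl⟩
        exact (SimpleGraph.map_adj_apply (f := Fin.valEmbedding) (a := ⟨i, hi⟩)).2 h
  · rintro ⟨h1, h2⟩
    refine ⟨G.comap Fin.val, fun i => ?_, ?_⟩
    · rw [← h2 i i.2, deg, ← Set.ncard_image_of_injective _ Fin.val_injective]
      congr 1
      ext z
      simp only [SimpleGraph.mem_neighborSet, Set.mem_image, SimpleGraph.comap_adj]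
      constructor
      · rintro ⟨b, h, rfl⟩
        exact h
      · intro h
        exact ⟨⟨z, h1 _ _ h.symm⟩, h, rfl⟩
    · ext i j
      constructor
      · rintro ⟨-, a, b, h, rfl, rfl⟩
        exact h
      · intro h
        exact (SimpleGraph.map_adj_apply (f := Fin.valEmbedding) (a := ⟨i, h1 _ _ h⟩)
          (b := ⟨j, h1 _ _ h.symm⟩)).2 h

theorem edgeInd_nonneg (G : SimpleGraph ℕ) (e : Sym2 ℕ) : 0 ≤ edgeInd G e := by
  unfold edgeInd; split_ifs <;> norm_num

theorem edgeInd_mul_self (G : SimpleGraph ℕ) (e : Sym2 ℕ) :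
    edgeInd G e * edgeInd G e = edgeInd G e := by
  unfold edgeInd; split_ifs <;> norm_num

theorem edgeInd_diag (G : SimpleGraph ℕ) (v : ℕ) : edgeInd G s(v, v) = 0 := by
  simp [edgeInd]

theorem extCount_nonneg (n d : ℕ) (X : Finset (Sym2 ℕ)) : 0 ≤ extCount n d X :=
  sum_nonneg fun G _ => prod_nonneg fun e _ => edgeInd_nonneg G e

theorem extCount_empty (n d : ℕ) : extCount n d ∅ = #(regGraphs n d) := by
  simp [extCount]

theorem prod_edgeInd_insert (G : SimpleGraph ℕ) (e : Sym2 ℕ) (X : Finset (Sym2 ℕ)) :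
    ∏ e' ∈ insert e X, edgeInd G e' = edgeInd G e * ∏ e' ∈ X, edgeInd G e' := by
  by_cases h : e ∈ X
  · rw [insert_eq_of_mem h, ← mul_prod_erase X _ h, ← mul_assoc, edgeInd_mul_self]
  · exact prod_insert h

theorem extCount_insert (n d : ℕ) (e : Sym2 ℕ) (X : Finset (Sym2 ℕ)) :
    extCount n d (insert e X) =
      ∑ G ∈ regGraphs n d, edgeInd G e * ∏ e' ∈ X, edgeInd G e' := by
  simp only [extCount, prod_edgeInd_insert]

theorem extCount_insert_diag (n d v : ℕ) (X : Finset (Sym2 ℕ)) :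
    extCount n d (insert s(v, v) X) = 0 := by
  simp [extCount_insert, edgeInd_diag]

theorem sum_edgeInd {n d : ℕ} {G : SimpleGraph ℕ} (hG : G ∈ regGraphs n d) {v : ℕ}
    (hv : v < n) : ∑ z ∈ range n, edgeInd G s(v, z) = d := by
  obtain ⟨h1, h2⟩ := mem_regGraphs.1 hG
  simp only [edgeInd, SimpleGraph.mem_edgeSet, sum_boole]
  rw [← h2 v hv, ← Set.ncard_coe_finset]
  congr 2
  ext z
  simp only [coe_filter, mem_range, Set.mem_ofPred_eq, SimpleGraph.mem_neighborSet]
  exact ⟨fun h => h.2, fun h => ⟨h1 _ _ h.symm, h⟩⟩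

theorem sum_extCount_insert {n d v : ℕ} (hv : v < n) (X : Finset (Sym2 ℕ)) :
    ∑ z ∈ range n, extCount n d (insert s(v, z) X) = d * extCount n d X := by
  simp only [extCount_insert]
  rw [sum_comm, extCount, mul_sum]
  refine sum_congr rfl fun G hG => ?_
  rw [← sum_mul, sum_edgeInd hG hv]

theorem comap_mem_regGraphs {n d : ℕ} {G : SimpleGraph ℕ} (hG : G ∈ regGraphs n d)
    (σ : Equiv.Perm ℕ) (hσ : ∀ i, σ i < n ↔ i < n) : G.comap σ ∈ regGraphs n d := by
  obtain ⟨h1, h2⟩ := mem_regGraphs.1 hG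
  refine mem_regGraphs.2 ⟨fun i j h => (hσ i).1 (h1 _ _ h), fun i hi => ?_⟩
  rw [← h2 (σ i) ((hσ i).2 hi), ← Set.ncard_image_of_injective _ σ.injective]
  congr 1
  ext z
  simp only [SimpleGraph.mem_neighborSet, Set.mem_image, SimpleGraph.comap_adj]
  constructor
  · rintro ⟨b, h, rfl⟩
    exact h
  · intro h
    exact ⟨σ.symm z, by simpa using h, by simp⟩

theorem edgeInd_comap (G : SimpleGraph ℕ) (σ : Equiv.Perm ℕ) (e : Sym2 ℕ) :
    edgeInd (G.comap σ) e = edgeInd G (e.map σ) := by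
  induction e with
  | _ a b => simp [edgeInd]

theorem extCount_image {n d : ℕ} (σ : Equiv.Perm ℕ) (hσ : ∀ i, σ i < n ↔ i < n)
    (X : Finset (Sym2 ℕ)) : extCount n d (X.image (Sym2.map σ)) = extCount n d X := by
  simp only [extCount]
  have hσ' : ∀ i, σ.symm i < n ↔ i < n := fun i => by rw [← hσ]; simp
  refine sum_nbij' (fun G => G.comap σ) (fun G => G.comap σ.symm)
    (fun G hG => comap_mem_regGraphs hG σ hσ)
    (fun G hG => comap_mem_regGraphs hG σ.symm hσ') ?_ ?_ ?_
  · intro G _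
    ext i j
    simp
  · intro G _
    ext i j
    simp
  · intro G _
    rw [prod_image (Sym2.map.injective σ.injective).injOn]
    simp only [edgeInd_comap]

/-- Adding an edge from `v` to a new vertex gives a count not depending on the new vertex. -/
theorem extCount_insert_fresh {n d v u u' : ℕ} {X : Finset (Sym2 ℕ)} (hu : u < n) (hu' : u' < n)
    (hv : u ≠ v) (hv' : u' ≠ v) (hX : ∀ e ∈ X, u ∉ e) (hX' : ∀ e ∈ X, u' ∉ e) :
    extCount n d (insert s(v, u) X) = extCount n d (insert s(v, u') X) := by
  rw [← extCount_image (Equiv.swap u u') _ (insert s(v, u) X)]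
  · congr 1
    rw [image_insert]
    congr 1
    · simp [Equiv.swap_apply_of_ne_of_ne hv.symm hv'.symm]
    · have : ∀ e ∈ X, Sym2.map (Equiv.swap u u') e = e := by
        intro e he
        have h1 := hX e he
        have h2 := hX' e he
        induction e with
        | _ a b =>
          simp only [Sym2.mem_iff, not_or] at h1 h2
          simp [Equiv.swap_apply_of_ne_of_ne (Ne.symm h1.1) (Ne.symm h2.1),
            Equiv.swap_apply_of_ne_of_ne (Ne.symm h1.2) (Ne.symm h2.2)]
      rw [image_congr (g := id) (fun e he => this e he), image_id]
  · intro i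
    rcases eq_or_ne i u with rfl | h1
    · simp [hu, hu']
    rcases eq_or_ne i u' with rfl | h2
    · simp [hu, hu']
    rw [Equiv.swap_apply_of_ne_of_ne h1 h2]

/-- Summing the degree condition at `v` over all regular graphs containing `X`. -/
theorem mul_extCount_eq {n d v u : ℕ} {X : Finset (Sym2 ℕ)} {S : Finset ℕ}
    (hS : S ⊆ range n) (hv : v ∈ S) (hX : ∀ e ∈ X, ∀ z ∈ e, z ∈ S) (hun : u < n) (hu : u ∉ S) :
    d * extCount n d X = (n - #S) * extCount n d (insert s(v, u) X)
      + ∑ z ∈ S, extCount n d (insert s(v, z) X) := by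
  rw [← sum_extCount_insert (mem_range.1 (hS hv)), ← sum_sdiff hS]
  congr 1
  rw [sum_congr rfl (g := fun _ => extCount n d (insert s(v, u) X)), sum_const,
    card_sdiff_of_subset hS, card_range, nsmul_eq_mul, Nat.cast_sub]
  · simpa using card_le_card hS
  · intro z hz
    rw [Finset.mem_sdiff, Finset.mem_range] at hz
    exact extCount_insert_fresh hz.1 hun (fun h => hz.2 (h ▸ hv)) (fun h => hu (h ▸ hv))
      (fun e he h => hz.2 (hX e he z h)) (fun e he h => hu (hX e he u h))

/-- The four edges involved in the switching of `vw, xy` to `vx, wy`. -/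
def switchGraph (v w x y : ℕ) : SimpleGraph ℕ :=
  SimpleGraph.fromEdgeSet {s(v, w), s(x, y), s(v, x), s(w, y)}

theorem mem_edgeSet_symmDiff (G Q : SimpleGraph ℕ) (e : Sym2 ℕ) :
    e ∈ (symmDiff G Q).edgeSet ↔ Xor (e ∈ G.edgeSet) (e ∈ Q.edgeSet) := by
  induction e with
  | _ a b => simp [symmDiff_def, Xor]

theorem mem_edgeSet_switchGraph {v w x y : ℕ} (hvw : v ≠ w) (hvx : v ≠ x) (hwy : w ≠ y)
    (hxy : x ≠ y) (e : Sym2 ℕ) : e ∈ (switchGraph v w x y).edgeSet ↔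
      e = s(v, w) ∨ e = s(x, y) ∨ e = s(v, x) ∨ e = s(w, y) := by
  simp only [switchGraph, SimpleGraph.edgeSet_fromEdgeSet, Set.mem_sdiff, Set.mem_insert_iff,
    Set.mem_singleton_iff]
  constructor
  · exact fun h => h.1
  · refine fun h => ⟨h, ?_⟩
    rcases h with rfl | rfl | rfl | rfl <;> simpa

theorem switch_mem_regGraphs {n d v w x y : ℕ} {G : SimpleGraph ℕ} (hG : G ∈ regGraphs n d)
    (hvw : v ≠ w) (hvx : v ≠ x) (hvy : v ≠ y) (hwx : w ≠ x) (hwy : w ≠ y) (hxy : x ≠ y)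
    (h1 : s(v, w) ∈ G.edgeSet) (h2 : s(x, y) ∈ G.edgeSet) (h3 : s(v, x) ∉ G.edgeSet)
    (h4 : s(w, y) ∉ G.edgeSet) : symmDiff G (switchGraph v w x y) ∈ regGraphs n d := by
  obtain ⟨hn, hd⟩ := mem_regGraphs.1 hG
  have key : ∀ i j, (symmDiff G (switchGraph v w x y)).Adj i j ↔ Xor (G.Adj i j)
      (s(i, j) = s(v, w) ∨ s(i, j) = s(x, y) ∨ s(i, j) = s(v, x) ∨ s(i, j) = s(w, y)) := by
    intro i j
    rw [← SimpleGraph.mem_edgeSet, mem_edgeSet_symmDiff, SimpleGraph.mem_edgeSet,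
      mem_edgeSet_switchGraph hvw hvx hwy hxy]
  rw [SimpleGraph.mem_edgeSet] at h1 h2 h3 h4
  have h1' := h1.symm
  have h2' := h2.symm
  have h3' : ¬ G.Adj x v := fun h => h3 h.symm
  have h4' : ¬ G.Adj y w := fun h => h4 h.symm
  refine mem_regGraphs.2 ⟨fun i j h => ?_, fun i hi => ?_⟩
  · have := hn v w h1
    have := hn w v h1'
    have := hn x y h2
    have := hn y x h2'
    rw [key] at h
    rcases h with h | h
    · exact hn _ _ h.1
    · rcases h.1 with h | h | h | h <;> rw [Sym2.eq_iff] at h <;>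
        rcases h with h | h <;> omega
  · rw [← hd i hi]
    have exch : ∀ a b, G.Adj i b → ¬ G.Adj i a →
        (∀ z, (symmDiff G (switchGraph v w x y)).Adj i z ↔ z = a ∨ G.Adj i z ∧ z ≠ b) →
        ((symmDiff G (switchGraph v w x y)).neighborSet i).ncard = (G.neighborSet i).ncard := by
      intro a b hb ha h
      have : (symmDiff G (switchGraph v w x y)).neighborSet i
          = insert a (G.neighborSet i \ {b}) := by
        ext z
        simp [h]
      rw [this, Set.ncard_exchange (by simpa) (by simpa)]
    by_cases hiv : i = v
    · subst hiv
      refine exch x w h1 h3 fun z => ?_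
      rw [key]
      simp only [Xor, Sym2.eq_iff]
      grind
    by_cases hiw : i = w
    · subst hiw
      refine exch y v h1' h4 fun z => ?_
      rw [key]
      simp only [Xor, Sym2.eq_iff]
      grind
    by_cases hix : i = x
    · subst hix
      refine exch v y h2 h3' fun z => ?_
      rw [key]
      simp only [Xor, Sym2.eq_iff]
      grind
    by_cases hiy : i = y
    · subst hiy
      refine exch w x h2' h4' fun z => ?_
      rw [key]
      simp only [Xor, Sym2.eq_iff]
      grind
    congr 1
    ext z
    simp only [SimpleGraph.mem_neighborSet, key, Xor, Sym2.eq_iff]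
    grind

theorem switchGraph_swap (v w x y : ℕ) : switchGraph v x w y = switchGraph v w x y := by
  unfold switchGraph
  congr 1
  ext e
  simp only [Set.mem_insert_iff, Set.mem_singleton_iff]
  tauto

theorem edgeInd_ne_zero {G : SimpleGraph ℕ} {e : Sym2 ℕ} :
    edgeInd G e ≠ 0 ↔ e ∈ G.edgeSet := by
  simp [edgeInd]

theorem one_sub_edgeInd_ne_zero {G : SimpleGraph ℕ} {e : Sym2 ℕ} :
    1 - edgeInd G e ≠ 0 ↔ e ∉ G.edgeSet := by
  by_cases h : e ∈ G.edgeSet <;> simp [edgeInd, h]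

theorem sum_switch {n d v w x y : ℕ} {X : Finset (Sym2 ℕ)}
    (hvw : v ≠ w) (hvx : v ≠ x) (hvy : v ≠ y) (hwx : w ≠ x) (hwy : w ≠ y) (hxy : x ≠ y)
    (h1 : s(v, w) ∉ X) (h2 : s(x, y) ∉ X) (h3 : s(v, x) ∉ X) (h4 : s(w, y) ∉ X) :
    ∑ G ∈ regGraphs n d, (∏ e ∈ X, edgeInd G e) * (edgeInd G s(v, w) * edgeInd G s(x, y)
        * ((1 - edgeInd G s(v, x)) * (1 - edgeInd G s(w, y)))) =
      ∑ G ∈ regGraphs n d, (∏ e ∈ X, edgeInd G e) * (edgeInd G s(v, x) * edgeInd G s(w, y)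
        * ((1 - edgeInd G s(v, w)) * (1 - edgeInd G s(x, y)))) := by
  have hQ := mem_edgeSet_switchGraph hvw hvx hwy hxy
  have inv : ∀ G : SimpleGraph ℕ,
      symmDiff (symmDiff G (switchGraph v w x y)) (switchGraph v w x y) = G :=
    fun G => symmDiff_symmDiff_cancel_right _ _
  have hX : ∀ G : SimpleGraph ℕ, ∏ e ∈ X, edgeInd (symmDiff G (switchGraph v w x y)) e
      = ∏ e ∈ X, edgeInd G e := by
    intro G
    refine prod_congr rfl fun e he => ?_
    have : e ∉ (switchGraph v w x y).edgeSet := by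
      rw [hQ]
      rintro (rfl | rfl | rfl | rfl) <;> contradiction
    simp [edgeInd, mem_edgeSet_symmDiff, this, Xor]
  have hflip : ∀ (G : SimpleGraph ℕ) (e : Sym2 ℕ), e ∈ (switchGraph v w x y).edgeSet →
      edgeInd (symmDiff G (switchGraph v w x y)) e = 1 - edgeInd G e := by
    intro G e he
    by_cases h : e ∈ G.edgeSet <;> simp [edgeInd, mem_edgeSet_symmDiff, he, h]
  have e1 := fun G => hflip G s(v, w) ((hQ _).2 (by simp))
  have e2 := fun G => hflip G s(x, y) ((hQ _).2 (by simp))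
  have e3 := fun G => hflip G s(v, x) ((hQ _).2 (by simp))
  have e4 := fun G => hflip G s(w, y) ((hQ _).2 (by simp))
  refine sum_bij_ne_zero (fun G _ _ => symmDiff G (switchGraph v w x y)) ?_ ?_ ?_ ?_
  · intro G hG h
    simp only [mul_ne_zero_iff, edgeInd_ne_zero, one_sub_edgeInd_ne_zero] at h
    exact switch_mem_regGraphs hG hvw hvx hvy hwx hwy hxy h.2.1.1 h.2.1.2 h.2.2.1 h.2.2.2
  · intro G _ _ G' _ _ h
    exact symmDiff_left_injective _ h
  · intro G hG h
    refine ⟨symmDiff G (switchGraph v w x y), ?_, ?_, inv G⟩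
    · simp only [mul_ne_zero_iff, edgeInd_ne_zero, one_sub_edgeInd_ne_zero] at h
      rw [← switchGraph_swap]
      exact switch_mem_regGraphs hG hvx hvw hvy hwx.symm hxy hwy h.2.1.1 h.2.1.2 h.2.2.1 h.2.2.2
    · rw [hX, e1, e2, e3, e4]
      convert h using 1
      ring
  · intro G hG h
    rw [hX, e1, e2, e3, e4]
    ring

/-- The switching identity: replacing the edges `vw, xy` by `vx, wy`. The terms containing all
four edges cancel. -/
theorem extCount_switch {n d v w x y : ℕ} {X : Finset (Sym2 ℕ)}
    (hvw : v ≠ w) (hvx : v ≠ x) (hvy : v ≠ y) (hwx : w ≠ x) (hwy : w ≠ y) (hxy : x ≠ y)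
    (h1 : s(v, w) ∉ X) (h2 : s(x, y) ∉ X) (h3 : s(v, x) ∉ X) (h4 : s(w, y) ∉ X) :
    extCount n d (insert s(x, y) (insert s(v, w) X))
        - extCount n d (insert s(v, x) (insert s(x, y) (insert s(v, w) X)))
        - extCount n d (insert s(w, y) (insert s(x, y) (insert s(v, w) X))) =
      extCount n d (insert s(w, y) (insert s(v, x) X))
        - extCount n d (insert s(v, w) (insert s(w, y) (insert s(v, x) X)))
        - extCount n d (insert s(x, y) (insert s(w, y) (insert s(v, x) X))) := by
  have := sum_switch (n := n) (d := d) hvw hvx hvy hwx hwy hxy h1 h2 h3 h4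
  simp only [extCount, prod_edgeInd_insert]
  rw [← sub_eq_zero] at this ⊢
  rw [← this]
  simp only [← sum_sub_distrib]
  refine sum_congr rfl fun G _ => ?_
  ring

theorem exists_symmetric_finset {n d : ℕ} (hn : 0 < n) (hd : d < n) (h : Even (d * n)) :
    ∃ S : Finset (ZMod n), #S = d ∧ 0 ∉ S ∧ ∀ s ∈ S, -s ∈ S := by
  have hinj : ∀ a b : ℤ, (a : ZMod n) = b → |a - b| < n → a = b := by
    intro a b hab hlt
    rw [eq_comm, ZMod.intCast_eq_intCast_iff_dvd_sub] at hab
    have := Int.eq_zero_of_abs_lt_dvd hab hlt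
    omega
  rcases Nat.even_or_odd' d with ⟨k, rfl | rfl⟩
  · refine ⟨((Icc (-k : ℤ) k).erase 0).image (Int.cast : ℤ → ZMod n), ?_, ?_, ?_⟩
    · rw [card_image_of_injOn, card_erase_of_mem (by simp), Int.card_Icc]
      · omega
      · intro a ha b hb hab
        simp only [coe_erase, coe_Icc, Set.mem_sdiff, Set.mem_Icc] at ha hb
        exact hinj a b hab (by rw [abs_lt]; omega)
    · simp only [mem_image, mem_erase, mem_Icc, not_exists, not_and]
      rintro a ⟨ha0, ha⟩ h0
      exact ha0 (hinj a 0 (by simpa using h0) (by rw [abs_lt]; omega))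
    · simp only [mem_image, mem_erase, mem_Icc]
      rintro _ ⟨a, ⟨ha0, ha⟩, rfl⟩
      exact ⟨-a, by omega, by simp⟩
  · have hev : Even n := by
      rcases Nat.even_mul.1 h with h | h
      · exact absurd h (by simp [parity_simps])
      · exact h
    obtain ⟨m, hm⟩ := hev
    refine ⟨(insert (m : ℤ) ((Icc (-k : ℤ) k).erase 0)).image (Int.cast : ℤ → ZMod n),
      ?_, ?_, ?_⟩
    · rw [card_image_of_injOn, card_insert_of_notMem, card_erase_of_mem (by simp), Int.card_Icc]
      · omega
      · simp only [mem_erase, mem_Icc]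
        omega
      · intro a ha b hb hab
        simp only [coe_insert, coe_erase, coe_Icc, Set.mem_insert_iff, Set.mem_sdiff,
          Set.mem_Icc] at ha hb
        exact hinj a b hab (by rw [abs_lt]; omega)
    · simp only [mem_image, mem_insert, mem_erase, mem_Icc, not_exists, not_and]
      intro a ha h0
      have := hinj a 0 (by simpa using h0) (by rw [abs_lt]; omega)
      omega
    · simp only [mem_image, mem_insert, mem_erase, mem_Icc]
      rintro _ ⟨a, ha, rfl⟩
      rcases ha with rfl | ⟨ha0, ha⟩
      · refine ⟨m, Or.inl rfl, ?_⟩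
        rw [← Int.cast_neg, eq_comm, eq_comm, ZMod.intCast_eq_intCast_iff_dvd_sub]
        exact ⟨-1, by rw [hm]; push_cast; ring⟩
      · exact ⟨-a, Or.inr (by omega), by simp⟩

theorem regGraphs_nonempty {n d : ℕ} (hd : d < n) (h : Even (d * n)) :
    (regGraphs n d).Nonempty := by
  obtain ⟨S, hS, h0, hneg⟩ := exists_symmetric_finset (by omega) hd h
  obtain ⟨m, rfl⟩ : ∃ m, n = m + 1 := ⟨n - 1, by omega⟩
  let G : SimpleGraph (ZMod (m + 1)) :=
    { Adj := fun i j => j - i ∈ S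
      symm := ⟨fun i j hij => by simpa using hneg _ hij⟩
      loopless := ⟨fun i hi => h0 (by simpa using hi)⟩ }
  have hG : ∀ i, (G.neighborSet i).ncard = d := by
    intro i
    have : G.neighborSet i = (fun s => i + s) '' (S : Set (ZMod (m + 1))) := by
      ext z
      simp only [SimpleGraph.mem_neighborSet, Set.mem_image, mem_coe, G]
      exact ⟨fun hz => ⟨_, hz, by simp⟩, by rintro ⟨s, hs, rfl⟩; simpa using hs⟩
    rw [this, Set.ncard_image_of_injective _ (add_right_injective i), Set.ncard_coe_finset, hS]
  exact ⟨_, Finset.mem_map.2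
    ⟨(G : SimpleGraph (Fin (m + 1))), mem_filter.2 ⟨mem_univ _, hG⟩, rfl⟩⟩

theorem extCount_image_embedding {n d t : ℕ} (f : Fin t ↪ Fin n) (X : Finset (Sym2 (Fin t))) :
    extCount n d (X.image (Sym2.map fun i => (f i : ℕ))) =
      extCount n d (X.image (Sym2.map Fin.val)) := by
  have htn : t ≤ n := by simpa using Fintype.card_le_of_embedding f
  obtain ⟨σ, hσ⟩ : ∃ σ : Equiv.Perm (Fin n), ∀ i, σ (Fin.castLE htn i) = f i := by
    obtain ⟨σ, hσ⟩ := Equiv.Perm.exists_extending_pair (Fin.castLE htn) f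
      (Fin.castLE_injective htn) f.injective
    exact ⟨σ, fun i => hσ i⟩
  let τ : Equiv.Perm ℕ := σ.extendDomain (Fin.equivSubtype (n := n))
  have hτ : ∀ i : Fin n, τ i = σ i := fun i => by
    simpa using σ.extendDomain_apply_image (Fin.equivSubtype (n := n)) i
  have hlt : ∀ i, τ i < n ↔ i < n := by
    intro i
    by_cases hi : i < n
    · simp only [hi, iff_true]
      rw [hτ ⟨i, hi⟩]
      exact Fin.is_lt _
    · rw [show τ i = i from σ.extendDomain_apply_not_subtype _ hi]
  rw [← extCount_image τ hlt (X.image (Sym2.map Fin.val)), image_image]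
  congr 2
  ext1 e
  rw [Function.comp_apply, Sym2.map_map]
  congr 1
  ext1 i
  have := hτ (Fin.castLE htn i)
  rw [hσ] at this
  simpa using this.symm

end RegularGraphs
section Expectation

open Finset Classical

theorem embCount_eq {t n : ℕ} (H : SimpleGraph (Fin t)) (G : SimpleGraph (Fin n)) :
    (embCount H G : ℝ) = ∑ f : Fin t ↪ Fin n, ∏ e ∈ H.edgeFinset.image
      (Sym2.map fun i => (f i : ℕ)), edgeInd (G.map Fin.val) e := by
  rw [embCount, Nat.card_eq_fintype_card, Fintype.card_subtype, ← sum_boole]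
  refine sum_congr rfl fun f _ => ?_
  have hadj : ∀ i j : Fin n, (G.map Fin.val).Adj i j ↔ G.Adj i j := fun i j =>
    SimpleGraph.map_adj_apply (f := Fin.valEmbedding)
  split_ifs with h
  · symm
    refine prod_eq_one fun e he => ?_
    obtain ⟨e', he', rfl⟩ := mem_image.1 he
    clear he
    induction e' with
    | _ a b =>
      rw [SimpleGraph.mem_edgeFinset, SimpleGraph.mem_edgeSet] at he'
      rw [edgeInd, if_pos]
      rw [Sym2.map_mk, SimpleGraph.mem_edgeSet, hadj]
      exact h a b he'
  · push Not at h
    obtain ⟨a, b, hab, hG⟩ := h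
    symm
    refine prod_eq_zero (i := s((f a : ℕ), (f b : ℕ))) (mem_image.2 ⟨s(a, b), by simpa, rfl⟩) ?_
    rw [edgeInd, if_neg]
    rwa [SimpleGraph.mem_edgeSet, hadj]

/-- The expected number of copies of `H` in terms of the probability that a fixed copy is
contained in the random regular graph. -/
theorem expect_copyCount {t n d : ℕ} (H : SimpleGraph (Fin t)) :
    expect (fun G : SimpleGraph (Fin n) => ∀ i, deg G i = d) (copyCount H) =
      (n.descFactorial t : ℝ) / (Nat.card (H ≃g H) : ℝ) *
        (extCount n d (H.edgeFinset.image (Sym2.map Fin.val)) / extCount n d ∅) := by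
  have hset : {G : SimpleGraph (Fin n) | ∀ i, deg G i = d}
      = ((univ.filter fun G : SimpleGraph (Fin n) => ∀ i, deg G i = d : Finset _) : Set _) := by
    ext G
    simp
  have hsum : ∑ G : SimpleGraph (Fin n) with ∀ i, deg G i = d, (embCount H G : ℝ) =
      n.descFactorial t * extCount n d (H.edgeFinset.image (Sym2.map Fin.val)) := by
    simp only [embCount_eq]
    rw [sum_comm]
    rw [sum_congr rfl (g := fun _ => extCount n d (H.edgeFinset.image (Sym2.map Fin.val))),
      sum_const, card_univ, Fintype.card_embedding_eq, Fintype.card_fin, Fintype.card_fin,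
      nsmul_eq_mul]
    intro f _
    rw [← extCount_image_embedding f, extCount, regGraphs, sum_map]
    rfl
  unfold _root_.expect
  rw [hset, finsum_mem_coe_finset, Nat.card_eq_fintype_card, Fintype.card_subtype,
    extCount_empty, regGraphs, card_map]
  simp only [copyCount]
  rw [← sum_div, hsum]
  ring

end Expectation
section Normalized

open Finset

/-- The number of edges in `X` containing `v`. -/
def degIn (X : Finset (Sym2 ℕ)) (v : ℕ) : ℕ := #(X.filter (v ∈ ·))

/-- The product over all vertices `v` of `(d)_k / d ^ k`, where `k` is the degree of `v`. -/
def degProd (X : Finset (Sym2 ℕ)) (d : ℕ) : ℝ :=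
  ∏ᶠ v, ∏ i ∈ range (degIn X v), (1 - (i : ℝ) / d)

/-- The edge density `d / n`. -/
def density (p : ℕ × ℕ) : ℝ := (p.2 : ℝ) / p.1

/-- The probability that a random `d`-regular graph on `[n]` contains `X`, divided by the
`|X|`-th power of the density. -/
def normCount (X : Finset (Sym2 ℕ)) (p : ℕ × ℕ) : ℝ :=
  extCount p.1 p.2 X / extCount p.1 p.2 ∅ / density p ^ #X

theorem degIn_insert {X : Finset (Sym2 ℕ)} {e : Sym2 ℕ} (he : e ∉ X) (v : ℕ) :
    degIn (insert e X) v = degIn X v + if v ∈ e then 1 else 0 := by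
  unfold degIn
  rw [filter_insert]
  split_ifs with h
  · rw [card_insert_of_notMem (by simp [he])]
  · simp

theorem degIn_eq_zero {X : Finset (Sym2 ℕ)} {v : ℕ} (h : ∀ e ∈ X, v ∉ e) : degIn X v = 0 := by
  rw [degIn, card_eq_zero, filter_eq_empty_iff]
  exact fun e he => h e he

theorem card_filter_adj {X : Finset (Sym2 ℕ)} {S : Finset ℕ} (hX : ∀ e ∈ X, ∀ z ∈ e, z ∈ S)
    (v : ℕ) : #(S.filter fun z => s(v, z) ∈ X) = degIn X v := by
  rw [degIn]
  refine card_bij (fun z _ => s(v, z)) ?_ ?_ ?_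
  · intro z hz
    simpa using (mem_filter.1 hz).2
  · intro z _ z' _ h
    exact Sym2.congr_right.1 h
  · intro e he
    obtain ⟨heX, hve⟩ := mem_filter.1 he
    obtain ⟨z, rfl⟩ := hve
    exact ⟨z, mem_filter.2 ⟨hX _ heX z (by simp), heX⟩, rfl⟩

theorem degProd_eq_prod {X : Finset (Sym2 ℕ)} {S : Finset ℕ} (hX : ∀ e ∈ X, ∀ z ∈ e, z ∈ S)
    (d : ℕ) : degProd X d = ∏ v ∈ S, ∏ i ∈ range (degIn X v), (1 - (i : ℝ) / d) := by
  refine finprod_eq_prod_of_mulSupport_subset _ fun v hv => ?_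
  by_contra hvS
  refine hv ?_
  simp only
  rw [degIn_eq_zero fun e he hve => hvS (hX e he v hve)]
  simp

theorem degProd_empty (d : ℕ) : degProd ∅ d = 1 := by
  rw [degProd_eq_prod (S := ∅) (by simp)]
  simp

theorem exists_support (X : Finset (Sym2 ℕ)) : ∃ S : Finset ℕ, ∀ e ∈ X, ∀ z ∈ e, z ∈ S :=
  ⟨X.biUnion Sym2.toFinset, fun e he _ hz => mem_biUnion.2 ⟨e, he, Sym2.mem_toFinset.2 hz⟩⟩

theorem degProd_insert {X : Finset (Sym2 ℕ)} {v w : ℕ} (hvw : v ≠ w) (he : s(v, w) ∉ X)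
    (d : ℕ) : degProd (insert s(v, w) X) d =
      degProd X d * (1 - (degIn X v : ℝ) / d) * (1 - (degIn X w : ℝ) / d) := by
  obtain ⟨S, hS⟩ := exists_support (insert s(v, w) X)
  have hv : v ∈ S := hS s(v, w) (by simp) v (by simp)
  have hw : w ∈ S.erase v := mem_erase.2 ⟨hvw.symm, hS s(v, w) (by simp) w (by simp)⟩
  rw [degProd_eq_prod hS, degProd_eq_prod fun e he => hS e (mem_insert_of_mem he),
    ← mul_prod_erase S _ hv, ← mul_prod_erase S _ hv, ← mul_prod_erase _ _ hw,
    ← mul_prod_erase _ _ hw, degIn_insert he, degIn_insert he]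
  simp only [Sym2.mem_iff, true_or, or_true, if_true, prod_range_succ]
  have hrest : ∏ u ∈ (S.erase v).erase w, ∏ i ∈ range (degIn (insert s(v, w) X) u),
      (1 - (i : ℝ) / d) = ∏ u ∈ (S.erase v).erase w, ∏ i ∈ range (degIn X u),
      (1 - (i : ℝ) / d) := by
    refine prod_congr rfl fun u hu => ?_
    simp only [mem_erase] at hu
    rw [degIn_insert he, if_neg (by simp [hu.1, hu.2.1]), add_zero]
  rw [hrest]
  ring

theorem density_nonneg (p : ℕ × ℕ) : 0 ≤ density p := by unfold density; positivity

theorem normCount_nonneg (X : Finset (Sym2 ℕ)) (p : ℕ × ℕ) : 0 ≤ normCount X p :=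
  div_nonneg (div_nonneg (extCount_nonneg _ _ _) (extCount_nonneg _ _ _))
    (pow_nonneg (density_nonneg p) _)

theorem normCount_insert_diag (X : Finset (Sym2 ℕ)) (v : ℕ) (p : ℕ × ℕ) :
    normCount (insert s(v, v) X) p = 0 := by
  simp [normCount, extCount_insert_diag]

/-- The parameters for which random regular graphs exist. -/
def Admissible (p : ℕ × ℕ) : Prop := 0 < p.1 ∧ 0 < p.2 ∧ 0 < extCount p.1 p.2 ∅

theorem Admissible.density_pos {p : ℕ × ℕ} (hp : Admissible p) : 0 < density p := by
  have h1 := hp.1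
  have h2 := hp.2.1
  unfold density
  positivity

theorem normCount_empty {p : ℕ × ℕ} (hp : Admissible p) : normCount ∅ p = 1 := by
  simp [normCount, div_self hp.2.2.ne']

theorem extCount_eq_normCount {p : ℕ × ℕ} (hp : Admissible p) (X : Finset (Sym2 ℕ)) :
    extCount p.1 p.2 X = normCount X p * density p ^ #X * extCount p.1 p.2 ∅ := by
  have := hp.2.2.ne'
  have := hp.density_pos.ne'
  unfold normCount
  field_simp

/-- The normalized version of the degree condition at `v`. -/
theorem normCount_attach {p : ℕ × ℕ} (hp : Admissible p) {X : Finset (Sym2 ℕ)} {S : Finset ℕ}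
    {v u : ℕ} (hX : ∀ e ∈ X, ∀ z ∈ e, z ∈ S) (hv : v ∈ S)
    (hu : u ∉ S) (hS : S ⊆ range p.1) (hun : u < p.1) :
    (1 - (degIn X v : ℝ) / p.2) * normCount X p =
      (1 - (#S : ℝ) / p.1) * normCount (insert s(v, u) X) p
      + 1 / p.1 * ∑ z ∈ S with z ≠ v ∧ s(v, z) ∉ X, normCount (insert s(v, z) X) p := by
  have h := mul_extCount_eq (d := p.2) hS hv hX hun hu
  have hsplit : ∑ z ∈ S, extCount p.1 p.2 (insert s(v, z) X) =
      degIn X v * extCount p.1 p.2 X +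
        ∑ z ∈ S with z ≠ v ∧ s(v, z) ∉ X, extCount p.1 p.2 (insert s(v, z) X) := by
    rw [← sum_filter_add_sum_filter_not S (fun z => s(v, z) ∈ X), ← card_filter_adj hX,
      ← nsmul_eq_mul, ← sum_const]
    congr 1
    · refine sum_congr rfl fun z hz => ?_
      rw [insert_eq_of_mem (mem_filter.1 hz).2]
    · symm
      refine sum_subset (fun z hz => ?_) fun z hz hz' => ?_
      · simp only [mem_filter] at hz ⊢
        exact ⟨hz.1, hz.2.2⟩
      · simp only [mem_filter, not_and, not_not] at hz hz'
        by_cases hzv : z = v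
        · rw [hzv, extCount_insert_diag]
        · exact absurd (hz' hz.1 hzv) hz.2
  have hterm : ∀ z, s(v, z) ∉ X → extCount p.1 p.2 (insert s(v, z) X) =
      normCount (insert s(v, z) X) p * density p ^ (#X + 1) * extCount p.1 p.2 ∅ := fun z hz => by
    rw [extCount_eq_normCount hp, card_insert_of_notMem hz]
  have hsum : ∑ z ∈ S with z ≠ v ∧ s(v, z) ∉ X, extCount p.1 p.2 (insert s(v, z) X) =
      (∑ z ∈ S with z ≠ v ∧ s(v, z) ∉ X, normCount (insert s(v, z) X) p) *
        (density p ^ (#X + 1) * extCount p.1 p.2 ∅) := by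
    rw [sum_mul]
    refine sum_congr rfl fun z hz => ?_
    rw [hterm z (mem_filter.1 hz).2.2]
    ring
  rw [hsplit, hsum, hterm u fun hmem => hu (hX _ hmem u (by simp)),
    extCount_eq_normCount hp X] at h
  have h0 := hp.2.2.ne'
  have hn : (p.1 : ℝ) ≠ 0 := by exact_mod_cast hp.1.ne'
  have hd : (p.2 : ℝ) ≠ 0 := by exact_mod_cast hp.2.1.ne'
  have hdens : density p * p.1 = p.2 := by
    unfold density
    field_simp
  generalize ∑ z ∈ S with z ≠ v ∧ s(v, z) ∉ X, normCount (insert s(v, z) X) p = T at h ⊢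
  have h' : p.2 * normCount X p = (p.1 - #S) * (normCount (insert s(v, u) X) p * density p) +
      (degIn X v * normCount X p + T * density p) := by
    refine mul_left_cancel₀ (mul_ne_zero (pow_ne_zero #X hp.density_pos.ne') h0) ?_
    linear_combination h
  field_simp
  linear_combination p.1 * h' + ((p.1 - #S) * normCount (insert s(v, u) X) p + T) * hdens

/-- The normalized switching identity. -/
theorem normCount_switch {p : ℕ × ℕ} (hp : Admissible p) {v w x y : ℕ} {X : Finset (Sym2 ℕ)}
    (hvw : v ≠ w) (hvx : v ≠ x) (hvy : v ≠ y) (hwx : w ≠ x) (hwy : w ≠ y) (hxy : x ≠ y)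
    (h1 : s(v, w) ∉ X) (h2 : s(x, y) ∉ X) (h3 : s(v, x) ∉ X) (h4 : s(w, y) ∉ X) :
    normCount (insert s(x, y) (insert s(v, w) X)) p
        - density p * normCount (insert s(v, x) (insert s(x, y) (insert s(v, w) X))) p
        - density p * normCount (insert s(w, y) (insert s(x, y) (insert s(v, w) X))) p =
      normCount (insert s(w, y) (insert s(v, x) X)) p
        - density p * normCount (insert s(v, w) (insert s(w, y) (insert s(v, x) X))) p
        - density p * normCount (insert s(x, y) (insert s(w, y) (insert s(v, x) X))) p := by
  have h := extCount_switch (n := p.1) (d := p.2) hvw hvx hvy hwx hwy hxy h1 h2 h3 h4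
  simp only [extCount_eq_normCount hp (insert _ _)] at h
  have e1 : s(x, y) ∉ insert s(v, w) X := by simp [h2]; omega
  have e2 : s(v, x) ∉ insert s(x, y) (insert s(v, w) X) := by simp [h3]; omega
  have e3 : s(w, y) ∉ insert s(x, y) (insert s(v, w) X) := by simp [h4]; omega
  have e4 : s(w, y) ∉ insert s(v, x) X := by simp [h4]; omega
  have e5 : s(v, w) ∉ insert s(w, y) (insert s(v, x) X) := by simp [h1]; omega
  have e6 : s(x, y) ∉ insert s(w, y) (insert s(v, x) X) := by simp [h2]; omega
  rw [card_insert_of_notMem e2, card_insert_of_notMem e3, card_insert_of_notMem e5,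
    card_insert_of_notMem e6, card_insert_of_notMem e1, card_insert_of_notMem e4,
    card_insert_of_notMem h1, card_insert_of_notMem h3] at h
  have hne : density p ^ (#X + 1 + 1) * extCount p.1 p.2 ∅ ≠ 0 :=
    mul_ne_zero (pow_ne_zero _ hp.density_pos.ne') hp.2.2.ne'
  apply mul_left_cancel₀ hne
  rw [pow_succ _ (#X + 1 + 1)] at h
  linear_combination h

end Normalized
section Asymptotics

open Finset Asymptotics

/-- The filter on pairs `(n, d)` expressing that `d / n` tends to `0`, with `dn` even. -/
def sparse : Filter (ℕ × ℕ) :=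
  comap density (𝓝 0) ⊓ 𝓟 {p | 0 < p.1 ∧ 0 < p.2 ∧ Even (p.2 * p.1)}

theorem tendsto_density : Tendsto density sparse (𝓝 0) :=
  tendsto_comap.mono_left inf_le_left

theorem eventually_sparse : ∀ᶠ p in sparse, 0 < p.1 ∧ 0 < p.2 ∧ Even (p.2 * p.1) :=
  mem_inf_of_right (mem_principal_self _)

theorem exists_of_eventually_sparse {P : ℕ × ℕ → Prop} (h : ∀ᶠ p in sparse, P p) :
    ∃ δ : ℝ, 0 < δ ∧ ∀ n d : ℕ, 0 < n → 0 < d → Even (d * n) → (d : ℝ) ≤ δ * n → P (n, d) := by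
  rw [sparse, eventually_inf_principal,
    (Metric.nhds_basis_closedBall.comap density).eventually_iff] at h
  obtain ⟨δ, hδ, h⟩ := h
  refine ⟨δ, hδ, fun n d hn hd hev hle => h ?_ ⟨hn, hd, hev⟩⟩
  have hn' : (0 : ℝ) < n := by exact_mod_cast hn
  rw [Set.mem_preimage, mem_closedBall_zero_iff, Real.norm_of_nonneg (density_nonneg _)]
  exact (div_le_iff₀ hn').2 hle

theorem eventually_inv_le_density : ∀ᶠ p in sparse, 1 / (p.1 : ℝ) ≤ density p := by
  filter_upwards [eventually_sparse] with p hp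
  have : (1 : ℝ) ≤ p.2 := by exact_mod_cast hp.2.1
  unfold density
  gcongr

theorem isBigO_inv_density : (fun p : ℕ × ℕ => 1 / (p.1 : ℝ)) =O[sparse] density := by
  refine IsBigO.of_bound' ?_
  filter_upwards [eventually_inv_le_density] with p hp
  rwa [Real.norm_of_nonneg (by positivity), Real.norm_of_nonneg (density_nonneg p)]

theorem eventually_mul_inv_le (K : ℝ) {ε : ℝ} (hε : 0 < ε) :
    ∀ᶠ p in sparse, K * (1 / (p.1 : ℝ)) ≤ ε := by
  have h : Tendsto (fun p : ℕ × ℕ => K * (1 / (p.1 : ℝ))) sparse (𝓝 0) := by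
    simpa using (isBigO_inv_density.trans_tendsto tendsto_density).const_mul K
  exact h.eventually_le_const hε

theorem eventually_lt_fst (K : ℕ) : ∀ᶠ p in sparse, K < p.1 := by
  filter_upwards [eventually_mul_inv_le K one_half_pos, eventually_sparse] with p hp hp'
  have hn : (0 : ℝ) < p.1 := by exact_mod_cast hp'.1
  rw [mul_one_div, div_le_iff₀ hn] at hp
  have : (K : ℝ) < p.1 := by linarith
  exact_mod_cast this

theorem eventually_subset_range (S : Finset ℕ) : ∀ᶠ p in sparse, S ⊆ range p.1 := by
  filter_upwards [eventually_lt_fst (S.sup id)] with p hp z hz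
  exact mem_range.2 ((le_sup (f := id) hz).trans_lt hp)

theorem eventually_admissible : ∀ᶠ p in sparse, Admissible p := by
  filter_upwards [eventually_sparse, tendsto_density.eventually_lt_const one_pos] with p hp hd
  refine ⟨hp.1, hp.2.1, ?_⟩
  have hn : (0 : ℝ) < p.1 := by exact_mod_cast hp.1
  rw [density, div_lt_one hn] at hd
  rw [extCount_empty, Nat.cast_pos, card_pos]
  exact regGraphs_nonempty (by exact_mod_cast hd) hp.2.2

theorem isBigO_one_sub_div (a : ℝ) :
    (fun p : ℕ × ℕ => 1 - a / p.2) =O[sparse] (fun _ => (1 : ℝ)) := by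
  refine IsBigO.of_bound (1 + |a|) ?_
  filter_upwards [eventually_sparse] with p hp
  have hd : (1 : ℝ) ≤ p.2 := by exact_mod_cast hp.2.1
  rw [norm_one, mul_one]
  refine (norm_sub_le _ _).trans ?_
  rw [norm_one, norm_div, Real.norm_eq_abs, Real.norm_of_nonneg (by linarith)]
  gcongr
  exact div_le_self (abs_nonneg a) hd

/-- `normCount_attach`, eventually. -/
theorem eventually_normCount_attach {X : Finset (Sym2 ℕ)} {S : Finset ℕ} {v u : ℕ}
    (hX : ∀ e ∈ X, ∀ z ∈ e, z ∈ S) (hv : v ∈ S) (hu : u ∉ S) :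
    ∀ᶠ p in sparse, (1 - (degIn X v : ℝ) / p.2) * normCount X p =
      (1 - (#S : ℝ) / p.1) * normCount (insert s(v, u) X) p
      + 1 / p.1 * ∑ z ∈ S with z ≠ v ∧ s(v, z) ∉ X, normCount (insert s(v, z) X) p := by
  filter_upwards [eventually_admissible, eventually_subset_range S, eventually_lt_fst u]
    with p hp hS hun
  exact normCount_attach hp hX hv hu hS hun

theorem eventually_normCount_attach_le {X : Finset (Sym2 ℕ)} {S : Finset ℕ} {v u : ℕ}
    (hX : ∀ e ∈ X, ∀ z ∈ e, z ∈ S) (hv : v ∈ S) (hu : u ∉ S) :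
    ∀ᶠ p in sparse, normCount (insert s(v, u) X) p ≤ 2 * normCount X p := by
  filter_upwards [eventually_normCount_attach hX hv hu, eventually_mul_inv_le #S one_half_pos]
    with p hp hn
  have h1 : 0 ≤ 1 / (p.1 : ℝ) *
      ∑ z ∈ S with z ≠ v ∧ s(v, z) ∉ X, normCount (insert s(v, z) X) p :=
    mul_nonneg (by positivity) (sum_nonneg fun z _ => normCount_nonneg _ _)
  have h2 := normCount_nonneg X p
  have h3 := normCount_nonneg (insert s(v, u) X) p
  have h4 : 0 ≤ (degIn X v : ℝ) / p.2 := by positivity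
  rw [mul_one_div] at hn
  nlinarith

/-- The hypotheses of the switching identity, with `v, w` in a set `S` containing all the
vertices of `X` and `x, y` outside of `S`. -/
structure Switchable (X : Finset (Sym2 ℕ)) (S : Finset ℕ) (v w x y : ℕ) : Prop where
  mem_of_mem : ∀ e ∈ X, ∀ z ∈ e, z ∈ S
  left_mem : v ∈ S
  right_mem : w ∈ S
  left_ne_right : v ≠ w
  notMem : s(v, w) ∉ X
  fst_notMem : x ∉ S
  snd_notMem : y ∉ S
  fst_ne_snd : x ≠ y

namespace Switchable

variable {X : Finset (Sym2 ℕ)} {S : Finset ℕ} {v w x y : ℕ}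

theorem v_ne_x (h : Switchable X S v w x y) : v ≠ x := fun e => h.fst_notMem (e ▸ h.left_mem)

theorem v_ne_y (h : Switchable X S v w x y) : v ≠ y := fun e => h.snd_notMem (e ▸ h.left_mem)

theorem w_ne_x (h : Switchable X S v w x y) : w ≠ x := fun e => h.fst_notMem (e ▸ h.right_mem)

theorem w_ne_y (h : Switchable X S v w x y) : w ≠ y := fun e => h.snd_notMem (e ▸ h.right_mem)

theorem fst_edge_notMem (h : Switchable X S v w x y) (z : ℕ) : s(x, z) ∉ X :=
  fun he => h.fst_notMem (h.mem_of_mem _ he x (by simp))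

theorem snd_edge_notMem (h : Switchable X S v w x y) (z : ℕ) : s(z, y) ∉ X :=
  fun he => h.snd_notMem (h.mem_of_mem _ he y (by simp))

theorem eventually_normCount_switch (h : Switchable X S v w x y) : ∀ᶠ p in sparse,
    normCount (insert s(x, y) (insert s(v, w) X)) p
        - density p * normCount (insert s(v, x) (insert s(x, y) (insert s(v, w) X))) p
        - density p * normCount (insert s(w, y) (insert s(x, y) (insert s(v, w) X))) p =
      normCount (insert s(w, y) (insert s(v, x) X)) p
        - density p * normCount (insert s(v, w) (insert s(w, y) (insert s(v, x) X))) p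
        - density p * normCount (insert s(x, y) (insert s(w, y) (insert s(v, x) X))) p := by
  filter_upwards [eventually_admissible] with p hp
  exact normCount_switch hp h.left_ne_right h.v_ne_x h.v_ne_y h.w_ne_x h.w_ne_y h.fst_ne_snd
    h.notMem (h.fst_edge_notMem y) (Sym2.eq_swap ▸ h.fst_edge_notMem v) (h.snd_edge_notMem w)

theorem forall_mem_insert (h : Switchable X S v w x y) :
    ∀ e ∈ insert s(v, w) X, ∀ z ∈ e, z ∈ S := by
  intro e he z hz
  rcases mem_insert.1 he with rfl | he
  · rcases Sym2.mem_iff.1 hz with rfl | rfl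
    exacts [h.left_mem, h.right_mem]
  · exact h.mem_of_mem e he z hz

theorem forall_mem_insert_fst (h : Switchable X S v w x y) :
    ∀ e ∈ insert s(v, x) X, ∀ z ∈ e, z ∈ insert x S := by
  intro e he z hz
  rcases mem_insert.1 he with rfl | he
  · rcases Sym2.mem_iff.1 hz with rfl | rfl
    exacts [mem_insert_of_mem h.left_mem, mem_insert_self _ _]
  · exact mem_insert_of_mem (h.mem_of_mem e he z hz)

theorem snd_notMem_insert (h : Switchable X S v w x y) : y ∉ insert x S := by
  simp [h.snd_notMem, h.fst_ne_snd.symm]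

theorem eventually_normCount_le (h : Switchable X S v w x y) :
    ∀ᶠ p in sparse, normCount (insert s(v, w) X) p ≤ 8 * normCount X p := by
  have hY := h.forall_mem_insert
  have hY' : ∀ e ∈ insert s(v, w) X, ∀ z ∈ e, z ∈ insert x S :=
    fun e he z hz => mem_insert_of_mem (hY e he z hz)
  have hA := eventually_normCount_attach hY' (mem_insert_self x S) h.snd_notMem_insert
  have hpend : ∀ z ∈ S, ∀ᶠ p in sparse,
      normCount (insert s(x, z) (insert s(v, w) X)) p ≤ 2 * normCount (insert s(v, w) X) p := by
    intro z hz
    rw [Sym2.eq_swap]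
    exact eventually_normCount_attach_le hY hz h.fst_notMem
  have hVX : ∀ᶠ p in sparse, normCount (insert s(v, x) (insert s(x, y) (insert s(v, w) X))) p
      ≤ 4 * normCount (insert s(v, w) X) p := by
    have h1 := eventually_normCount_attach_le (X := insert s(v, x) (insert s(v, w) X))
      (S := insert x S) (v := x) (u := y) ?_ (mem_insert_self x S) h.snd_notMem_insert
    · filter_upwards [h1, hpend v h.left_mem] with p h1 h2
      rw [Sym2.eq_swap (a := x) (b := v)] at h2
      rw [insert_comm]
      linarith
    · intro e he z hz
      rcases mem_insert.1 he with rfl | he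
      · rcases Sym2.mem_iff.1 hz with rfl | rfl
        exacts [mem_insert_of_mem h.left_mem, mem_insert_self _ _]
      · exact hY' e he z hz
  have hWY : ∀ᶠ p in sparse, normCount (insert s(w, y) (insert s(x, y) (insert s(v, w) X))) p
      ≤ 4 * normCount (insert s(v, w) X) p := by
    have h1 := eventually_normCount_attach_le (X := insert s(w, y) (insert s(v, w) X))
      (S := insert y S) (v := y) (u := x) ?_ (mem_insert_self y S)
      (by simp [h.fst_notMem, h.fst_ne_snd])
    · filter_upwards [h1, eventually_normCount_attach_le hY h.right_mem h.snd_notMem]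
        with p h1 h2
      rw [Sym2.eq_swap (a := y) (b := x)] at h1
      rw [insert_comm]
      linarith
    · intro e he z hz
      rcases mem_insert.1 he with rfl | he
      · rcases Sym2.mem_iff.1 hz with rfl | rfl
        exacts [mem_insert_of_mem h.right_mem, mem_insert_self _ _]
      · exact mem_insert_of_mem (hY e he z hz)
  have hZ1 := eventually_normCount_attach_le h.mem_of_mem h.left_mem h.fst_notMem
  have hZ2 := eventually_normCount_attach_le h.forall_mem_insert_fst
    (mem_insert_of_mem h.right_mem) h.snd_notMem_insert
  filter_upwards [hA, (eventually_all_finset S).2 hpend, hVX, hWY, hZ1, hZ2,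
    h.eventually_normCount_switch,
    eventually_mul_inv_le (2 * #(insert x S)) (ε := 1 / 4) (by norm_num),
    tendsto_density.eventually_le_const (show (0 : ℝ) < 1 / 32 by norm_num)]
    with p hA hpend hVX hWY hZ1 hZ2 hsw hn hd
  rw [degIn_eq_zero fun e he hxe => h.fst_notMem (hY e he x hxe)] at hA
  have hpos := normCount_nonneg (insert s(v, w) X) p
  have hsum : ∑ z ∈ insert x S with z ≠ x ∧ s(x, z) ∉ insert s(v, w) X,
      normCount (insert s(x, z) (insert s(v, w) X)) p
      ≤ #(insert x S) * (2 * normCount (insert s(v, w) X) p) := by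
    refine (sum_le_card_nsmul _ _ (2 * normCount (insert s(v, w) X) p) fun z hz => ?_).trans ?_
    · simp only [mem_filter, mem_insert] at hz
      exact hpend z (hz.1.resolve_left hz.2.1)
    · rw [nsmul_eq_mul]
      gcongr
      exact filter_subset _ _
  have hq := normCount_nonneg (insert s(x, y) (insert s(v, w) X)) p
  have hS : 0 ≤ (#(insert x S) : ℝ) / p.1 := by positivity
  have h1 : normCount (insert s(v, w) X) p ≤ normCount (insert s(x, y) (insert s(v, w) X)) p
      + 1 / 4 * normCount (insert s(v, w) X) p := by
    have := mul_le_mul_of_nonneg_left hsum (show 0 ≤ 1 / (p.1 : ℝ) by positivity)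
    have := mul_le_mul_of_nonneg_right hn hpos
    have := mul_nonneg hS hq
    simp only [Nat.cast_zero, zero_div, sub_zero, one_mul] at hA
    linarith
  have h0 := density_nonneg p
  have hb1 := normCount_nonneg (insert s(v, w) (insert s(w, y) (insert s(v, x) X))) p
  have hb2 := normCount_nonneg (insert s(x, y) (insert s(w, y) (insert s(v, x) X))) p
  have := mul_nonneg h0 hb1
  have := mul_nonneg h0 hb2
  have := mul_le_mul_of_nonneg_left hVX h0
  have := mul_le_mul_of_nonneg_left hWY h0
  have := mul_le_mul_of_nonneg_right hd hpos
  linarith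

end Switchable

theorem exists_switchable {X : Finset (Sym2 ℕ)} {v w : ℕ} (hvw : v ≠ w) (h : s(v, w) ∉ X) :
    ∃ S x y, Switchable X S v w x y := by
  obtain ⟨S, hS⟩ := exists_support (insert s(v, w) X)
  obtain ⟨x, hx⟩ := Infinite.exists_notMem_finset S
  obtain ⟨y, hy⟩ := Infinite.exists_notMem_finset (insert x S)
  simp only [mem_insert, not_or] at hy
  exact ⟨S, x, y, fun e he => hS e (mem_insert_of_mem he), hS s(v, w) (by simp) v (by simp),
    hS s(v, w) (by simp) w (by simp), hvw, h, hx, hy.2, Ne.symm hy.1⟩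

theorem normCount_isBigO_one (X : Finset (Sym2 ℕ)) :
    normCount X =O[sparse] (fun _ => (1 : ℝ)) := by
  induction X using Finset.induction_on with
  | empty =>
    refine IsBigO.of_bound' ?_
    filter_upwards [eventually_admissible] with p hp
    rw [normCount_empty hp]
  | insert e X he ih =>
    induction e with
    | _ v w =>
      rcases eq_or_ne v w with rfl | hvw
      · exact (isBigO_zero _ _).congr_left fun p => (normCount_insert_diag X v p).symm
      · obtain ⟨S, x, y, h⟩ := exists_switchable hvw he
        refine (IsBigO.of_bound 8 ?_).trans ih
        filter_upwards [h.eventually_normCount_le] with p hp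
        rwa [Real.norm_of_nonneg (normCount_nonneg _ _), Real.norm_of_nonneg (normCount_nonneg _ _)]

end Asymptotics
section Expansion

open Finset Asymptotics

/-- `normCount X` is approximated by `degProd X` up to an error `O(d / n)`. -/
def FirstOrder (X : Finset (Sym2 ℕ)) : Prop :=
  (fun p : ℕ × ℕ => normCount X p - degProd X p.2) =O[sparse] density

/-- `normCount X` is `degProd X (1 + (A d + B) / (dn))` up to an error `O(d² / n²)`. -/
def SecondOrder (X : Finset (Sym2 ℕ)) : Prop :=
  ∃ A B : ℝ, (fun p : ℕ × ℕ => normCount X p - degProd X p.2 * (1 + (A + B / p.2) / p.1))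
    =O[sparse] (fun p => density p ^ 2)

theorem normCount_attach_sub {X : Finset (Sym2 ℕ)} {S : Finset ℕ} {v u : ℕ}
    (hX : ∀ e ∈ X, ∀ z ∈ e, z ∈ S) (hv : v ∈ S) (hu : u ∉ S) :
    (fun p => normCount (insert s(v, u) X) p - (1 - (degIn X v : ℝ) / p.2) * normCount X p)
      =ᶠ[sparse] fun p => 1 / (p.1 : ℝ) * (#S * normCount (insert s(v, u) X) p
        - ∑ z ∈ S with z ≠ v ∧ s(v, z) ∉ X, normCount (insert s(v, z) X) p) := by
  filter_upwards [eventually_normCount_attach hX hv hu] with p hp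
  rw [hp]
  ring

theorem normCount_attach_sub_isBigO {X : Finset (Sym2 ℕ)} {S : Finset ℕ} {v u : ℕ}
    (hX : ∀ e ∈ X, ∀ z ∈ e, z ∈ S) (hv : v ∈ S) (hu : u ∉ S) :
    (fun p => normCount (insert s(v, u) X) p - (1 - (degIn X v : ℝ) / p.2) * normCount X p)
      =O[sparse] density := by
  refine (normCount_attach_sub hX hv hu).trans_isBigO ?_
  have := isBigO_inv_density.mul (((normCount_isBigO_one (insert s(v, u) X)).const_mul_left
    (#S : ℝ)).sub (IsBigO.sum (s := S.filter fun z => z ≠ v ∧ s(v, z) ∉ X)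
      fun z _ => normCount_isBigO_one (insert s(v, z) X)))
  simpa using this

theorem degProd_attach {X : Finset (Sym2 ℕ)} {S : Finset ℕ} {v u : ℕ}
    (hX : ∀ e ∈ X, ∀ z ∈ e, z ∈ S) (hv : v ∈ S) (hu : u ∉ S) (d : ℕ) :
    degProd (insert s(v, u) X) d = degProd X d * (1 - (degIn X v : ℝ) / d) := by
  have hu0 : degIn X u = 0 := degIn_eq_zero fun e he h => hu (hX e he u h)
  have hvu : v ≠ u := fun h => hu (h ▸ hv)
  rw [degProd_insert hvu (fun h => hu (hX _ h u (by simp))), hu0]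
  simp

theorem FirstOrder.attach {X : Finset (Sym2 ℕ)} {S : Finset ℕ} {v u : ℕ}
    (h : FirstOrder X) (hX : ∀ e ∈ X, ∀ z ∈ e, z ∈ S) (hv : v ∈ S) (hu : u ∉ S) :
    FirstOrder (insert s(v, u) X) := by
  have h1 := (isBigO_one_sub_div (degIn X v)).mul h
  simp only [one_mul] at h1
  refine ((normCount_attach_sub_isBigO hX hv hu).add h1).congr_left fun p => ?_
  rw [degProd_attach hX hv hu]
  ring

theorem FirstOrder.of_attach {X : Finset (Sym2 ℕ)} {S : Finset ℕ} {v u : ℕ}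
    (h : FirstOrder (insert s(v, u) X)) (hX : ∀ e ∈ X, ∀ z ∈ e, z ∈ S) (hv : v ∈ S) (hu : u ∉ S)
    (h0 : degIn X v = 0) : FirstOrder X := by
  refine (IsBigO.sub h (normCount_attach_sub_isBigO hX hv hu)).congr_left fun p => ?_
  rw [degProd_attach hX hv hu, h0]
  simp

namespace Switchable

variable {X : Finset (Sym2 ℕ)} {S : Finset ℕ} {v w x y : ℕ}

theorem degIn_insert_fst (h : Switchable X S v w x y) :
    degIn (insert s(v, w) X) x = 0 :=
  degIn_eq_zero fun e he hx => h.fst_notMem (h.forall_mem_insert e he x hx)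

theorem degIn_fst (h : Switchable X S v w x y) : degIn X x = 0 :=
  degIn_eq_zero fun e he hx => h.fst_notMem (h.mem_of_mem e he x hx)

theorem degIn_snd (h : Switchable X S v w x y) : degIn X y = 0 :=
  degIn_eq_zero fun e he hy => h.snd_notMem (h.mem_of_mem e he y hy)

theorem forall_mem_insert' (h : Switchable X S v w x y) :
    ∀ e ∈ insert s(v, w) X, ∀ z ∈ e, z ∈ insert x S :=
  fun e he z hz => mem_insert_of_mem (h.forall_mem_insert e he z hz)

theorem degProd_insert_edge (h : Switchable X S v w x y) (d : ℕ) :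
    degProd (insert s(x, y) (insert s(v, w) X)) d =
      degProd X d * (1 - (degIn X v : ℝ) / d) * (1 - (degIn X w : ℝ) / d) := by
  rw [degProd_attach h.forall_mem_insert' (mem_insert_self _ _) h.snd_notMem_insert,
    h.degIn_insert_fst, degProd_insert h.left_ne_right h.notMem]
  simp

theorem fst_notMem_X (h : Switchable X S v w x y) : s(v, x) ∉ X :=
  Sym2.eq_swap ▸ h.fst_edge_notMem v

theorem degIn_insert_right (h : Switchable X S v w x y) :
    degIn (insert s(v, x) X) w = degIn X w := by
  rw [degIn_insert h.fst_notMem_X, if_neg, add_zero]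
  simp [h.left_ne_right.symm, h.w_ne_x]

theorem degProd_insert_switched (h : Switchable X S v w x y) (d : ℕ) :
    degProd (insert s(w, y) (insert s(v, x) X)) d =
      degProd X d * (1 - (degIn X v : ℝ) / d) * (1 - (degIn X w : ℝ) / d) := by
  rw [degProd_attach h.forall_mem_insert_fst (mem_insert_of_mem h.right_mem) h.snd_notMem_insert,
    degProd_attach h.mem_of_mem h.left_mem h.fst_notMem, h.degIn_insert_right]

theorem normCount_sub_isBigO (h : Switchable X S v w x y) :
    (fun p => normCount (insert s(x, y) (insert s(v, w) X)) p
      - normCount (insert s(w, y) (insert s(v, x) X)) p) =O[sparse] density := by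
  have hb := (((normCount_isBigO_one
    (insert s(v, x) (insert s(x, y) (insert s(v, w) X)))).add (normCount_isBigO_one
    (insert s(w, y) (insert s(x, y) (insert s(v, w) X))))).sub (normCount_isBigO_one
    (insert s(v, w) (insert s(w, y) (insert s(v, x) X))))).sub (normCount_isBigO_one
    (insert s(x, y) (insert s(w, y) (insert s(v, x) X))))
  have hd := (isBigO_refl density sparse).mul hb
  simp only [mul_one] at hd
  refine IsBigO.congr' hd ?_ EventuallyEq.rfl
  filter_upwards [h.eventually_normCount_switch] with p hp
  linear_combination -hp

theorem firstOrder_insert (h : Switchable X S v w x y) (hX : FirstOrder X) :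
    FirstOrder (insert s(v, w) X) := by
  have h1 : FirstOrder (insert s(w, y) (insert s(v, x) X)) :=
    (hX.attach h.mem_of_mem h.left_mem h.fst_notMem).attach h.forall_mem_insert_fst
      (mem_insert_of_mem h.right_mem) h.snd_notMem_insert
  have h2 : FirstOrder (insert s(x, y) (insert s(v, w) X)) := by
    refine (h.normCount_sub_isBigO.add h1).congr_left fun p => ?_
    rw [h.degProd_insert_edge, h.degProd_insert_switched]
    ring
  exact h2.of_attach h.forall_mem_insert' (mem_insert_self _ _) h.snd_notMem_insert
    h.degIn_insert_fst

end Switchable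

theorem firstOrder {X : Finset (Sym2 ℕ)} (hX : ∀ e ∈ X, ¬ e.IsDiag) : FirstOrder X := by
  induction X using Finset.induction_on with
  | empty =>
    refine IsBigO.congr' (isBigO_zero _ _) ?_ EventuallyEq.rfl
    filter_upwards [eventually_admissible] with p hp
    simp [normCount_empty hp, degProd_empty]
  | insert e X he ih =>
    have hXe := hX e (mem_insert_self _ _)
    induction e with
    | _ v w =>
      obtain ⟨S, x, y, h⟩ := exists_switchable (by simpa using hXe) he
      exact h.firstOrder_insert (ih fun e he => hX e (mem_insert_of_mem he))

theorem not_isDiag_of_mem_insert {X : Finset (Sym2 ℕ)} (hX : ∀ e ∈ X, ¬ e.IsDiag) {v w : ℕ}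
    (hvw : v ≠ w) : ∀ e ∈ insert s(v, w) X, ¬ e.IsDiag := by
  intro e he
  rcases mem_insert.1 he with rfl | he
  exacts [by simpa, hX e he]

theorem normCount_attach_sub_expansion {X : Finset (Sym2 ℕ)} {S : Finset ℕ} {v u : ℕ}
    (hdiag : ∀ e ∈ X, ¬ e.IsDiag) (hX : ∀ e ∈ X, ∀ z ∈ e, z ∈ S) (hv : v ∈ S) (hu : u ∉ S) :
    ∃ A B : ℝ, (fun p : ℕ × ℕ => normCount (insert s(v, u) X) p
        - (1 - (degIn X v : ℝ) / p.2) * normCount X p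
        - degProd (insert s(v, u) X) p.2 * ((A + B / p.2) / p.1))
      =O[sparse] (fun p => density p ^ 2) := by
  set T := S.filter fun z => z ≠ v ∧ s(v, z) ∉ X with hT
  refine ⟨#S - #T, ∑ z ∈ T, (degIn X z : ℝ), ?_⟩
  have h1 := (firstOrder (not_isDiag_of_mem_insert hdiag
    (fun h => hu (h ▸ hv) : v ≠ u))).const_mul_left (#S : ℝ)
  have h2 := IsBigO.sum (s := T) fun z hz => firstOrder (not_isDiag_of_mem_insert hdiag
    (Ne.symm (mem_filter.1 hz).2.1))
  have h3 := isBigO_inv_density.mul (h1.sub h2)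
  simp only [← sq] at h3
  refine IsBigO.congr' h3 ?_ EventuallyEq.rfl
  filter_upwards [normCount_attach_sub hX hv hu] with p hp
  rw [hp, ← hT]
  have hm : ∀ z ∈ T, degProd (insert s(v, z) X) p.2 =
      degProd (insert s(v, u) X) p.2 * (1 - (degIn X z : ℝ) / p.2) := by
    intro z hz
    rw [degProd_attach hX hv hu, degProd_insert (Ne.symm (mem_filter.1 hz).2.1)
      (mem_filter.1 hz).2.2]
  rw [Finset.sum_apply, sum_sub_distrib, sum_congr rfl hm, ← mul_sum, sum_sub_distrib, ← sum_div,
    sum_const, nsmul_eq_mul]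
  ring

theorem SecondOrder.attach {X : Finset (Sym2 ℕ)} {S : Finset ℕ} {v u : ℕ} (h : SecondOrder X)
    (hdiag : ∀ e ∈ X, ¬ e.IsDiag) (hX : ∀ e ∈ X, ∀ z ∈ e, z ∈ S) (hv : v ∈ S) (hu : u ∉ S) :
    SecondOrder (insert s(v, u) X) := by
  obtain ⟨A₀, B₀, h0⟩ := h
  obtain ⟨A, B, h1⟩ := normCount_attach_sub_expansion hdiag hX hv hu
  refine ⟨A₀ + A, B₀ + B, ?_⟩
  have h2 := (isBigO_one_sub_div (degIn X v)).mul h0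
  simp only [one_mul] at h2
  refine (h1.add h2).congr_left fun p => ?_
  rw [degProd_attach hX hv hu]
  ring

theorem SecondOrder.of_attach {X : Finset (Sym2 ℕ)} {S : Finset ℕ} {v u : ℕ}
    (h : SecondOrder (insert s(v, u) X)) (hdiag : ∀ e ∈ X, ¬ e.IsDiag)
    (hX : ∀ e ∈ X, ∀ z ∈ e, z ∈ S) (hv : v ∈ S) (hu : u ∉ S) (hd : degIn X v = 0) :
    SecondOrder X := by
  obtain ⟨A₀, B₀, h0⟩ := h
  obtain ⟨A, B, h1⟩ := normCount_attach_sub_expansion hdiag hX hv hu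
  refine ⟨A₀ - A, B₀ - B, (h0.sub h1).congr_left fun p => ?_⟩
  rw [degProd_attach hX hv hu, hd]
  simp only [Nat.cast_zero, zero_div, sub_zero]
  ring

namespace Switchable

variable {X : Finset (Sym2 ℕ)} {S : Finset ℕ} {v w x y : ℕ}

theorem normCount_sub_expansion (h : Switchable X S v w x y) (hdiag : ∀ e ∈ X, ¬ e.IsDiag) :
    (fun p : ℕ × ℕ => normCount (insert s(x, y) (insert s(v, w) X)) p
      - normCount (insert s(w, y) (insert s(v, x) X)) p
      - degProd (insert s(x, y) (insert s(v, w) X)) p.2 *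
        (-(degIn X v * degIn X w : ℝ) / p.2 / p.1)) =O[sparse] (fun p => density p ^ 2) := by
  have hvw := h.left_ne_right
  have hvx := h.v_ne_x
  have hvy := h.v_ne_y
  have hwx := h.w_ne_x
  have hwy := h.w_ne_y
  have hxy := h.fst_ne_snd
  have hnvw := h.notMem
  have hnvx := h.fst_notMem_X
  have hnwy := h.snd_edge_notMem w
  have hnxy := h.fst_edge_notMem y
  have hx0 := h.degIn_fst
  have hy0 := h.degIn_snd
  have e1 : s(x, y) ∉ insert s(v, w) X := by simp [hnxy]; omega
  have e2 : s(v, x) ∉ insert s(x, y) (insert s(v, w) X) := by simp [hnvx]; omega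
  have e3 : s(w, y) ∉ insert s(x, y) (insert s(v, w) X) := by simp [hnwy]; omega
  have e4 : s(w, y) ∉ insert s(v, x) X := by simp [hnwy]; omega
  have e5 : s(v, w) ∉ insert s(w, y) (insert s(v, x) X) := by simp [hnvw]; omega
  have e6 : s(x, y) ∉ insert s(w, y) (insert s(v, x) X) := by simp [hnxy]; omega
  have l1 := not_isDiag_of_mem_insert (not_isDiag_of_mem_insert hdiag hvw) hxy
  have l2 := not_isDiag_of_mem_insert (not_isDiag_of_mem_insert hdiag hvx) hwy
  have hb := (((firstOrder (not_isDiag_of_mem_insert l1 hvx)).add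
    (firstOrder (not_isDiag_of_mem_insert l1 hwy))).sub
    (firstOrder (not_isDiag_of_mem_insert l2 hvw))).sub
    (firstOrder (not_isDiag_of_mem_insert l2 hxy))
  have hd := (isBigO_refl density sparse).mul hb
  simp only [← sq] at hd
  refine IsBigO.congr' hd ?_ EventuallyEq.rfl
  filter_upwards [h.eventually_normCount_switch, eventually_sparse] with p hp hpos
  rw [degProd_insert hvx e2, degProd_insert hwy e3, degProd_insert hvw e5, degProd_insert hxy e6,
    h.degProd_insert_edge, h.degProd_insert_switched]
  have hd0 : (p.2 : ℝ) ≠ 0 := by exact_mod_cast hpos.2.1.ne'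
  have hn0 : (p.1 : ℝ) ≠ 0 := by exact_mod_cast hpos.1.ne'
  have dens : (1 : ℝ) / p.2 / p.1 = density p * (1 / p.2) ^ 2 := by
    unfold density
    field_simp
  simp only [degIn_insert e1, degIn_insert hnvw, degIn_insert e4, degIn_insert hnvx, Sym2.mem_iff,
    hx0, hy0, hvw, hvx, hvy, hwx, hwy, hxy, hvw.symm, hvx.symm, hvy.symm, hwx.symm, hwy.symm,
    hxy.symm, or_true, or_false, or_self, if_true, if_false, add_zero, zero_add,
    Nat.cast_add, Nat.cast_one]
  linear_combination -(degProd X p.2 * (1 - (degIn X v : ℝ) / p.2) *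
    (1 - (degIn X w : ℝ) / p.2) * (degIn X v * degIn X w)) * dens - hp

theorem secondOrder_insert (h : Switchable X S v w x y) (hdiag : ∀ e ∈ X, ¬ e.IsDiag)
    (hX : SecondOrder X) : SecondOrder (insert s(v, w) X) := by
  have h1 : SecondOrder (insert s(w, y) (insert s(v, x) X)) :=
    (hX.attach hdiag h.mem_of_mem h.left_mem h.fst_notMem).attach
      (not_isDiag_of_mem_insert hdiag h.v_ne_x) h.forall_mem_insert_fst
      (mem_insert_of_mem h.right_mem) h.snd_notMem_insert
  have h2 : SecondOrder (insert s(x, y) (insert s(v, w) X)) := by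
    obtain ⟨A, B, h1⟩ := h1
    refine ⟨A, B - degIn X v * degIn X w,
      ((h.normCount_sub_expansion hdiag).add h1).congr_left fun p => ?_⟩
    rw [h.degProd_insert_edge, h.degProd_insert_switched]
    ring
  exact h2.of_attach (not_isDiag_of_mem_insert hdiag h.left_ne_right) h.forall_mem_insert'
    (mem_insert_self _ _) h.snd_notMem_insert h.degIn_insert_fst

end Switchable

theorem secondOrder {X : Finset (Sym2 ℕ)} (hX : ∀ e ∈ X, ¬ e.IsDiag) : SecondOrder X := by
  induction X using Finset.induction_on with
  | empty =>
    refine ⟨0, 0, IsBigO.congr' (isBigO_zero _ _) ?_ EventuallyEq.rfl⟩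
    filter_upwards [eventually_admissible] with p hp
    simp [normCount_empty hp, degProd_empty]
  | insert e X he ih =>
    have hXe := hX e (mem_insert_self _ _)
    have hX' := fun e he => hX e (mem_insert_of_mem he)
    induction e with
    | _ v w =>
      obtain ⟨S, x, y, h⟩ := exists_switchable (by simpa using hXe) he
      exact h.secondOrder_insert hX' (ih hX')

end Expansion

section Copies

open Finset Classical

theorem prod_range_one_sub_div (d k : ℕ) (hd : 0 < d) :
    ∏ i ∈ range k, (1 - (i : ℝ) / d) = (d.descFactorial k : ℝ) / (d : ℝ) ^ k := by
  have hd' : (d : ℝ) ≠ 0 := by exact_mod_cast hd.ne'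
  induction k with
  | zero => simp
  | succ k ih =>
    rw [prod_range_succ, ih, Nat.descFactorial_succ]
    rcases le_or_gt k d with h | h
    · push_cast [Nat.cast_sub h]
      field_simp
      ring
    · simp [Nat.descFactorial_eq_zero_iff_lt.2 h]

theorem prod_range_inv_le_prod_range_one_sub_div {d k : ℕ} (hd : 0 < d) (hk : k ≤ d) :
    ∏ i ∈ range k, ((i : ℝ) + 1)⁻¹ ≤ ∏ i ∈ range k, (1 - (i : ℝ) / d) := by
  refine prod_le_prod (fun i _ => by positivity) fun i hi => ?_
  have hd' : (0 : ℝ) < d := by exact_mod_cast hd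
  have hid : (i : ℝ) + 1 ≤ d := by exact_mod_cast (mem_range.1 hi).trans_le hk
  rw [inv_le_iff_one_le_mul₀ (by positivity), one_sub_div hd'.ne', div_mul_eq_mul_div,
    one_le_div hd']
  nlinarith [Nat.cast_nonneg (α := ℝ) i]

variable {t : ℕ} (H : SimpleGraph (Fin t))

theorem not_isDiag_of_mem_image_edgeFinset :
    ∀ e ∈ H.edgeFinset.image (Sym2.map Fin.val), ¬ e.IsDiag := by
  intro e he
  obtain ⟨e', he', rfl⟩ := mem_image.1 he
  rw [Sym2.isDiag_map Fin.val_injective]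
  exact H.not_isDiag_of_mem_edgeFinset he'

theorem card_image_edgeFinset : #(H.edgeFinset.image (Sym2.map Fin.val)) = nedges H := by
  rw [card_image_of_injective _ (Sym2.map.injective Fin.val_injective), nedges,
    Set.ncard_eq_toFinset_card', SimpleGraph.edgeFinset]

theorem deg_eq_degree (v : Fin t) : deg H v = H.degree v := by
  rw [deg, Set.ncard_eq_toFinset_card']
  rfl

theorem degIn_image_edgeFinset (v : Fin t) :
    degIn (H.edgeFinset.image (Sym2.map Fin.val)) v = deg H v := by
  rw [deg_eq_degree, ← H.card_incidenceFinset_eq_degree, degIn, filter_image,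
    card_image_of_injective _ (Sym2.map.injective Fin.val_injective), H.incidenceFinset_eq_filter]
  congr 1
  refine filter_congr fun e _ => ?_
  rw [Sym2.mem_map]
  exact ⟨fun ⟨a, ha, h⟩ => Fin.val_injective h ▸ ha, fun h => ⟨v, h, rfl⟩⟩

theorem degProd_image_edgeFinset (d : ℕ) :
    degProd (H.edgeFinset.image (Sym2.map Fin.val)) d =
      ∏ v : Fin t, ∏ i ∈ range (deg H v), (1 - (i : ℝ) / d) := by
  rw [degProd_eq_prod (S := range t), prod_range]
  · simp only [degIn_image_edgeFinset]
  · intro e he z hz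
    obtain ⟨e', -, rfl⟩ := mem_image.1 he
    obtain ⟨a, -, rfl⟩ := Sym2.mem_map.1 hz
    exact mem_range.2 a.2

theorem sum_deg : ∑ v, deg H v = 2 * nedges H := by
  simp only [deg_eq_degree]
  rw [H.sum_degrees_eq_twice_card_edges, nedges, Set.ncard_eq_toFinset_card',
    SimpleGraph.edgeFinset]

theorem prod_descFactorial_div {n d : ℕ} (hn : 0 < n) (hd : 0 < d) :
    (∏ v : Fin t, (d.descFactorial (deg H v) : ℝ)) / ((d : ℝ) * n) ^ nedges H =
      degProd (H.edgeFinset.image (Sym2.map Fin.val)) d * density (n, d) ^ nedges H := by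
  have hn' : (n : ℝ) ≠ 0 := by exact_mod_cast hn.ne'
  have hd' : (d : ℝ) ≠ 0 := by exact_mod_cast hd.ne'
  rw [degProd_image_edgeFinset]
  simp only [prod_range_one_sub_div d _ hd, prod_div_distrib, prod_pow_eq_pow_sum, sum_deg,
    density]
  rw [pow_mul, div_eq_mul_inv, div_eq_mul_inv, mul_assoc, ← inv_pow,
    ← inv_pow, ← mul_pow]
  congr 2
  field_simp

theorem exists_pos_le_degProd_image_edgeFinset :
    ∃ c : ℝ, 0 < c ∧ ∀ d : ℕ, 0 < d → maxDeg H ≤ d →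
      c ≤ degProd (H.edgeFinset.image (Sym2.map Fin.val)) d := by
  refine ⟨∏ v : Fin t, ∏ i ∈ range (deg H v), ((i : ℝ) + 1)⁻¹, by positivity, fun d hd hH => ?_⟩
  rw [degProd_image_edgeFinset]
  exact prod_le_prod (fun v _ => by positivity) fun v _ =>
    prod_range_inv_le_prod_range_one_sub_div hd ((le_sup (mem_univ v)).trans hH)

end Copies

/-- Expected number of copies of a fixed graph `H` in the random `d`-regular graph. -/
theorem stmt4 (t h : ℕ) (hh : 1 ≤ h) (H : SimpleGraph (Fin t)) (hEdges : nedges H = h) :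
    ∃ A B C δ : ℝ, 0 < C ∧ 0 < δ ∧
      ∀ n d : ℕ, 0 < n → 0 < d → Even (d * n) → maxDeg H ≤ d → (d : ℝ) ≤ δ * n →
        ∃ θ : ℝ, |θ| ≤ C * (d : ℝ) ^ 2 / (n : ℝ) ^ 2 ∧
          expect (fun G : SimpleGraph (Fin n) => ∀ i, deg G i = d) (copyCount H)
            = ((n.descFactorial t : ℝ) / (Nat.card (H ≃g H) : ℝ))
              * ((∏ v : Fin t, (d.descFactorial (deg H v) : ℝ)) / ((d : ℝ) * n) ^ h)
              * (1 - (A * d + B) / ((d : ℝ) * n) + θ) := by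
  classical
  set X := H.edgeFinset.image (Sym2.map Fin.val) with hX
  obtain ⟨A, B, hAB⟩ := secondOrder (not_isDiag_of_mem_image_edgeFinset H)
  obtain ⟨C, hC, hbound⟩ := hAB.exists_pos
  obtain ⟨c, hc, hcX⟩ := exists_pos_le_degProd_image_edgeFinset H
  obtain ⟨δ, hδ, hP⟩ := exists_of_eventually_sparse (hbound.bound.and eventually_admissible)
  refine ⟨-A, -B, C / c, δ, by positivity, hδ, fun n d hn hd hev hH hle => ?_⟩
  obtain ⟨hnd, hadm⟩ := hP n d hn hd hev hle
  have hm := hcX d hd hH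
  rw [← hX] at hnd hm
  have hm0 : 0 < degProd X d := hc.trans_le hm
  have hn' : (n : ℝ) ≠ 0 := by exact_mod_cast hn.ne'
  have hd' : (d : ℝ) ≠ 0 := by exact_mod_cast hd.ne'
  have hdens := hadm.density_pos.ne'
  refine ⟨(normCount X (n, d) - degProd X d * (1 + (A + B / d) / n)) / degProd X d, ?_, ?_⟩
  · rw [abs_div, abs_of_pos hm0, div_le_iff₀ hm0]
    rw [Real.norm_eq_abs, Real.norm_of_nonneg (sq_nonneg _), density, div_pow] at hnd
    refine hnd.trans ?_
    calc C * ((d : ℝ) ^ 2 / n ^ 2) = C / c * d ^ 2 / n ^ 2 * c := by field_simp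
      _ ≤ _ := by gcongr
  · subst hEdges
    rw [expect_copyCount, prod_descFactorial_div H hn hd, ← hX, normCount, card_image_edgeFinset]
    field_simp
    ring
end
end
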